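/- Let $K$ be a field and $G$ a bicyclic graph, i.e., a graph consisting of two cycles $C_n$ and $C_m$ that either share exactly one vertex or are connected by a path. Then the arithmetical rank of the edge ideal $I(G)$ equals the projective dimension of $R/I(G)$; in particular, the projective dimension of $R/I(G)$ is independent of the characteristic of $K$. -/

import Mathlib

open MvPolynomial

/-- Arithmetical rank: the least number of elements of `R` generating `I` up to radical. -/
noncomputable def araRank {R : Type} [CommRing R] (I : Ideal R) : ℕ :=
  sInf {s : ℕ | ∃ f : Fin s → R, (Ideal.span (Set.range f)).radical = I.radical}


/-- Projective dimension of an `R`-module `M`, characterized via vanishing of the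
`Ext` functors: the least `d` such that `Ext^i(M, N) = 0` for all `i > d` and all `N`. -/
noncomputable def projDim (R : Type) [CommRing R] (M : Type) [AddCommGroup M]
    [Module R M] : ℕ∞ :=
  sInf {d : ℕ∞ | ∀ i : ℕ, d < i → ∀ N : ModuleCat R,
    Subsingleton (((Ext R (ModuleCat R) i).obj (Opposite.op (ModuleCat.of R M))).obj N)}

/-- The edge ideal of the graph consisting of two cycles `Cₙ` and `C_m` sharing exactly
one vertex.  The `N = n + m - 1` vertices are indexed by `ZMod N`: the cycle `Cₙ` has
vertices `0, 1, …, n-1` and the cycle `C_m` has vertices `0, n, n+1, …, n+m-2`, the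
common vertex being `0`. -/
noncomputable def vertexJoinIdeal (K : Type) [Field K] (n m : ℕ) :
    Ideal (MvPolynomial (ZMod (n + m - 1)) K) :=
  Ideal.span
    (((fun j : ℕ => (X ((j : ZMod (n + m - 1))) * X (((j + 1 : ℕ) : ZMod (n + m - 1))) :
        MvPolynomial (ZMod (n + m - 1)) K)) '' Set.Iio (n - 1))
      ∪ {X (((n - 1 : ℕ) : ZMod (n + m - 1))) * X 0}
      ∪ {X 0 * X (((n : ℕ) : ZMod (n + m - 1)))}
      ∪ ((fun j : ℕ => (X ((j : ZMod (n + m - 1))) * X (((j + 1 : ℕ) : ZMod (n + m - 1))) :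
          MvPolynomial (ZMod (n + m - 1)) K)) '' Set.Ico n (n + m - 2))
      ∪ {X (((n + m - 2 : ℕ) : ZMod (n + m - 1))) * X 0})

/-- The `j`-th vertex of the connecting path `x₁ z₁ z₂ ⋯ z_k y₁` in the graph made of two
cycles `Cₙ` and `C_m` joined by a path with `k` internal vertices.  The `N = n + m + k`
vertices are indexed by `ZMod N`: `Cₙ` has vertices `0,…,n-1` (with `y₁ = 0`), `C_m`
has vertices `n,…,n+m-1` (with `x₁ = n`), and `z₁,…,z_k` are `n+m,…,n+m+k-1`. -/
def pathJoinVertex (n m k : ℕ) (j : ℕ) : ZMod (n + m + k) :=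
  if j = 0 then ((n : ℕ) : ZMod (n + m + k))
  else if j = k + 1 then 0
  else ((n + m + j - 1 : ℕ) : ZMod (n + m + k))

/-- The edge ideal of the graph consisting of two cycles `Cₙ` (vertices `0,…,n-1`) and
`C_m` (vertices `n,…,n+m-1`) joined by the path `x₁ z₁ ⋯ z_k y₁` with `k` internal
vertices `n+m,…,n+m+k-1`, where `x₁ = n` and `y₁ = 0`. -/
noncomputable def pathJoinIdeal (K : Type) [Field K] (n m k : ℕ) :
    Ideal (MvPolynomial (ZMod (n + m + k)) K) :=
  Ideal.span
    (((fun j : ℕ => (X ((j : ZMod (n + m + k))) * X (((j + 1 : ℕ) : ZMod (n + m + k))) :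
        MvPolynomial (ZMod (n + m + k)) K)) '' Set.Iio (n - 1))
      ∪ {X (((n - 1 : ℕ) : ZMod (n + m + k))) * X 0}
      ∪ ((fun j : ℕ => (X ((j : ZMod (n + m + k))) * X (((j + 1 : ℕ) : ZMod (n + m + k))) :
          MvPolynomial (ZMod (n + m + k)) K)) '' Set.Ico n (n + m - 1))
      ∪ {X (((n + m - 1 : ℕ) : ZMod (n + m + k))) * X (((n : ℕ) : ZMod (n + m + k)))}
      ∪ ((fun j : ℕ => (X (pathJoinVertex n m k j) * X (pathJoinVertex n m k (j + 1)) :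
          MvPolynomial (ZMod (n + m + k)) K)) '' Set.Iio (k + 1)))

open Finset in
/-- The sign `(-1)^r` where `r` is the number of elements of `S` below `k`. -/
def ksgn {ι : Type*} [LinearOrder ι] (k : ι) (S : Finset ι) : ℤ :=
  (-1) ^ (S.filter (· < k)).card

section Signs
variable {ι : Type*} [LinearOrder ι]

theorem ksgn_mul_self (k : ι) (S : Finset ι) : ksgn k S * ksgn k S = 1 := by
  rw [ksgn, ← mul_pow]; simp

theorem ksgn_erase_self (k : ι) (S : Finset ι) : ksgn k (S.erase k) = ksgn k S := by
  unfold ksgn; congr 2; ext j; simp; grind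

theorem ksgn_insert_self (k : ι) (S : Finset ι) : ksgn k (insert k S) = ksgn k S := by
  unfold ksgn; congr 2; ext j; simp; grind

theorem ksgn_erase_of_lt {j k : ι} {S : Finset ι} (hj : j ∈ S) (h : j < k) :
    ksgn k (S.erase j) = -ksgn k S := by
  unfold ksgn
  have : (S.erase j).filter (· < k) = (S.filter (· < k)).erase j := by
    ext i; simp; grind
  rw [this]
  have hm : j ∈ S.filter (· < k) := by simp [hj, h]
  rw [← Finset.card_erase_add_one hm, pow_succ]; ring

theorem ksgn_erase_of_gt {j k : ι} {S : Finset ι} (h : k < j) :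
    ksgn k (S.erase j) = ksgn k S := by
  unfold ksgn
  congr 2
  ext i; simp; grind

theorem ksgn_mul_erase {j k : ι} {S : Finset ι} (hj : j ∈ S) (hk : k ∈ S) (h : j ≠ k) :
    ksgn k S * ksgn j (S.erase k) = -(ksgn j S * ksgn k (S.erase j)) := by
  rcases lt_or_gt_of_ne h with h | h
  · rw [ksgn_erase_of_lt hj h, ksgn_erase_of_gt h]; ring
  · rw [ksgn_erase_of_lt hk h, ksgn_erase_of_gt h]; ring

theorem ksgn_mul_ksgn {j k : ι} {S : Finset ι} (hj : j ∈ S) (hk : k ∈ S) (h : j ≠ k) :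
    ksgn k S * ksgn j S = -(ksgn j (S.erase k) * ksgn k (S.erase j)) := by
  rcases lt_or_gt_of_ne h with h | h
  · rw [ksgn_erase_of_lt hj h, ksgn_erase_of_gt h]; ring
  · rw [ksgn_erase_of_lt hk h, ksgn_erase_of_gt h]; ring

variable {M : Type*} [AddCommGroup M]

/-- The simplicial coboundary of a function on finite subsets of `ι`. -/
def cobd (c : Finset ι → M) (S : Finset ι) : M :=
  ∑ k ∈ S, ksgn k S • c (S.erase k)

theorem cobd_zero : cobd (0 : Finset ι → M) = 0 := by
  ext S; simp [cobd]

theorem cobd_add (c c' : Finset ι → M) : cobd (c + c') = cobd c + cobd c' := by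
  ext S; simp [cobd, Finset.sum_add_distrib]

theorem cobd_neg (c : Finset ι → M) : cobd (-c) = -cobd c := by
  ext S; simp [cobd]

theorem cobd_sub (c c' : Finset ι → M) : cobd (c - c') = cobd c - cobd c' := by
  ext S; simp [cobd, smul_sub, Finset.sum_sub_distrib]

theorem cobd_sum {κ : Type*} (s : Finset κ) (c : κ → Finset ι → M) :
    cobd (∑ i ∈ s, c i) = ∑ i ∈ s, cobd (c i) := by
  classical
  induction s using Finset.induction_on with
  | empty => simp [cobd_zero]
  | insert a s ha ih => rw [Finset.sum_insert ha, Finset.sum_insert ha, cobd_add, ih]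

theorem cobd_map {M' F : Type*} [AddCommGroup M'] [FunLike F M M'] [AddMonoidHomClass F M M']
    (f : F) (c : Finset ι → M) : cobd (fun S => f (c S)) = fun S => f (cobd c S) := by
  ext S; simp [cobd, map_sum, map_zsmul]

theorem cobd_cobd (c : Finset ι → M) : cobd (cobd c) = 0 := by
  ext S
  simp only [cobd, Finset.smul_sum, Pi.zero_apply]
  rw [Finset.sum_sigma']
  refine Finset.sum_involution (fun p _ => ⟨p.2, p.1⟩) ?_ ?_ ?_ ?_
  · rintro ⟨k, j⟩ h
    simp only [Finset.mem_sigma, Finset.mem_erase] at h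
    simp only [smul_smul, Finset.erase_right_comm (a := k) (b := j)]
    rw [ksgn_mul_erase h.2.2 h.1 h.2.1, neg_smul, neg_add_cancel]
  · rintro ⟨k, j⟩ h _ e
    simp only [Finset.mem_sigma, Finset.mem_erase] at h
    simp only [Sigma.mk.injEq] at e
    exact h.2.1 e.1
  · rintro ⟨k, j⟩ h
    simp only [Finset.mem_sigma, Finset.mem_erase] at h ⊢
    exact ⟨h.2.2, Ne.symm h.2.1, h.1⟩
  · rintro ⟨k, j⟩ h; rfl

/-- The cone operator with apex `k`. -/
def coneAt (k : ι) (c : Finset ι → M) (S : Finset ι) : M :=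
  if k ∈ S then 0 else ksgn k S • c (insert k S)

theorem cobd_coneAt (k : ι) (c : Finset ι → M) (S : Finset ι) :
    cobd (coneAt k c) S + coneAt k (cobd c) S = c S := by
  by_cases hk : k ∈ S
  · have h2 : coneAt k (cobd c) S = 0 := by simp [coneAt, hk]
    rw [h2, add_zero, cobd, Finset.sum_eq_single_of_mem k hk]
    · simp only [coneAt, Finset.notMem_erase, if_false, Finset.insert_erase hk, smul_smul]
      rw [ksgn_erase_self, ksgn_mul_self, one_smul]
    · intro j hj hjk
      simp [coneAt, Finset.mem_erase, hk, Ne.symm hjk]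
  · simp only [coneAt, hk, if_false]
    simp only [cobd]
    rw [Finset.sum_insert hk, smul_add, smul_smul, ksgn_insert_self, ksgn_mul_self,
      one_smul, Finset.erase_insert hk, add_comm (c S), ← add_assoc, Finset.smul_sum,
      ← Finset.sum_add_distrib, Finset.sum_eq_zero, zero_add]
    intro j hj
    have hjk : j ≠ k := fun h => hk (h ▸ hj)
    have h1 : insert k (S.erase j) = (insert k S).erase j := by
      ext i; simp; grind
    have hke : k ∉ S.erase j := fun h => hk (Finset.mem_of_mem_erase h)
    simp only [coneAt, hke, if_false, smul_smul]
    rw [h1, ← add_smul]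
    have := ksgn_mul_ksgn (S := insert k S) (Finset.mem_insert_of_mem hj)
      (Finset.mem_insert_self k S) hjk
    rw [Finset.erase_insert hk, ksgn_insert_self, ← h1, ksgn_insert_self] at this
    rw [this]; simp

end Signs

set_option linter.unusedSectionVars false

section Nonvanishing
variable {ι V : Type*} [LinearOrder ι]

/-- The sets of edges among `A` that cover all the vertices in `W`. -/
def Covers (inc : ι → V → Prop) (A : ι → Prop) (W : V → Prop) (S : Finset ι) : Prop :=
  (∀ k ∈ S, A k) ∧ ∀ v, W v → ∃ k ∈ S, inc k v

/-- Cochains supported on the edge sets among `A` that cover `W`. -/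
def SuppOn (inc : ι → V → Prop) (A : ι → Prop) (W : V → Prop) {K : Type*} [Zero K]
    (c : Finset ι → K) : Prop :=
  ∀ S, c S ≠ 0 → Covers inc A W S

/-- The cochain complex of edge sets covering `W` has nonzero cohomology in degree `q`. -/
def NonVan (K : Type*) [AddCommGroup K] (inc : ι → V → Prop) (A : ι → Prop) (W : V → Prop)
    (q : ℕ) : Prop :=
  ∃ c : Finset ι → K, SuppOn inc A W c ∧ (∀ S, c S ≠ 0 → S.card = q) ∧
    (∀ S : Finset ι, (∀ k ∈ S, A k) → cobd c S = 0) ∧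
    ∀ b : Finset ι → K, SuppOn inc A W b →
      ¬ ∀ S : Finset ι, (∀ k ∈ S, A k) → cobd b S = c S

/-- The cochain complex of edge sets covering `W` is exact. -/
def Acyc (K : Type*) [AddCommGroup K] (inc : ι → V → Prop) (A : ι → Prop) (W : V → Prop) :
    Prop :=
  ∀ c : Finset ι → K, SuppOn inc A W c →
    (∀ S : Finset ι, (∀ k ∈ S, A k) → cobd c S = 0) →
    ∃ b : Finset ι → K, SuppOn inc A W b ∧
      ∀ S : Finset ι, (∀ k ∈ S, A k) → cobd b S = c S

variable {K : Type*} [AddCommGroup K] {inc : ι → V → Prop} {A A' : ι → Prop}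
  {W W' : V → Prop}

theorem SuppOn.sub {c c' : Finset ι → K} (h : SuppOn inc A W c) (h' : SuppOn inc A W c') :
    SuppOn inc A W (c - c') := by
  intro S hS
  by_cases h0 : c S = 0
  · by_cases h1 : c' S = 0
    · simp [h0, h1] at hS
    · exact h' S h1
  · exact h S h0

theorem SuppOn.add {c c' : Finset ι → K} (h : SuppOn inc A W c) (h' : SuppOn inc A W c') :
    SuppOn inc A W (c + c') := by
  intro S hS
  by_cases h0 : c S = 0
  · by_cases h1 : c' S = 0
    · simp [h0, h1] at hS
    · exact h' S h1
  · exact h S h0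

theorem SuppOn.mono {c : Finset ι → K} (h : SuppOn inc A W c) (hA : ∀ k, A k → A' k)
    (hW : ∀ v, W' v → W v) : SuppOn inc A' W' c :=
  fun S hS => ⟨fun k hk => hA k ((h S hS).1 k hk), fun v hv => (h S hS).2 v (hW v hv)⟩

theorem exists_of_cobd_ne_zero {c : Finset ι → K} {S : Finset ι} (h : cobd c S ≠ 0) :
    ∃ k ∈ S, c (S.erase k) ≠ 0 := by
  by_contra! hh
  exact h (Finset.sum_eq_zero fun k hk => by rw [hh k hk, smul_zero])

theorem ne_zero_of_coneAt_ne_zero {i : ι} {c : Finset ι → K} {S : Finset ι}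
    (h : coneAt i c S ≠ 0) : i ∉ S ∧ c (insert i S) ≠ 0 := by
  unfold coneAt at h
  split_ifs at h with hi
  · exact absurd rfl h
  · exact ⟨hi, fun h0 => h (by rw [h0, smul_zero])⟩

theorem NonVan.empty (K : Type*) [AddCommGroup K] [Nontrivial K] (hA : ∀ k, ¬ A k)
    (hW : ∀ v, ¬ W v) : NonVan K inc A W 0 := by
  classical
  obtain ⟨x, hx⟩ := exists_ne (0 : K)
  have hS : ∀ S : Finset ι, (∀ k ∈ S, A k) → S = ∅ := fun S h =>
    Finset.eq_empty_of_forall_notMem fun k hk => hA k (h k hk)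
  refine ⟨fun S => if S = ∅ then x else 0, ?_, ?_, ?_, ?_⟩
  · intro S h
    have : S = ∅ := by by_contra h'; simp [h'] at h
    subst this
    exact ⟨by simp, fun v hv => absurd hv (hW v)⟩
  · intro S h
    have : S = ∅ := by by_contra h'; simp [h'] at h
    simp [this]
  · intro S h
    rw [hS S h]; simp [cobd]
  · intro b _ h
    have := h ∅ (by simp)
    simp [cobd] at this
    exact hx this.symm

theorem Acyc.of_uncovered {w : V} (hw : W w) (h : ∀ k, A k → ¬ inc k w) : Acyc K inc A W := by
  intro c hc _
  have h0 : c = 0 := by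
    ext S; by_contra hS
    obtain ⟨k, hk, hkw⟩ := (hc S hS).2 w hw
    exact h k ((hc S hS).1 k hk) hkw
  exact ⟨0, fun S h => absurd rfl h, fun S _ => by simp [cobd_zero, h0]⟩

theorem SuppOn.coneAt_of_dominated {i j : ι} (hij : i ≠ j)
    (h : ∀ v, W v → inc i v → inc j v) {u : Finset ι → K} (hu : SuppOn inc A W u)
    (huj : ∀ S, u S ≠ 0 → j ∈ S) : SuppOn inc A W (coneAt i u) := by
  intro S hS
  obtain ⟨hi, h0⟩ := ne_zero_of_coneAt_ne_zero hS
  have hj : j ∈ S := by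
    rcases Finset.mem_insert.1 (huj _ h0) with h | h
    · exact absurd h.symm hij
    · exact h
  have := hu _ h0
  refine ⟨fun k hk => this.1 k (Finset.mem_insert_of_mem hk), fun v hv => ?_⟩
  obtain ⟨k, hk, hkv⟩ := this.2 v hv
  rcases Finset.mem_insert.1 hk with rfl | hk
  · exact ⟨j, hj, h v hv hkv⟩
  · exact ⟨k, hk, hkv⟩

theorem SuppOn.cobd_apply {c : Finset ι → K} (hc : SuppOn inc A W c) {S : Finset ι}
    (hS : ∀ k ∈ S, A' k) (h0 : cobd c S ≠ 0) : Covers inc A' W S := by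
  obtain ⟨k, hk, h1⟩ := exists_of_cobd_ne_zero h0
  refine ⟨hS, fun v hv => ?_⟩
  obtain ⟨j, hj, hjv⟩ := (hc _ h1).2 v hv
  exact ⟨j, Finset.mem_of_mem_erase hj, hjv⟩

theorem Acyc.of_dominated {i j : ι} (hi : A i) (hij : i ≠ j)
    (h : ∀ v, W v → inc i v → inc j v) (hA : ∀ k, A' k ↔ A k ∧ k ≠ j)
    (hac : Acyc K inc A' W) : Acyc K inc A W := by
  classical
  intro c hc hz
  let c' : Finset ι → K := fun S => if j ∈ S then 0 else c S
  have hcov : ∀ S : Finset ι, (∀ k ∈ S, A' k) → j ∉ S := fun S hS hj => ((hA j).1 (hS j hj)).2 rfl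
  have hc' : SuppOn inc A' W c' := by
    intro S hS
    simp only [c', ne_eq, ite_eq_left_iff, not_forall] at hS
    obtain ⟨hj, h0⟩ := hS
    refine ⟨fun k hk => (hA k).2 ⟨(hc S h0).1 k hk, ?_⟩, (hc S h0).2⟩
    rintro rfl; exact hj hk
  obtain ⟨b, hb, hbz⟩ := hac c' hc' (by
    intro S hS
    rw [← hz S fun k hk => ((hA k).1 (hS k hk)).1]
    refine Finset.sum_congr rfl fun k _ => ?_
    simp [c', hcov S hS])
  have hb' : SuppOn inc A W b := hb.mono (fun k hk => ((hA k).1 hk).1) fun _ => id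
  let u : Finset ι → K := fun S => if ∀ k ∈ S, A k then c S - cobd b S else 0
  have hus : ∀ S, u S ≠ 0 → (∀ k ∈ S, A k) ∧ c S - cobd b S ≠ 0 := by
    intro S h
    by_cases hS : ∀ k ∈ S, A k
    · exact ⟨hS, by simpa [u, if_pos hS] using h⟩
    · simp [u, hS] at h
  have hu : SuppOn inc A W u := by
    intro S hS
    obtain ⟨hSA, h0⟩ := hus S hS
    by_cases h1 : c S = 0
    · exact hb'.cobd_apply hSA fun h2 => h0 (by rw [h1, h2, sub_zero])
    · exact hc S h1
  have huj : ∀ S, u S ≠ 0 → j ∈ S := by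
    intro S hS
    obtain ⟨hSA, h0⟩ := hus S hS
    by_contra hj
    apply h0
    rw [hbz S (fun k hk => (hA k).2 ⟨hSA k hk, by rintro rfl; exact hj hk⟩)]
    simp [c', hj]
  have hud : ∀ S : Finset ι, (∀ k ∈ S, A k) → cobd u S = 0 := by
    intro S hS
    have : cobd u S = cobd (c - cobd b) S := by
      refine Finset.sum_congr rfl fun k _ => ?_
      rw [show u (S.erase k) = _ from if_pos fun l hl => hS l (Finset.mem_of_mem_erase hl)]
      rfl
    rw [this, cobd_sub, cobd_cobd, sub_zero, hz S hS]
  refine ⟨b + coneAt i u, hb'.add (hu.coneAt_of_dominated hij h huj), fun S hS => ?_⟩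
  have h1 := cobd_coneAt i u S
  have h2 : cobd u (insert i S) = 0 := hud _ (by simpa [hi] using hS)
  simp only [coneAt, h2, smul_zero, ite_self, add_zero] at h1
  rw [cobd_add, Pi.add_apply]
  change _ + cobd (coneAt i u) S = _
  rw [show cobd (coneAt i u) S = u S from h1, show u S = _ from if_pos hS]
  abel

theorem NonVan.of_dominated {i j : ι} (hi : A i) (hij : i ≠ j)
    (h : ∀ v, W v → inc i v → inc j v) (hA : ∀ k, A' k ↔ A k ∧ k ≠ j) {q : ℕ}
    (hac : NonVan K inc A' W q) : NonVan K inc A W q := by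
  classical
  obtain ⟨c, hc, hq, hz, hn⟩ := hac
  have hc' : SuppOn inc A W c := hc.mono (fun k hk => ((hA k).1 hk).1) fun _ => id
  have hcj : ∀ S, c S ≠ 0 → j ∉ S := fun S hS hj => ((hA j).1 ((hc S hS).1 j hj)).2 rfl
  have hA'S : ∀ S : Finset ι, (∀ k ∈ S, A k) → j ∉ S → ∀ k ∈ S, A' k := fun S hS hj k hk =>
    (hA k).2 ⟨hS k hk, by rintro rfl; exact hj hk⟩
  let u : Finset ι → K := fun S => if ∀ k ∈ S, A k then cobd c S else 0
  have hus : ∀ S, u S ≠ 0 → (∀ k ∈ S, A k) ∧ cobd c S ≠ 0 := by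
    intro S h
    by_cases hS : ∀ k ∈ S, A k
    · exact ⟨hS, by simpa [u, if_pos hS] using h⟩
    · simp [u, hS] at h
  have hu : SuppOn inc A W u := fun S hS => hc'.cobd_apply (hus S hS).1 (hus S hS).2
  have huj : ∀ S, u S ≠ 0 → j ∈ S := by
    intro S hS
    by_contra hj
    exact (hus S hS).2 (hz S (hA'S S (hus S hS).1 hj))
  have hud : ∀ S : Finset ι, (∀ k ∈ S, A k) → cobd u S = 0 := by
    intro S hS
    have : cobd u S = cobd (cobd c) S := by
      refine Finset.sum_congr rfl fun k _ => ?_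
      rw [show u (S.erase k) = _ from if_pos fun l hl => hS l (Finset.mem_of_mem_erase hl)]
    rw [this, cobd_cobd]; rfl
  refine ⟨c - coneAt i u, hc'.sub (hu.coneAt_of_dominated hij h huj), ?_, ?_, ?_⟩
  · intro S hS
    by_cases h0 : c S = 0
    · have h1 : coneAt i u S ≠ 0 := fun h1 => hS (by simp [h0, h1])
      obtain ⟨hiS, h2⟩ := ne_zero_of_coneAt_ne_zero h1
      have hj := huj _ h2
      obtain ⟨k, hk, h3⟩ := exists_of_cobd_ne_zero (hus _ h2).2
      have hcard := hq _ h3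
      rw [Finset.card_erase_of_mem hk, Finset.card_insert_of_notMem hiS] at hcard
      simpa using hcard
    · exact hq S h0
  · intro S hS
    have h1 := cobd_coneAt i u S
    have h2 : cobd u (insert i S) = 0 := hud _ (by simpa [hi] using hS)
    simp only [coneAt, h2, smul_zero, ite_self, add_zero] at h1
    rw [cobd_sub, Pi.sub_apply, show cobd (coneAt i u) S = u S from h1,
      show u S = _ from if_pos hS, sub_self]
  · intro b hb hbz
    refine hn (fun S => if j ∈ S then 0 else b S) ?_ ?_
    · intro S hS
      simp only [ne_eq, ite_eq_left_iff, not_forall] at hS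
      obtain ⟨hj, h0⟩ := hS
      exact ⟨hA'S S (hb S h0).1 hj, (hb S h0).2⟩
    · intro S hS
      have hj : j ∉ S := fun hj => ((hA j).1 (hS j hj)).2 rfl
      have h1 := hbz S fun k hk => ((hA k).1 (hS k hk)).1
      have h2 : coneAt i u S = 0 := by
        by_contra h2
        have := huj _ (ne_zero_of_coneAt_ne_zero h2).2
        rcases Finset.mem_insert.1 this with h | h
        · exact hij h.symm
        · exact hj h
      rw [Pi.sub_apply, h2, sub_zero] at h1
      rw [← h1]
      exact Finset.sum_congr rfl fun k _ => by simp [hj]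

/-- The inverse of the cone operator: cochains on edge sets containing `k`. -/
def starAt (k : ι) (c : Finset ι → K) (S : Finset ι) : K :=
  if k ∈ S then ksgn k S • c (S.erase k) else 0

theorem cobd_starAt (k : ι) (c : Finset ι → K) (S : Finset ι) (hk : k ∈ S) :
    cobd (starAt k c) S = -(ksgn k S • cobd c (S.erase k)) := by
  simp only [cobd]
  rw [← Finset.add_sum_erase _ _ hk, Finset.smul_sum, ← Finset.sum_neg_distrib]
  simp only [starAt, Finset.notMem_erase, if_false, smul_zero, zero_add]
  refine Finset.sum_congr rfl fun j hj => ?_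
  obtain ⟨hjk, hj⟩ := Finset.mem_erase.1 hj
  rw [if_pos (Finset.mem_erase.2 ⟨hjk.symm, hk⟩), smul_smul, smul_smul,
    Finset.erase_right_comm (a := j), ksgn_mul_erase hj hk hjk, neg_smul, neg_neg]

theorem cobd_starAt_of_notMem (k : ι) (c : Finset ι → K) (S : Finset ι) (hk : k ∉ S) :
    cobd (starAt k c) S = 0 :=
  Finset.sum_eq_zero fun j _ => by simp [starAt, hk]

theorem SuppOn.starAt {k : ι} (hA : ∀ j, A' j ↔ A j ∧ j ≠ k) (hk : A k)
    (hW : ∀ v, W' v ↔ W v ∧ ¬ inc k v) {c : Finset ι → K} (hc : SuppOn inc A' W' c) :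
    SuppOn inc A W (starAt k c) := by
  intro S hS
  unfold _root_.starAt at hS
  split_ifs at hS with hkS
  · have h0 : c (S.erase k) ≠ 0 := fun h => hS (by rw [h, smul_zero])
    refine ⟨fun j hj => ?_, fun v hv => ?_⟩
    · by_cases hjk : j = k
      · exact hjk ▸ hk
      · exact ((hA j).1 ((hc _ h0).1 j (Finset.mem_erase.2 ⟨hjk, hj⟩))).1
    · by_cases hkv : inc k v
      · exact ⟨k, hkS, hkv⟩
      · obtain ⟨j, hj, hjv⟩ := (hc _ h0).2 v ((hW v).2 ⟨hv, hkv⟩)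
        exact ⟨j, Finset.mem_of_mem_erase hj, hjv⟩
  · exact absurd rfl hS

theorem SuppOn.coneAt {k : ι} (hA : ∀ j, A' j ↔ A j ∧ j ≠ k)
    (hW : ∀ v, W' v ↔ W v ∧ ¬ inc k v) {c : Finset ι → K} (hc : SuppOn inc A W c) :
    SuppOn inc A' W' (coneAt k c) := by
  intro S hS
  obtain ⟨hkS, h0⟩ := ne_zero_of_coneAt_ne_zero hS
  have := hc _ h0
  refine ⟨fun j hj => (hA j).2 ⟨this.1 j (Finset.mem_insert_of_mem hj), ?_⟩, fun v hv => ?_⟩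
  · rintro rfl; exact hkS hj
  · obtain ⟨j, hj, hjv⟩ := this.2 v ((hW v).1 hv).1
    rcases Finset.mem_insert.1 hj with rfl | hj
    · exact absurd hjv ((hW v).1 hv).2
    · exact ⟨j, hj, hjv⟩

theorem SuppOn.mem_of_forced {w : V} {k : ι} (hw : W w) (h : ∀ j, A j → inc j w → j = k)
    {c : Finset ι → K} (hc : SuppOn inc A W c) {S : Finset ι} (h0 : c S ≠ 0) : k ∈ S := by
  obtain ⟨j, hj, hjw⟩ := (hc S h0).2 w hw
  exact h j ((hc S h0).1 j hj) hjw ▸ hj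

theorem NonVan.of_forced {w : V} {k : ι} (hk : A k) (hw : W w)
    (h : ∀ j, A j → inc j w → j = k) (hA : ∀ j, A' j ↔ A j ∧ j ≠ k)
    (hW : ∀ v, W' v ↔ W v ∧ ¬ inc k v) {q : ℕ} (hnv : NonVan K inc A' W' q) :
    NonVan K inc A W (q + 1) := by
  obtain ⟨c, hc, hq, hz, hn⟩ := hnv
  refine ⟨starAt k c, hc.starAt hA hk hW, ?_, ?_, ?_⟩
  · intro S hS
    unfold starAt at hS
    split_ifs at hS with hkS
    · have h0 : c (S.erase k) ≠ 0 := fun h => hS (by rw [h, smul_zero])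
      have := hq _ h0
      rw [← this, Finset.card_erase_add_one hkS]
    · exact absurd rfl hS
  · intro S hS
    by_cases hkS : k ∈ S
    · rw [cobd_starAt k c S hkS, hz, smul_zero, neg_zero]
      intro j hj
      obtain ⟨h1, h2⟩ := Finset.mem_erase.1 hj
      exact (hA j).2 ⟨hS j h2, h1⟩
    · exact cobd_starAt_of_notMem k c S hkS
  · intro b hb hbz
    have hs := hb.coneAt hA hW
    refine hn (-coneAt k b) (fun S hS => hs S (by simpa using hS)) fun S hS => ?_
    have hkS : k ∉ S := fun hkS => ((hA k).1 (hS k hkS)).2 rfl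
    have h1 := cobd_coneAt k b S
    have h2 : b S = 0 := by
      by_contra h2; exact hkS (hb.mem_of_forced hw h h2)
    have h3 : coneAt k (cobd b) S = c S := by
      rw [coneAt, if_neg hkS, hbz]
      · simp [starAt, Finset.erase_insert hkS, smul_smul, ksgn_insert_self, ksgn_mul_self]
      · intro j hj
        rcases Finset.mem_insert.1 hj with rfl | hj
        · exact hk
        · exact ((hA j).1 (hS j hj)).1
    rw [h2, h3] at h1
    rw [cobd_neg, Pi.neg_apply, neg_eq_iff_add_eq_zero]
    exact h1

theorem Acyc.of_forced {w : V} {k : ι} (hk : A k) (hw : W w)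
    (h : ∀ j, A j → inc j w → j = k) (hA : ∀ j, A' j ↔ A j ∧ j ≠ k)
    (hW : ∀ v, W' v ↔ W v ∧ ¬ inc k v) (hac : Acyc K inc A' W') :
    Acyc K inc A W := by
  intro c hc hz
  have hins : ∀ S : Finset ι, (∀ j ∈ S, A' j) → k ∉ S ∧ ∀ j ∈ insert k S, A j := by
    intro S hS
    refine ⟨fun hkS => ((hA k).1 (hS k hkS)).2 rfl, fun j hj => ?_⟩
    rcases Finset.mem_insert.1 hj with rfl | hj
    · exact hk
    · exact ((hA j).1 (hS j hj)).1
  obtain ⟨b, hb, hbz⟩ := hac (coneAt k c) (hc.coneAt hA hW) (by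
    intro S hS
    have h1 := cobd_coneAt k c S
    have h2 : c S = 0 := by
      by_contra h2; exact (hins S hS).1 (hc.mem_of_forced hw h h2)
    rw [h2] at h1
    rw [← h1]
    simp [coneAt, hz _ (hins S hS).2])
  have hb' : SuppOn inc A W (starAt k b) := hb.starAt hA hk hW
  refine ⟨-starAt k b, fun S hS => hb' S (by simpa using hS), fun S hS => ?_⟩
  rw [cobd_neg, Pi.neg_apply]
  by_cases hkS : k ∈ S
  · rw [cobd_starAt k b S hkS, neg_neg, hbz, coneAt, if_neg (Finset.notMem_erase k S),
      smul_smul, ksgn_erase_self, ksgn_mul_self, one_smul, Finset.insert_erase hkS]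
    intro j hj
    obtain ⟨h1, h2⟩ := Finset.mem_erase.1 hj
    exact (hA j).2 ⟨hS j h2, h1⟩
  · rw [cobd_starAt_of_notMem k b S hkS, neg_zero]
    by_contra h2
    exact hkS (hc.mem_of_forced hw h (Ne.symm h2))

theorem NonVan.of_acyc {w : V} (hw : W w) (hA : ∀ j, A' j ↔ A j ∧ ¬ inc j w)
    (hW : ∀ v, W' v ↔ W v ∧ v ≠ w) {q : ℕ} (hac : Acyc K inc A W')
    (hnv : NonVan K inc A' W' q) : NonVan K inc A W (q + 1) := by
  classical
  obtain ⟨c, hc, hq, hz, hn⟩ := hnv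
  have hc' : SuppOn inc A W' c := hc.mono (fun k hk => ((hA k).1 hk).1) fun _ => id
  let u : Finset ι → K := fun S => if ∀ k ∈ S, A k then cobd c S else 0
  have hus : ∀ S, u S ≠ 0 → (∀ k ∈ S, A k) ∧ cobd c S ≠ 0 := by
    intro S h
    by_cases hS : ∀ k ∈ S, A k
    · exact ⟨hS, by simpa [u, if_pos hS] using h⟩
    · simp [u, hS] at h
  refine ⟨u, ?_, ?_, ?_, ?_⟩
  · intro S hS
    obtain ⟨h1, h2⟩ := hus S hS
    refine ⟨h1, fun v hv => ?_⟩
    by_cases hvw : v = w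
    · subst hvw
      by_contra! hcon
      exact h2 (hz S fun k hk => (hA k).2 ⟨h1 k hk, hcon k hk⟩)
    · exact (hc'.cobd_apply h1 h2).2 v ((hW v).2 ⟨hv, hvw⟩)
  · intro S hS
    obtain ⟨k, hk, h3⟩ := exists_of_cobd_ne_zero (hus S hS).2
    rw [← hq _ h3, Finset.card_erase_add_one hk]
  · intro S hS
    have : cobd u S = cobd (cobd c) S := by
      refine Finset.sum_congr rfl fun k _ => ?_
      rw [show u (S.erase k) = _ from if_pos fun l hl => hS l (Finset.mem_of_mem_erase hl)]
    rw [this, cobd_cobd]; rfl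
  · intro b hb hbz
    obtain ⟨b', hb', hbz'⟩ := hac (c - b)
      (hc'.sub (hb.mono (fun _ => id) fun v hv => ((hW v).1 hv).1)) (by
        intro S hS
        rw [cobd_sub, Pi.sub_apply, hbz S hS, show u S = _ from if_pos hS, sub_self])
    refine hn (fun S => if ∀ k ∈ S, A' k then b' S else 0) ?_ ?_
    · intro S hS
      simp only [ne_eq, ite_eq_right_iff, not_forall] at hS
      exact ⟨hS.1, (hb' S hS.2).2⟩
    · intro S hS
      have h1 := hbz' S fun k hk => ((hA k).1 (hS k hk)).1
      have h2 : b S = 0 := by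
        by_contra h2
        obtain ⟨k, hk, hkw⟩ := (hb S h2).2 w hw
        exact ((hA k).1 (hS k hk)).2 hkw
      rw [Pi.sub_apply, h2, sub_zero] at h1
      rw [← h1]
      refine Finset.sum_congr rfl fun k _ => ?_
      dsimp only
      rw [if_pos fun j hj => hS j (Finset.mem_of_mem_erase hj)]

end Nonvanishing

section Transfer
variable {ι κ V U : Type*} [LinearOrder ι] [LinearOrder κ]

theorem ksgn_map (f : κ ↪o ι) (k : κ) (S : Finset κ) :
    ksgn (f k) (S.map f.toEmbedding) = ksgn k S := by
  unfold ksgn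
  rw [Finset.filter_map, Finset.card_map]
  simp

theorem cobd_comp_map {K : Type*} [AddCommGroup K] (f : κ ↪o ι) (c : Finset ι → K)
    (S : Finset κ) : cobd c (S.map f.toEmbedding) = cobd (fun T => c (T.map f.toEmbedding)) S := by
  simp only [cobd, Finset.sum_map]
  refine Finset.sum_congr rfl fun k _ => ?_
  rw [Finset.map_erase]
  congr 1
  exact ksgn_map f k S

theorem NonVan.transfer {K : Type*} [AddCommGroup K] {inc : ι → V → Prop} {A : ι → Prop}
    {W : V → Prop} {inc' : κ → U → Prop} {W' : U → Prop} {q : ℕ} (f : κ ↪o ι)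
    (hf : ∀ i, A i ↔ ∃ k, f k = i)
    (hW : ∀ S : Finset κ, Covers inc' (fun _ => True) W' S ↔
      Covers inc A W (S.map f.toEmbedding)) (h : NonVan K inc A W q) :
    NonVan K inc' (fun _ => True) W' q := by
  classical
  obtain ⟨c, hc, hq, hz, hn⟩ := h
  have hA : ∀ S : Finset κ, ∀ i ∈ S.map f.toEmbedding, A i := by
    intro S i hi
    obtain ⟨k, _, rfl⟩ := Finset.mem_map.1 hi
    exact (hf _).2 ⟨k, rfl⟩
  have hS : ∀ S : Finset ι, (∀ i ∈ S, A i) → ∃ T : Finset κ, T.map f.toEmbedding = S := by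
    intro S hS
    have : (S : Set ι) ⊆ Set.range f := fun i hi => (hf i).1 (hS i hi)
    refine ⟨S.preimage f f.injective.injOn, ?_⟩
    ext i
    simp only [Finset.mem_map, Finset.mem_preimage]
    constructor
    · rintro ⟨k, hk, rfl⟩; exact hk
    · intro hi
      obtain ⟨k, rfl⟩ := this hi
      exact ⟨k, hi, rfl⟩
  refine ⟨fun S => c (S.map f.toEmbedding), ?_, ?_, ?_, ?_⟩
  · exact fun S hS => (hW S).2 (hc _ hS)
  · intro S hS
    simpa using hq _ hS
  · intro S _
    rw [← cobd_comp_map]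
    exact hz _ (hA S)
  · intro b hb hbz
    let b' : Finset ι → K := fun S =>
      if ∀ i ∈ S, A i then b (S.preimage f f.injective.injOn) else 0
    have hb' : ∀ T : Finset κ, b' (T.map f.toEmbedding) = b T := by
      intro T
      simp only [b']
      rw [if_pos (hA T)]
      congr 1
      ext k; simp
    refine hn b' ?_ ?_
    · intro S h0
      have hSA : ∀ i ∈ S, A i := by
        by_contra h; exact h0 (if_neg h)
      obtain ⟨T, rfl⟩ := hS S hSA
      rw [hb'] at h0
      exact (hW T).1 (hb T h0)
    · intro S hSA
      obtain ⟨T, rfl⟩ := hS S hSA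
      rw [cobd_comp_map]
      simp only [hb']
      exact hbz T (fun _ _ => trivial)

end Transfer

section LocAt
variable {R L : Type*} [CommRing R] [IsDomain R] [Field L] [Algebra R L] [IsFractionRing R L]

/-- The elements of the fraction field `L` whose denominator is a power of `r`. -/
def locAt (L : Type*) [Field L] [Algebra R L] (r : R) : Submodule R L where
  carrier := {y | ∃ n : ℕ, ∃ p : R, algebraMap R L p = algebraMap R L r ^ n * y}
  zero_mem' := ⟨0, 0, by simp⟩
  add_mem' := by
    rintro x y ⟨n, p, hp⟩ ⟨m, q, hq⟩
    refine ⟨n + m, r ^ m * p + r ^ n * q, ?_⟩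
    simp only [map_add, map_mul, map_pow, hp, hq]
    ring
  smul_mem' := by
    rintro a y ⟨n, p, hp⟩
    refine ⟨n, a * p, ?_⟩
    rw [map_mul, hp, Algebra.smul_def]; ring

theorem locAt_mono {r r' : R} (h : r ∣ r') : locAt L r ≤ locAt L r' := by
  rintro y ⟨n, p, hp⟩
  obtain ⟨t, rfl⟩ := h
  exact ⟨n, t ^ n * p, by simp only [map_mul, map_pow, hp]; ring⟩

theorem locAt_bound {r : R} {y : L} (h : y ∈ locAt L r) :
    ∃ N : ℕ, ∀ n ≥ N, ∃ p : R, algebraMap R L p = algebraMap R L r ^ n * y := by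
  obtain ⟨N, p, hp⟩ := h
  refine ⟨N, fun n hn => ⟨r ^ (n - N) * p, ?_⟩⟩
  rw [map_mul, map_pow, hp, ← mul_assoc, ← pow_add, Nat.sub_add_cancel hn]

theorem div_mem_locAt {r g : R} (hg : algebraMap R L g ≠ 0) (hgr : g ∣ r) {y : L}
    (h : y ∈ locAt L r) (m : ℕ) : (algebraMap R L g ^ m)⁻¹ * y ∈ locAt L r := by
  obtain ⟨n, p, hp⟩ := h
  obtain ⟨t, rfl⟩ := hgr
  refine ⟨n + m, t ^ m * p, ?_⟩
  have := pow_ne_zero m hg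
  simp only [map_mul, map_pow, hp]
  field_simp
  ring

/-- Exactness of the localized Čech complex along one direction. -/
theorem exists_cobd_eq {ι : Type*} [LinearOrder ι] [Fintype ι] (e : ι → R) (g : R)
    (hg : g ≠ 0) (hrad : g ∈ (Ideal.span (Set.range e)).radical) (i : ℕ) (φ : Finset ι → L)
    (hloc : ∀ S, φ S ∈ locAt L ((∏ k ∈ S, e k) * g)) (hdeg : ∀ S, φ S ≠ 0 → S.card = i)
    (hz : cobd φ = 0) :
    ∃ ψ : Finset ι → L, (∀ S, ψ S ∈ locAt L ((∏ k ∈ S, e k) * g)) ∧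
      (∀ S, ψ S ≠ 0 → S.card + 1 = i) ∧ cobd ψ = φ := by
  have hg' : algebraMap R L g ≠ 0 := by
    simpa using (IsFractionRing.injective R L).ne hg
  choose N hN using fun S => locAt_bound (hloc S)
  set n := Finset.univ.sup N with hn
  have hNn : ∀ S, N S ≤ n := fun S => Finset.le_sup (Finset.mem_univ S)
  have hrad' : g ∈ (Ideal.span (Set.range fun k => e k ^ n)).radical := by
    refine Ideal.radical_le_radical_iff.2 ?_ hrad
    rw [Ideal.span_le]
    rintro _ ⟨k, rfl⟩
    exact ⟨n, Ideal.subset_span ⟨k, rfl⟩⟩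
  obtain ⟨m, hm⟩ := hrad'
  obtain ⟨a, ha⟩ := Ideal.mem_span_range_iff_exists_fun.1 hm
  let u : ι → L := fun k => algebraMap R L (a k * e k ^ n) * (algebraMap R L g ^ m)⁻¹
  have hu : ∑ k, u k = 1 := by
    simp only [u]
    rw [← Finset.sum_mul, ← map_sum, ha, map_pow, mul_inv_cancel₀ (pow_ne_zero m hg')]
  refine ⟨∑ k, fun S => u k * coneAt k φ S, ?_, ?_, ?_⟩
  · intro S
    rw [Finset.sum_apply]
    refine Submodule.sum_mem _ fun k _ => ?_
    by_cases hk : k ∈ S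
    · simp [coneAt, hk]
    · have h1 : algebraMap R L (e k) ^ n * φ (insert k S) ∈ locAt L ((∏ k ∈ S, e k) * g) := by
        obtain ⟨p, hp⟩ := hN (insert k S) n (hNn _)
        refine ⟨n, p, ?_⟩
        rw [hp, Finset.prod_insert hk]
        simp only [map_mul]; ring
      have h2 := div_mem_locAt hg' (dvd_mul_left g _) (Submodule.smul_mem _ (a k) h1) m
      have h3 := zsmul_mem h2 (ksgn k S)
      convert h3 using 1
      simp only [u, coneAt, hk, if_false, Algebra.smul_def, map_mul, map_pow]
      ring
  · intro S hS
    rw [Finset.sum_apply] at hS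
    obtain ⟨k, _, hk⟩ := Finset.exists_ne_zero_of_sum_ne_zero hS
    have h1 : coneAt k φ S ≠ 0 := fun h => hk (by rw [h, mul_zero])
    obtain ⟨h2, h3⟩ := ne_zero_of_coneAt_ne_zero h1
    rw [← hdeg _ h3, Finset.card_insert_of_notMem h2]
  · ext S
    rw [cobd_sum, Finset.sum_apply]
    have : ∀ k, cobd (fun S => u k * coneAt k φ S) S = u k * φ S := by
      intro k
      have hmap := congrFun (cobd_map (AddMonoidHom.mulLeft (u k)) (coneAt k φ)) S
      simp only [AddMonoidHom.coe_mulLeft] at hmap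
      rw [hmap]
      have := cobd_coneAt k φ S
      rw [hz] at this
      simp only [coneAt, Pi.zero_apply, smul_zero, ite_self, add_zero] at this
      congr 1
    simp only [this]
    rw [← Finset.sum_mul, hu, one_mul]

end LocAt

section Zigzag
variable {R L : Type*} [CommRing R] [IsDomain R] [Field L] [Algebra R L] [IsFractionRing R L]
  {ι κ : Type*} [LinearOrder ι] [Fintype ι] [LinearOrder κ] [Fintype κ]

/-- The coboundary in the first variable. -/
def cobdLeft {M : Type*} [AddCommGroup M] (φ : Finset ι → Finset κ → M) :
    Finset ι → Finset κ → M := fun S F => cobd (fun T => φ T F) S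

/-- The coboundary in the second variable. -/
def cobdRight {M : Type*} [AddCommGroup M] (φ : Finset ι → Finset κ → M) :
    Finset ι → Finset κ → M := fun S => cobd (φ S)

theorem cobdLeft_cobdRight {M : Type*} [AddCommGroup M] (φ : Finset ι → Finset κ → M) :
    cobdLeft (cobdRight φ) = cobdRight (cobdLeft φ) := by
  ext S F
  simp only [cobdLeft, cobdRight, cobd, Finset.smul_sum]
  rw [Finset.sum_comm]
  simp only [smul_smul, mul_comm]

/-- The bigraded components of the Čech double complex of two families of elements. -/
structure InCech (e : ι → R) (f : κ → R) (i j : ℕ) (φ : Finset ι → Finset κ → L) : Prop where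
  deg : ∀ S F, φ S F ≠ 0 → S.card = i ∧ F.card = j
  loc : ∀ S F, φ S F ∈ locAt L ((∏ k ∈ S, e k) * ∏ k ∈ F, f k)

variable {e : ι → R} {f : κ → R} {i j : ℕ} {φ : Finset ι → Finset κ → L}

theorem InCech.sub {φ' : Finset ι → Finset κ → L} (h : InCech e f i j φ)
    (h' : InCech e f i j φ') : InCech e f i j (φ - φ') where
  deg S F h0 := by
    by_cases h1 : φ S F = 0
    · refine h'.deg S F fun h2 => h0 ?_
      simp [h1, h2]
    · exact h.deg S F h1
  loc S F := Submodule.sub_mem _ (h.loc S F) (h'.loc S F)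

theorem InCech.cobdLeft (h : InCech e f i j φ) : InCech e f (i + 1) j (cobdLeft φ) where
  deg S F h0 := by
    obtain ⟨k, hk, h1⟩ := exists_of_cobd_ne_zero h0
    rw [← (h.deg _ _ h1).1, Finset.card_erase_add_one hk]
    exact ⟨rfl, (h.deg _ _ h1).2⟩
  loc S F := by
    refine Submodule.sum_mem _ fun k hk => zsmul_mem (locAt_mono ?_ (h.loc _ F)) _
    exact mul_dvd_mul_right (Finset.prod_dvd_prod_of_subset _ _ _ (Finset.erase_subset _ _)) _

theorem InCech.cobdRight (h : InCech e f i j φ) : InCech e f i (j + 1) (cobdRight φ) where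
  deg S F h0 := by
    obtain ⟨k, hk, h1⟩ := exists_of_cobd_ne_zero h0
    rw [← (h.deg _ _ h1).2, Finset.card_erase_add_one hk]
    exact ⟨(h.deg _ _ h1).1, rfl⟩
  loc S F := by
    refine Submodule.sum_mem _ fun k hk => zsmul_mem (locAt_mono ?_ (h.loc S _)) _
    exact mul_dvd_mul_left _ (Finset.prod_dvd_prod_of_subset _ _ _ (Finset.erase_subset _ _))

theorem prod_mem_of_nonempty {I : Ideal R} {g : κ → R} (hg : ∀ k, g k ∈ I) {F : Finset κ}
    (hF : F.Nonempty) : ∏ k ∈ F, g k ∈ I := by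
  obtain ⟨k, hk⟩ := hF
  rw [← Finset.mul_prod_erase _ _ hk]
  exact I.mul_mem_right _ (hg k)

theorem InCech.exists_cobdLeft (hf0 : ∀ k, f k ≠ 0)
    (hf : ∀ k, f k ∈ (Ideal.span (Set.range e)).radical) (h : InCech e f (i + 1) (j + 1) φ)
    (hz : _root_.cobdLeft φ = 0) : ∃ ψ, InCech e f i (j + 1) ψ ∧ _root_.cobdLeft ψ = φ := by
  have key : ∀ F : Finset κ, ∃ ψ : Finset ι → L,
      (∀ S, ψ S ∈ locAt L ((∏ k ∈ S, e k) * ∏ k ∈ F, f k)) ∧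
      (∀ S, ψ S ≠ 0 → S.card = i ∧ F.card = j + 1) ∧ cobd ψ = fun S => φ S F := by
    intro F
    by_cases hF : F.card = j + 1
    · have hne : F.Nonempty := by rw [← Finset.card_pos]; omega
      obtain ⟨ψ, h1, h2, h3⟩ := exists_cobd_eq (L := L) e (∏ k ∈ F, f k)
        (Finset.prod_ne_zero_iff.2 fun k _ => hf0 k) (prod_mem_of_nonempty hf hne) (i + 1)
        (fun S => φ S F) (fun S => h.loc S F) (fun S hS => (h.deg S F hS).1)
        (by ext S; exact congrFun (congrFun hz S) F)
      exact ⟨ψ, h1, fun S hS => ⟨by simpa using h2 S hS, hF⟩, h3⟩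
    · refine ⟨0, fun S => Submodule.zero_mem _, fun S hS => absurd rfl hS, ?_⟩
      rw [cobd_zero]
      ext S
      by_contra h0
      exact hF (h.deg S F (Ne.symm h0)).2
  choose ψ h1 h2 h3 using key
  exact ⟨fun S F => ψ F S, ⟨fun S F => h2 F S, fun S F => h1 F S⟩,
    by ext S F; exact congrFun (h3 F) S⟩

theorem InCech.exists_cobdRight (he0 : ∀ k, e k ≠ 0)
    (he : ∀ k, e k ∈ (Ideal.span (Set.range f)).radical) (h : InCech e f (i + 1) j φ)
    (hz : _root_.cobdRight φ = 0) :
    ∃ ψ, (∀ S F, ψ S F ≠ 0 → S.card = i + 1 ∧ F.card + 1 = j) ∧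
      (∀ S F, ψ S F ∈ locAt L ((∏ k ∈ S, e k) * ∏ k ∈ F, f k)) ∧ _root_.cobdRight ψ = φ := by
  have key : ∀ S : Finset ι, ∃ ψ : Finset κ → L,
      (∀ F, ψ F ∈ locAt L ((∏ k ∈ S, e k) * ∏ k ∈ F, f k)) ∧
      (∀ F, ψ F ≠ 0 → S.card = i + 1 ∧ F.card + 1 = j) ∧ cobd ψ = φ S := by
    intro S
    by_cases hS : S.card = i + 1
    · have hne : S.Nonempty := by rw [← Finset.card_pos]; omega
      obtain ⟨ψ, h1, h2, h3⟩ := exists_cobd_eq (L := L) f (∏ k ∈ S, e k)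
        (Finset.prod_ne_zero_iff.2 fun k _ => he0 k) (prod_mem_of_nonempty he hne) j
        (φ S) (fun F => by rw [mul_comm]; exact h.loc S F) (fun F hF => (h.deg S F hF).2)
        (congrFun hz S)
      exact ⟨ψ, fun F => by rw [mul_comm]; exact h1 F, fun F hF => ⟨hS, h2 F hF⟩, h3⟩
    · refine ⟨0, fun F => Submodule.zero_mem _, fun F hF => absurd rfl hF, ?_⟩
      rw [cobd_zero]
      ext F
      by_contra h0
      exact hS (h.deg S F (Ne.symm h0)).1
  choose ψ h1 h2 h3 using key
  exact ⟨ψ, h2, h1, funext h3⟩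

theorem cobdLeft_sub (φ ψ : Finset ι → Finset κ → L) :
    cobdLeft (φ - ψ) = cobdLeft φ - cobdLeft ψ := by
  ext S F; exact congrFun (cobd_sub (fun T => φ T F) (fun T => ψ T F)) S

theorem cobdRight_sub (φ ψ : Finset ι → Finset κ → L) :
    cobdRight (φ - ψ) = cobdRight φ - cobdRight ψ := by
  ext S F; exact congrFun (cobd_sub (φ S) (ψ S)) F

theorem cobdLeft_cobdLeft (φ : Finset ι → Finset κ → L) : cobdLeft (cobdLeft φ) = 0 := by
  ext S F; exact congrFun (cobd_cobd fun T => φ T F) S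

theorem cobdRight_cobdRight (φ : Finset ι → Finset κ → L) : cobdRight (cobdRight φ) = 0 := by
  ext S F; exact congrFun (cobd_cobd (φ S)) F

theorem cobdLeft_zero : cobdLeft (0 : Finset ι → Finset κ → L) = 0 := by
  ext S F; exact congrFun (cobd_zero (M := L)) S

theorem cobdRight_zero : cobdRight (0 : Finset ι → Finset κ → L) = 0 := by
  ext S F; exact congrFun (cobd_zero (M := L)) F

theorem exists_cobdLeft_cobdRight {i j : ℕ}
    {φ : Finset ι → Finset κ → L} (he0 : ∀ k, e k ≠ 0) (hf0 : ∀ k, f k ≠ 0)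
    (he : ∀ k, e k ∈ (Ideal.span (Set.range f)).radical)
    (hf : ∀ k, f k ∈ (Ideal.span (Set.range e)).radical) (h : InCech e f (i + 1) j φ)
    (hij : Fintype.card κ < i + 1 + j) (hz : _root_.cobdRight (_root_.cobdLeft φ) = 0) :
    ∃ ψ, InCech e f i j ψ ∧
      _root_.cobdRight φ = _root_.cobdRight (_root_.cobdLeft ψ) := by
  by_cases hj : Fintype.card κ ≤ j
  · refine ⟨0, ⟨fun S F h => absurd rfl h, fun S F => Submodule.zero_mem _⟩, ?_⟩
    rw [cobdLeft_zero, cobdRight_zero]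
    ext S F
    by_contra h0
    have := (h.cobdRight.deg S F h0).2
    have := F.card_le_univ
    omega
  · obtain ⟨i, rfl⟩ : ∃ i', i = i' + 1 := ⟨i - 1, by omega⟩
    obtain ⟨φ', h', hφ'⟩ := h.cobdRight.exists_cobdLeft hf0 hf
      (by rw [cobdLeft_cobdRight, hz])
    obtain ⟨ψ', hψ', hzψ'⟩ := exists_cobdLeft_cobdRight he0 hf0 he hf h' (by omega)
      (by rw [hφ', cobdRight_cobdRight])
    have h2 : InCech e f (i + 1) (j + 1) (φ' - _root_.cobdLeft ψ') := h'.sub hψ'.cobdLeft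
    obtain ⟨ψ, h3, h4, h5⟩ := h2.exists_cobdRight he0 he
      (by rw [cobdRight_sub, hzψ', sub_self])
    refine ⟨ψ, ⟨fun S F hS => ⟨(h3 S F hS).1, by simpa using (h3 S F hS).2⟩, h4⟩, ?_⟩
    rw [← cobdLeft_cobdRight, h5, cobdLeft_sub, cobdLeft_cobdLeft, sub_zero, hφ']
termination_by Fintype.card κ - j

end Zigzag

section EdgeIdeal
variable {K σ ι : Type*} [Field K] [Fintype σ]

/-- Incidence of an edge, given by its two end points, with a vertex. -/
def EdgeInc {ι V : Type*} (a b : ι → V) (k : ι) (v : V) : Prop := v = a k ∨ v = b k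

theorem X_dvd_edge_iff {a b : ι → σ} {k : ι} {v : σ} :
    (X v : MvPolynomial σ K) ∣ X (a k) * X (b k) ↔ EdgeInc a b k v := by
  rw [(X_prime (R := K) (i := v)).dvd_mul, X_dvd_X, X_dvd_X]
  simp only [EdgeInc]

theorem prod_X_dvd_prod_edge {a b : ι → σ} {W : Finset σ} {S : Finset ι}
    (h : ∀ v ∈ W, ∃ k ∈ S, EdgeInc a b k v) :
    (∏ v ∈ W, X v : MvPolynomial σ K) ∣ ∏ k ∈ S, (X (a k) * X (b k)) := by
  refine Finset.prod_dvd_of_isRelPrime ?_ fun v hv => ?_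
  · intro v _ w _ hvw
    refine ((X_prime (R := K) (i := v)).irreducible.isRelPrime_iff_not_dvd).2 fun h => hvw ?_
    simpa using h
  · obtain ⟨k, hk, hv⟩ := h v hv
    exact (X_dvd_edge_iff.2 hv).trans (Finset.dvd_prod_of_mem _ hk)

theorem coeff_eq_zero_of_X_pow_dvd {p : MvPolynomial σ K} {v : σ} {n : ℕ} {d : σ →₀ ℕ}
    (h : X v ^ n ∣ p) (hd : d v < n) : coeff d p = 0 := by
  classical
  obtain ⟨r, rfl⟩ := h
  rw [X_pow_eq_monomial, coeff_monomial_mul', if_neg]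
  intro hle
  have := hle v
  simp at this
  omega

theorem card_le_of_radical_eq [LinearOrder ι] [Fintype ι] {κ : Type*} [LinearOrder κ]
    [Fintype κ] (a b : ι → σ) {W : σ → Prop} {q : ℕ}
    (hnv : NonVan K (EdgeInc a b) (fun _ => True) W (q + 1))
    (f : κ → MvPolynomial σ K) (hf0 : ∀ k, f k ≠ 0)
    (hrad : (Ideal.span (Set.range f)).radical =
      (Ideal.span (Set.range fun k => (X (a k) * X (b k) : MvPolynomial σ K))).radical) :
    q + 1 ≤ Fintype.card κ := by
  classical
  by_contra! hlt
  obtain ⟨c, hc, hq, hz, hn⟩ := hnv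
  set L := FractionRing (MvPolynomial σ K)
  set e : ι → MvPolynomial σ K := fun k => X (a k) * X (b k) with he
  let al := algebraMap (MvPolynomial σ K) L
  have hal : Function.Injective al := IsFractionRing.injective _ _
  let W' : Finset σ := Finset.univ.filter W
  let xW : MvPolynomial σ K := ∏ v ∈ W', X v
  have hX : ∀ v : σ, (X v : MvPolynomial σ K) ≠ 0 := fun v => X_ne_zero v
  have hxW : al xW ≠ 0 := by
    rw [← map_zero al]
    exact hal.ne (Finset.prod_ne_zero_iff.2 fun v _ => hX v)
  have he0 : ∀ k, e k ≠ 0 := fun k => mul_ne_zero (hX _) (hX _)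
  let z : Finset ι → Finset κ → L := fun S F => if F = ∅ then al (C (c S)) * (al xW)⁻¹ else 0
  have hzC : InCech e f (q + 1) 0 z := by
    constructor
    · intro S F h
      have hF : F = ∅ := by by_contra hF; exact h (if_neg hF)
      refine ⟨hq S fun h0 => h ?_, by simp [hF]⟩
      simp [z, h0]
    · intro S F
      by_cases h : z S F = 0
      · rw [h]; exact Submodule.zero_mem _
      have hF : F = ∅ := by by_contra hF; exact h (if_neg hF)
      have h0 : c S ≠ 0 := fun h0 => h (by simp [z, h0])
      obtain ⟨t, ht⟩ : xW ∣ ∏ k ∈ S, e k := prod_X_dvd_prod_edge (W := W') fun v hv =>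
        (hc S h0).2 v (by simpa [W'] using hv)
      subst hF
      refine ⟨1, t * C (c S), ?_⟩
      simp only [Finset.prod_empty, mul_one, ht, z, if_true, map_mul]
      change al t * al (C (c S)) = (al xW * al t) ^ 1 * (al (C (c S)) * (al xW)⁻¹)
      rw [show (al xW * al t) ^ 1 * (al (C (c S)) * (al xW)⁻¹) =
        al t * al (C (c S)) * (al xW * (al xW)⁻¹) by ring, mul_inv_cancel₀ hxW, mul_one]
  have hdz : cobdLeft z = 0 := by
    ext S F
    by_cases hF : F = ∅
    · subst hF
      simp only [cobdLeft, z, if_true]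
      have h1 := congrFun (cobd_map ((AddMonoidHom.mulRight (al xW)⁻¹).comp
        ((al : MvPolynomial σ K →+ L).comp (C : K →+* MvPolynomial σ K).toAddMonoidHom)) c) S
      refine h1.trans ?_
      rw [hz S fun _ _ => trivial, map_zero]; rfl
    · simp only [cobdLeft, z, hF, if_false]
      exact congrFun (cobd_zero (M := L)) S
  obtain ⟨y, hyC, hy⟩ := exists_cobdLeft_cobdRight (L := L) he0 hf0
    (fun k => by rw [hrad]; exact Ideal.le_radical (Ideal.subset_span ⟨k, rfl⟩))
    (fun k => by rw [← hrad]; exact Ideal.le_radical (Ideal.subset_span ⟨k, rfl⟩)) hzC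
    (by simpa using hlt) (by rw [hdz, cobdRight_zero])
  have hzy : cobdLeft y = z := by
    obtain ⟨ψ, h1, _, h3⟩ := (hzC.sub hyC.cobdLeft).exists_cobdRight he0
      (fun k => by rw [hrad]; exact Ideal.le_radical (Ideal.subset_span ⟨k, rfl⟩))
      (by rw [cobdRight_sub, hy, sub_self])
    have : ψ = 0 := by
      ext S F
      by_contra h0
      exact absurd (h1 S F h0).2 (by omega)
    rw [this, cobdRight_zero] at h3
    exact (sub_eq_zero.1 h3.symm).symm
  let P : MvPolynomial σ K := ∏ v, X v
  have hyP : ∀ S, y S ∅ ∈ locAt L (∏ k ∈ S, e k) := fun S => by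
    simpa using hyC.loc S ∅
  have hePdvd : ∀ S : Finset ι, ∃ r, (∏ k ∈ S, e k) ∣ P ^ r := by
    intro S
    refine ⟨2 * S.card, ?_⟩
    rw [pow_mul, ← Finset.prod_const]
    refine Finset.prod_dvd_prod_of_dvd _ _ fun k _ => ?_
    rw [pow_two]
    exact mul_dvd_mul (Finset.dvd_prod_of_mem _ (Finset.mem_univ _))
      (Finset.dvd_prod_of_mem _ (Finset.mem_univ _))
  have hyP' : ∀ S, ∃ N : ℕ, ∀ n ≥ N, ∃ p, al p = al P ^ n * y S ∅ := by
    intro S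
    obtain ⟨r, hr⟩ := hePdvd S
    obtain ⟨N, hN⟩ := locAt_bound (locAt_mono hr (hyP S))
    refine ⟨r * N, fun n hn => ?_⟩
    obtain ⟨p, hp⟩ := hN N le_rfl
    refine ⟨P ^ (n - r * N) * p, ?_⟩
    rw [map_mul, map_pow, hp, map_pow, ← pow_mul, ← mul_assoc, ← pow_add, Nat.sub_add_cancel hn]
  choose N hN using hyP'
  let n := Finset.univ.sup N + 1
  have hNn : ∀ S, N S ≤ n := fun S =>
    (Finset.le_sup (Finset.mem_univ S)).trans (Nat.le_succ _)
  choose p hp using fun S => hN S n (hNn S)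
  let d : σ →₀ ℕ := Finsupp.equivFunOnFinite.symm fun v => if W v then n - 1 else n
  have hPn : P ^ n = xW * monomial d 1 := by
    have h1 : (monomial d 1 : MvPolynomial σ K) = ∏ v, X v ^ d v := by
      rw [monomial_eq, C_1, one_mul, Finsupp.prod_fintype _ _ fun _ => pow_zero _]
    have h2 : xW = ∏ v, X v ^ (if W v then 1 else 0) := by
      simp only [xW, W', Finset.prod_filter]
      refine Finset.prod_congr rfl fun v _ => ?_
      split_ifs <;> simp
    rw [h1, h2, ← Finset.prod_mul_distrib, ← Finset.prod_pow]
    refine Finset.prod_congr rfl fun v _ => ?_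
    rw [← pow_add]
    congr 1
    simp only [d, Finsupp.coe_equivFunOnFinite_symm]
    split_ifs
    · omega
    · omega
  refine hn (fun S => coeff d (p S)) ?_ ?_
  · intro S hS
    refine ⟨fun _ _ => trivial, fun w hw => ?_⟩
    by_contra! hcon
    apply hS
    refine coeff_eq_zero_of_X_pow_dvd (v := w) (n := n) ?_
      (by simp only [d, Finsupp.coe_equivFunOnFinite_symm, if_pos hw]; omega)
    obtain ⟨M, r, hr⟩ := hyP S
    have h1 : (∏ k ∈ S, e k) ^ M * p S = P ^ n * r := by
      apply hal
      rw [map_mul, map_mul, hp, map_pow, map_pow]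
      change _ = _ * (algebraMap _ L) r
      rw [hr]
      change al _ ^ M * _ = _ * (al _ ^ M * _)
      ring
    have h2 : X w ^ n ∣ (∏ k ∈ S, e k) ^ M * p S := by
      rw [h1]
      exact (pow_dvd_pow_of_dvd (Finset.dvd_prod_of_mem _ (Finset.mem_univ w)) n).mul_right _
    have h3 : ¬ X w ∣ (∏ k ∈ S, e k) ^ M := by
      intro h
      obtain ⟨k, hk, hkw⟩ := (X_prime.dvd_finsetProd_iff _).1 (X_prime.dvd_of_dvd_pow h)
      exact hcon k hk (X_dvd_edge_iff.1 hkw)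
    exact (X_prime (R := K) (i := w)).pow_dvd_of_dvd_mul_left n h3 h2
  · intro S _
    have h1 : cobd p S = C (c S) * monomial d 1 := by
      apply hal
      have h2 := congrFun (cobd_map (al : MvPolynomial σ K →+ L) p) S
      have h3 := congrFun (cobd_map (AddMonoidHom.mulLeft (al P ^ n)) fun S => y S ∅) S
      have h4 : cobd (fun S => y S ∅) S = al (C (c S)) * (al xW)⁻¹ := by
        have := congrFun (congrFun hzy S) ∅
        simpa [cobdLeft, z] using this
      simp only [AddMonoidHom.coe_mulLeft, ← hp, h4] at h3
      refine h2.symm.trans (h3.trans ?_)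
      rw [← map_pow, hPn, map_mul, map_mul]
      rw [show al xW * al (monomial d 1) * (al (C (c S)) * (al xW)⁻¹) =
        al (C (c S)) * al (monomial d 1) * (al xW * (al xW)⁻¹) by ring, mul_inv_cancel₀ hxW, mul_one]
    have h2 := congrFun (cobd_map (coeffAddMonoidHom d) p) S
    refine h2.trans ?_
    rw [h1]
    simp [coeffAddMonoidHom, coeff_C_mul]

end EdgeIdeal

section ProjDim
open CategoryTheory

theorem subsingleton_ext_iff {R : Type} [CommRing R] (M N : ModuleCat.{0} R) (n : ℕ) :
    Subsingleton (((Ext R (ModuleCat.{0} R) (n + 1)).obj (Opposite.op M)).obj N) ↔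
      Subsingleton (Abelian.Ext.{0} M N (n + 1)) := by
  let P := projectiveResolution M
  have h1 : Subsingleton (Abelian.Ext.{0} M N (n + 1)) ↔
      ∀ f : P.complex.X (n + 1) ⟶ N, P.complex.d (n + 2) (n + 1) ≫ f = 0 →
        ∃ g : P.complex.X n ⟶ N, P.complex.d (n + 1) n ≫ g = f := by
    constructor
    · intro h f hf
      exact (P.extMk_eq_zero_iff f (n + 2) rfl hf n rfl).1 (Subsingleton.elim _ _)
    · intro h
      refine subsingleton_of_forall_eq 0 fun x => ?_
      obtain ⟨f, hf, rfl⟩ := P.extMk_surjective x (n + 2) rfl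
      exact (P.extMk_eq_zero_iff f (n + 2) rfl hf n rfl).2 (h f hf)
  rw [h1]
  rw [(P.isoExt (n + 1) N).toLinearEquiv.toEquiv.subsingleton_congr,
    ← ModuleCat.isZero_iff_subsingleton, ← HomologicalComplex.exactAt_iff_isZero_homology,
    HomologicalComplex.exactAt_iff' _ n (n + 1) (n + 2) (by simp) (by simp),
    ShortComplex.moduleCat_exact_iff]
  rfl

theorem projDim_eq {R : Type} [CommRing R] (M : Type) [AddCommGroup M] [Module R M] (q : ℕ)
    (h : HasProjectiveDimensionLT (ModuleCat.of R M) (q + 1))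
    (h' : ¬ HasProjectiveDimensionLT (ModuleCat.of R M) q) : projDim R M = q := by
  refine le_antisymm (sInf_le ?_) (le_sInf ?_)
  · intro i hi N
    obtain ⟨i, rfl⟩ : ∃ j, i = j + 1 := ⟨i - 1, by have : q < i := by exact_mod_cast hi
                                                   omega⟩
    rw [subsingleton_ext_iff]
    exact HasProjectiveDimensionLT.subsingleton _ (q + 1) _ (by exact_mod_cast hi) _
  · intro d hd
    by_contra! hlt
    lift d to ℕ using hlt.ne_top
    have hdq : d < q := by exact_mod_cast hlt
    have : HasProjectiveDimensionLT (ModuleCat.of R M) (d + 1) := by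
      refine HasProjectiveDimensionLT.mk fun i hi Y e => ?_
      obtain ⟨i, rfl⟩ : ∃ j, i = j + 1 := ⟨i - 1, by omega⟩
      have := (subsingleton_ext_iff (ModuleCat.of R M) Y i).1
        (hd (i + 1) (by exact_mod_cast hi) Y)
      exact Subsingleton.elim _ _
    exact h' (hasProjectiveDimensionLT_of_ge _ (d + 1) q hdq)

end ProjDim

section ShortExact
open CategoryTheory

variable {R : Type} [CommRing R] {L M N : Type} [AddCommGroup L] [AddCommGroup M] [AddCommGroup N]
  [Module R L] [Module R M] [Module R N]

theorem shortExact_moduleCat (i : L →ₗ[R] M) (f : M →ₗ[R] N) (hi : Function.Injective i)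
    (hf : Function.Surjective f) (hex : Function.Exact i f) :
    (ShortComplex.mk (ModuleCat.ofHom i) (ModuleCat.ofHom f)
      (by ext x; exact hex.apply_apply_eq_zero x)).ShortExact where
  exact := by
    rw [ShortComplex.moduleCat_exact_iff]
    intro x hx
    exact (hex x).1 hx
  mono_f := by rw [ModuleCat.mono_iff_injective]; exact hi
  epi_g := by rw [ModuleCat.epi_iff_surjective]; exact hf

variable (i : L →ₗ[R] M) (f : M →ₗ[R] N) (hi : Function.Injective i)
    (hf : Function.Surjective f) (hex : Function.Exact i f) (n : ℕ)
include hi hf hex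

theorem hasProjectiveDimensionLT_left
    (hM : HasProjectiveDimensionLT (ModuleCat.of R M) n)
    (hN : HasProjectiveDimensionLT (ModuleCat.of R N) (n + 1)) :
    HasProjectiveDimensionLT (ModuleCat.of R L) n :=
  (shortExact_moduleCat i f hi hf hex).hasProjectiveDimensionLT_X₁ n hM hN

theorem hasProjectiveDimensionLT_middle
    (hL : HasProjectiveDimensionLT (ModuleCat.of R L) n)
    (hN : HasProjectiveDimensionLT (ModuleCat.of R N) n) :
    HasProjectiveDimensionLT (ModuleCat.of R M) n :=
  (shortExact_moduleCat i f hi hf hex).hasProjectiveDimensionLT_X₂ n hL hN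

theorem hasProjectiveDimensionLT_right
    (hL : HasProjectiveDimensionLT (ModuleCat.of R L) n)
    (hM : HasProjectiveDimensionLT (ModuleCat.of R M) (n + 1)) :
    HasProjectiveDimensionLT (ModuleCat.of R N) (n + 1) :=
  (shortExact_moduleCat i f hi hf hex).hasProjectiveDimensionLT_X₃ n hL hM

omit hi hf hex in
theorem hasProjectiveDimensionLT_one_iff :
    HasProjectiveDimensionLT (ModuleCat.of R M) 1 ↔ Module.Projective R M := by
  rw [IsProjective.iff_projective, projective_iff_hasProjectiveDimensionLT_one]

omit hi hf hex in
theorem hasProjectiveDimensionLT_of_projective {n : ℕ} [Module.Projective R M] (hn : 1 ≤ n) :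
    HasProjectiveDimensionLT (ModuleCat.of R M) n :=
  have := (hasProjectiveDimensionLT_one_iff (R := R) (M := M)).2 inferInstance
  hasProjectiveDimensionLT_of_ge _ 1 n hn

omit hi hf hex in
theorem hasProjectiveDimensionLT_of_linearEquiv (e : M ≃ₗ[R] N)
    (h : HasProjectiveDimensionLT (ModuleCat.of R M) n) :
    HasProjectiveDimensionLT (ModuleCat.of R N) n := by
  have : (ModuleCat.of R M) ≅ (ModuleCat.of R N) := e.toModuleIso
  exact hasProjectiveDimensionLT_of_iso this n

end ShortExact

section Contraction
variable {ι : Type*} [LinearOrder ι] [Fintype ι] {M : Type*} [AddCommGroup M]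

/-- The simplicial boundary of a function on finite subsets of `ι`, dual to `cobd`. -/
def bdry (φ : Finset ι → M) (S : Finset ι) : M :=
  ∑ k, coneAt k φ S

theorem sum_smul_bdry {A : Type*} [Ring A] [Module A M] (c : Finset ι → A) (φ : Finset ι → M) :
    ∑ S, c S • bdry φ S = ∑ S, cobd c S • φ S := by
  have h1 : ∀ S, c S • bdry φ S = ∑ k ∈ Sᶜ, c S • ksgn k S • φ (insert k S) := by
    intro S
    rw [bdry, ← Finset.sum_compl_add_sum S, Finset.smul_sum.symm, smul_add,
      Finset.sum_eq_zero (s := S) (fun k hk => by simp [coneAt, hk]), smul_zero, add_zero]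
    congr 1
    exact Finset.sum_congr rfl fun k hk => by
      rw [coneAt, if_neg (Finset.mem_compl.1 hk)]
  simp only [h1, cobd, Finset.sum_smul]
  rw [Finset.sum_sigma', Finset.sum_sigma']
  refine Finset.sum_bij' (fun p _ => ⟨insert p.2 p.1, p.2⟩) (fun p _ => ⟨p.1.erase p.2, p.2⟩)
    ?_ ?_ ?_ ?_ ?_
  · rintro ⟨S, k⟩ h; simp
  · rintro ⟨S, k⟩ h; simp
  · rintro ⟨S, k⟩ h
    simp only [Finset.mem_sigma, Finset.mem_univ, true_and, Finset.mem_compl] at h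
    simp [Finset.erase_insert h]
  · rintro ⟨S, k⟩ h
    simp only [Finset.mem_sigma, Finset.mem_univ, true_and] at h
    simp [Finset.insert_erase h]
  · rintro ⟨S, k⟩ h
    simp only [Finset.mem_sigma, Finset.mem_univ, true_and, Finset.mem_compl] at h
    simp only [Finset.erase_insert h, ksgn_insert_self]
    rw [smul_assoc, smul_comm]

theorem bdry_bdry (φ : Finset ι → M) : bdry (bdry φ) = 0 := by
  classical
  ext S
  have := sum_smul_bdry (Pi.single S (1 : ℤ)) (bdry φ)
  rw [sum_smul_bdry (cobd _), cobd_cobd] at this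
  simpa [Pi.single_apply] using this

theorem bdry_add (φ ψ : Finset ι → M) : bdry (φ + ψ) = bdry φ + bdry ψ := by
  ext S
  simp only [bdry, Pi.add_apply, ← Finset.sum_add_distrib]
  refine Finset.sum_congr rfl fun k _ => ?_
  unfold coneAt
  split_ifs <;> simp

theorem bdry_smul {A : Type*} [Ring A] [Module A M] (r : A) (φ : Finset ι → M) :
    bdry (r • φ) = r • bdry φ := by
  ext S
  simp only [bdry, Pi.smul_apply, Finset.smul_sum]
  refine Finset.sum_congr rfl fun k _ => ?_
  unfold coneAt
  split_ifs
  · simp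
  · rw [smul_comm]; rfl

theorem sum_apply_bdry {M' : Type*} [AddCommGroup M'] {A : Type*} [Ring A] [Module A M']
    (c : Finset ι → A) (θ : M →+ M') (φ : Finset ι → M) :
    ∑ S, c S • θ (bdry φ S) = ∑ S, cobd c S • θ (φ S) := by
  rw [← sum_smul_bdry]
  refine Finset.sum_congr rfl fun S _ => ?_
  simp only [bdry, map_sum]
  congr 1
  refine Finset.sum_congr rfl fun k _ => ?_
  unfold coneAt
  split_ifs <;> simp

/-- The homotopy built from a family of projections `p k`. -/
def htpy (p : ι → M →+ M) (φ : Finset ι → M) (S : Finset ι) : M :=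
  ∑ k ∈ S, ksgn k S • p k (φ (S.erase k))

theorem bdry_htpy (p : ι → M →+ M) (φ : Finset ι → M) (S : Finset ι) :
    bdry (htpy p φ) S + htpy p (bdry φ) S = ∑ k, p k (φ S) := by
  have h1 : ∀ T, htpy p φ T = ∑ k, if k ∈ T then ksgn k T • p k (φ (T.erase k)) else 0 := by
    intro T; rw [htpy, Finset.sum_ite_mem, Finset.univ_inter]
  have h2 : bdry (htpy p φ) S = ∑ k, ∑ j, coneAt j
      (fun T => if k ∈ T then ksgn k T • p k (φ (T.erase k)) else 0) S := by
    rw [Finset.sum_comm]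
    refine Finset.sum_congr rfl fun j _ => ?_
    unfold coneAt
    split_ifs with hj
    · simp
    · rw [h1, Finset.smul_sum]
  have h3 : htpy p (bdry φ) S =
      ∑ k, ∑ j, if k ∈ S then ksgn k S • coneAt j (fun T => p k (φ T)) (S.erase k) else 0 := by
    rw [htpy, ← Finset.univ_inter S, ← Finset.sum_ite_mem]
    refine Finset.sum_congr rfl fun k _ => ?_
    simp only [Finset.univ_inter]
    split_ifs with hk
    · rw [bdry, map_sum, Finset.smul_sum]
      refine Finset.sum_congr rfl fun j _ => ?_
      unfold coneAt
      split_ifs <;> simp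
    · simp
  rw [h2, h3, ← Finset.sum_add_distrib]
  refine Finset.sum_congr rfl fun k _ => ?_
  rw [← Finset.sum_add_distrib, Finset.sum_eq_single_of_mem k (Finset.mem_univ k)]
  · by_cases hk : k ∈ S
    · simp [coneAt, hk, Finset.insert_erase hk, smul_smul, ksgn_erase_self, ksgn_mul_self]
    · simp [coneAt, hk, smul_smul, ksgn_insert_self, ksgn_mul_self]
  · intro j _ hjk
    by_cases hj : j ∈ S
    · simp [coneAt, hj, hjk]
    · by_cases hk : k ∈ S
      · have h1 : insert j (S.erase k) = (insert j S).erase k := by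
          ext i; simp; grind
        have := ksgn_mul_ksgn (S := insert j S) (Finset.mem_insert_of_mem hk)
          (Finset.mem_insert_self j S) (Ne.symm hjk)
        rw [Finset.erase_insert hj, ksgn_insert_self, ← h1, ksgn_insert_self] at this
        simp only [coneAt, hj, if_false, Finset.mem_insert, hk, or_true, if_true,
          Finset.mem_erase, and_false, smul_smul, ← h1]
        rw [← add_smul, this, mul_comm (ksgn k S)]
        simp
      · simp [coneAt, hj, hk, Ne.symm hjk]

end Contraction

section Taylor
variable {K σ ι : Type} [Field K] [Fintype σ] [LinearOrder ι] [Fintype ι] (a b : ι → σ)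

open Classical in
/-- The exponent of the least common multiple of the edges in `S`. -/
noncomputable def edgeExp (S : Finset ι) : σ →₀ ℕ :=
  Finsupp.equivFunOnFinite.symm fun v => if ∃ k ∈ S, EdgeInc a b k v then 1 else 0

theorem edgeExp_le_iff {S : Finset ι} {d : σ →₀ ℕ} :
    edgeExp a b S ≤ d ↔ ∀ k ∈ S, d (a k) ≠ 0 ∧ d (b k) ≠ 0 := by
  classical
  constructor
  · intro h k hk
    have h1 := h (a k)
    have h2 := h (b k)
    simp only [edgeExp, Finsupp.equivFunOnFinite_symm_apply_apply] at h1 h2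
    rw [if_pos ⟨k, hk, Or.inl rfl⟩] at h1
    rw [if_pos ⟨k, hk, Or.inr rfl⟩] at h2
    omega
  · intro h v
    simp only [edgeExp, Finsupp.equivFunOnFinite_symm_apply_apply]
    split_ifs with hv
    · obtain ⟨k, hk, rfl | rfl⟩ := hv
      · have := h k hk; omega
      · have := h k hk; omega
    · omega

variable (K) in
/-- The edge ideal of the graph with edges `a k, b k`. -/
noncomputable def edgeIdeal : Ideal (MvPolynomial σ K) :=
  Ideal.span (Set.range fun k => X (a k) * X (b k))

variable (K) in
/-- The least common multiple of the edges in `S`, as a monomial. -/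
noncomputable def edgeMon (S : Finset ι) : MvPolynomial σ K := monomial (edgeExp a b S) 1

theorem edgeMon_dvd_iff {S : Finset ι} {r : MvPolynomial σ K} :
    edgeMon K a b S ∣ r ↔ ∀ d ∈ r.support, ∀ k ∈ S, d (a k) ≠ 0 ∧ d (b k) ≠ 0 := by
  rw [← Ideal.mem_span_singleton, edgeMon]
  have := mem_ideal_span_monomial_image (x := r) (s := {edgeExp a b S})
  rw [Set.image_singleton] at this
  rw [this]
  simp [edgeExp_le_iff]

variable {a b} in
theorem edge_eq (hab : ∀ k, a k ≠ b k) (k : ι) :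
    (X (a k) * X (b k) : MvPolynomial σ K) = edgeMon K a b {k} := by
  classical
  rw [edgeMon, X, X, monomial_mul, one_mul]
  refine congrArg (fun d => monomial d (1 : K)) (Finsupp.ext fun v => ?_)
  simp only [edgeExp, Finsupp.equivFunOnFinite_symm_apply_apply, Finsupp.add_apply,
    Finsupp.single_apply, Finset.mem_singleton, exists_eq_left, EdgeInc]
  have := hab k
  by_cases h1 : a k = v
  · subst h1; simp [Ne.symm this]
  · by_cases h2 : b k = v
    · subst h2; simp [this]
    · simp [h1, h2, Ne.symm h1, Ne.symm h2]

variable {a b} in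
theorem mem_edgeIdeal_iff (hab : ∀ k, a k ≠ b k) {r : MvPolynomial σ K} :
    r ∈ edgeIdeal K a b ↔ ∀ d ∈ r.support, ∃ k, d (a k) ≠ 0 ∧ d (b k) ≠ 0 := by
  have := mem_ideal_span_monomial_image (x := r)
    (s := Set.range fun k => edgeExp a b {k})
  rw [← Set.range_comp] at this
  rw [edgeIdeal]
  simp only [edge_eq hab]
  refine Iff.trans this ?_
  simp [edgeExp_le_iff]

open Classical in
/-- A choice of an edge dividing the monomial with exponent `d`. -/
noncomputable def pickEdge (d : σ →₀ ℕ) : Option ι :=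
  if h : ∃ k, d (a k) ≠ 0 ∧ d (b k) ≠ 0 then some h.choose else none

theorem pickEdge_spec {d : σ →₀ ℕ} {k : ι} (h : pickEdge a b d = some k) :
    d (a k) ≠ 0 ∧ d (b k) ≠ 0 := by
  unfold pickEdge at h
  split_ifs at h with h'
  rw [← Option.some.inj h]
  exact h'.choose_spec

variable (K) in
/-- The projection onto the monomials whose chosen edge is `k`. -/
noncomputable def edgeProj (k : ι) : MvPolynomial σ K →ₗ[K] MvPolynomial σ K :=
  (basisMonomials σ K).constr K fun d => if pickEdge a b d = some k then monomial d 1 else 0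

theorem edgeProj_monomial (k : ι) (d : σ →₀ ℕ) (x : K) :
    edgeProj K a b k (monomial d x) = if pickEdge a b d = some k then monomial d x else 0 := by
  have h : monomial d x = x • basisMonomials σ K d := by simp [smul_monomial]
  rw [h, map_smul, edgeProj, Module.Basis.constr_basis]
  split_ifs
  · simp
  · simp

variable {a b} in
theorem sum_edgeProj (hab : ∀ k, a k ≠ b k) {r : MvPolynomial σ K}
    (hr : r ∈ edgeIdeal K a b) : ∑ k, edgeProj K a b k r = r := by
  rw [mem_edgeIdeal_iff hab] at hr
  conv_lhs => enter [2, k]; rw [← support_sum_monomial_coeff r]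
  conv_rhs => rw [← support_sum_monomial_coeff r]
  simp only [map_sum]
  rw [Finset.sum_comm]
  refine Finset.sum_congr rfl fun d hd => ?_
  simp only [edgeProj_monomial]
  obtain ⟨k, hk⟩ : ∃ k, pickEdge a b d = some k := ⟨_, dif_pos (hr d hd)⟩
  simp [hk]

theorem edgeMon_dvd_edgeProj {S : Finset ι} {r : MvPolynomial σ K} (k : ι)
    (hr : edgeMon K a b S ∣ r) : edgeMon K a b (insert k S) ∣ edgeProj K a b k r := by
  rw [edgeMon_dvd_iff] at hr
  rw [← support_sum_monomial_coeff r, map_sum]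
  refine Finset.dvd_sum fun d hd => ?_
  rw [edgeProj_monomial]
  split_ifs with h
  · rw [edgeMon_dvd_iff]
    intro d' hd' j hj
    rw [Finset.mem_singleton.1 (support_monomial_subset hd')]
    rcases Finset.mem_insert.1 hj with rfl | hj
    · exact pickEdge_spec a b h
    · exact hr d hd j hj
  · exact dvd_zero _

variable (K) in
/-- The terms of the Taylor complex, as multihomogeneous submodules. -/
noncomputable def taylor (i : ℕ) :
    Submodule (MvPolynomial σ K) (Finset ι → MvPolynomial σ K) where
  carrier := {φ | ∀ S, edgeMon K a b S ∣ φ S ∧ (φ S ≠ 0 → S.card = i)}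
  add_mem' := by
    intro φ ψ h h' S
    refine ⟨dvd_add (h S).1 (h' S).1, fun hS => ?_⟩
    by_cases h0 : φ S = 0
    · exact (h' S).2 fun h1 => hS (by simp [h0, h1])
    · exact (h S).2 h0
  zero_mem' := fun S => by simp
  smul_mem' := by
    intro r φ h S
    refine ⟨Dvd.dvd.mul_left (h S).1 r, fun hS => (h S).2 fun h0 => hS (by simp [h0])⟩

/-- The boundary as a linear map. -/
def bdryLin (R ι : Type) [CommRing R] [LinearOrder ι] [Fintype ι] :
    (Finset ι → R) →ₗ[R] (Finset ι → R) where
  toFun := bdry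
  map_add' := bdry_add
  map_smul' := bdry_smul

variable (K) in
/-- The syzygies in the Taylor complex. -/
noncomputable def taylorSyz (i : ℕ) :
    Submodule (MvPolynomial σ K) (Finset ι → MvPolynomial σ K) where
  carrier := {φ | φ ∈ taylor K a b i ∧ bdry φ = 0 ∧ ∀ S, φ S ∈ edgeIdeal K a b}
  add_mem' := by
    intro φ ψ h h'
    refine ⟨add_mem h.1 h'.1, by rw [bdry_add, h.2.1, h'.2.1, add_zero], fun S =>
      add_mem (h.2.2 S) (h'.2.2 S)⟩
  zero_mem' := ⟨zero_mem _, (bdryLin _ _).map_zero, fun _ => zero_mem _⟩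
  smul_mem' := by
    intro r φ h
    exact ⟨Submodule.smul_mem _ _ h.1, by rw [bdry_smul, h.2.1, smul_zero], fun S =>
      Ideal.mul_mem_left _ _ (h.2.2 S)⟩

theorem edgeExp_mono {S T : Finset ι} (h : S ⊆ T) : edgeMon K a b S ∣ edgeMon K a b T := by
  rw [edgeMon_dvd_iff]
  intro d hd k hk
  rw [Finset.mem_singleton.1 (support_monomial_subset hd)]
  exact (edgeExp_le_iff a b).1 le_rfl k (h hk)

theorem bdry_mem_taylor {i : ℕ} {φ : Finset ι → MvPolynomial σ K}
    (h : φ ∈ taylor K a b (i + 1)) : bdry φ ∈ taylor K a b i := by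
  intro S
  refine ⟨Finset.dvd_sum fun k _ => ?_, fun hS => ?_⟩
  · unfold coneAt
    split_ifs
    · exact dvd_zero _
    · exact dvd_smul_of_dvd _ ((edgeExp_mono a b (Finset.subset_insert k S)).trans (h _).1)
  · obtain ⟨k, -, hk⟩ := Finset.exists_ne_zero_of_sum_ne_zero hS
    obtain ⟨h1, h2⟩ := ne_zero_of_coneAt_ne_zero hk
    have := (h _).2 h2
    rw [Finset.card_insert_of_notMem h1] at this
    omega

variable (K) in
/-- The contracting homotopy of the Taylor complex. -/
noncomputable def taylorHtpy (φ : Finset ι → MvPolynomial σ K) : Finset ι → MvPolynomial σ K :=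
  htpy (fun k => (edgeProj K a b k).toAddMonoidHom) φ

theorem taylorHtpy_mem {i : ℕ} {φ : Finset ι → MvPolynomial σ K}
    (h : φ ∈ taylor K a b i) : taylorHtpy K a b φ ∈ taylor K a b (i + 1) := by
  intro S
  refine ⟨Finset.dvd_sum fun k hk => dvd_smul_of_dvd _ ?_, fun hS => ?_⟩
  · have := edgeMon_dvd_edgeProj a b k (h (S.erase k)).1
    rwa [Finset.insert_erase hk] at this
  · obtain ⟨k, hk, h0⟩ := Finset.exists_ne_zero_of_sum_ne_zero hS
    have := (h (S.erase k)).2 fun h1 => h0 (by rw [h1]; simp)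
    rw [Finset.card_erase_of_mem hk] at this
    have := Finset.card_pos.2 ⟨k, hk⟩
    omega

variable {a b}

theorem taylor_mem_edgeIdeal (hab : ∀ k, a k ≠ b k) {i : ℕ} {φ : Finset ι → MvPolynomial σ K}
    (h : φ ∈ taylor K a b (i + 1)) (S : Finset ι) : φ S ∈ edgeIdeal K a b := by
  by_cases h0 : φ S = 0
  · rw [h0]; exact zero_mem _
  · obtain ⟨k, hk⟩ : S.Nonempty := Finset.card_pos.1 (by rw [(h S).2 h0]; omega)
    rw [mem_edgeIdeal_iff hab]
    intro d hd
    exact ⟨k, (edgeMon_dvd_iff a b).1 (h S).1 d hd k hk⟩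

theorem bdry_taylorHtpy (hab : ∀ k, a k ≠ b k) {φ : Finset ι → MvPolynomial σ K}
    (h : ∀ S, φ S ∈ edgeIdeal K a b) :
    bdry (taylorHtpy K a b φ) + taylorHtpy K a b (bdry φ) = φ := by
  ext1 S
  refine (bdry_htpy _ φ S).trans ?_
  exact sum_edgeProj hab (h S)

theorem taylorHtpy_zero : taylorHtpy K a b 0 = 0 := by
  ext1 S; simp [taylorHtpy, htpy]

theorem bdry_mem_taylorSyz (hab : ∀ k, a k ≠ b k) {i : ℕ} {φ : Finset ι → MvPolynomial σ K}
    (h : φ ∈ taylor K a b (i + 1)) : bdry φ ∈ taylorSyz K a b i := by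
  refine ⟨bdry_mem_taylor a b h, bdry_bdry φ, fun S => Ideal.sum_mem _ fun k _ => ?_⟩
  unfold coneAt
  split_ifs
  · exact zero_mem _
  · exact Submodule.smul_of_tower_mem _ _ (taylor_mem_edgeIdeal hab h _)

theorem taylor_projective (i : ℕ) : Module.Projective (MvPolynomial σ K) (taylor K a b i) := by
  classical
  let f : ({S : Finset ι // S.card = i} → MvPolynomial σ K) →ₗ[MvPolynomial σ K]
      taylor K a b i :=
    { toFun := fun r => ⟨fun S => if h : S.card = i then edgeMon K a b S * r ⟨S, h⟩ else 0, by
        intro S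
        dsimp only
        split_ifs with h
        · exact ⟨dvd_mul_right _ _, fun _ => h⟩
        · exact ⟨dvd_zero _, fun h => absurd rfl h⟩⟩
      map_add' := by
        intro r s; ext1; ext1 S
        simp only [Submodule.coe_add, Pi.add_apply]
        split_ifs
        · ring
        · simp
      map_smul' := by
        intro r s; ext1; ext1 S
        simp only [Submodule.coe_smul, Pi.smul_apply, smul_eq_mul, RingHom.id_apply]
        split_ifs
        · ring
        · simp }
  have hf : Function.Bijective f := by
    constructor
    · intro r s hrs
      ext1 ⟨S, hS⟩
      have := congrFun (congrArg Subtype.val hrs) S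
      simp only [f, LinearMap.coe_mk, AddHom.coe_mk, dif_pos hS] at this
      refine mul_left_cancel₀ ?_ this
      simp [edgeMon]
    · rintro ⟨φ, hφ⟩
      choose g hg using fun S => (hφ S).1
      refine ⟨fun S => g S.1, ?_⟩
      ext1; ext1 S
      simp only [f, LinearMap.coe_mk, AddHom.coe_mk]
      split_ifs with h
      · exact (hg S).symm
      · by_contra h0
        exact h ((hφ S).2 (Ne.symm h0))
  exact Module.Projective.of_equiv (LinearEquiv.ofBijective f hf)

/-- The boundary from a Taylor module onto the next syzygy module. -/
noncomputable def taylorBdry (hab : ∀ k, a k ≠ b k) (i : ℕ) :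
    taylor K a b (i + 1) →ₗ[MvPolynomial σ K] taylorSyz K a b i :=
  ((bdryLin _ _).comp (Submodule.subtype _)).codRestrict _
    fun φ => bdry_mem_taylorSyz hab φ.2

theorem taylorBdry_surjective (hab : ∀ k, a k ≠ b k) (i : ℕ) :
    Function.Surjective (taylorBdry (K := K) hab i) := by
  rintro ⟨φ, h1, h2, h3⟩
  refine ⟨⟨taylorHtpy K a b φ, taylorHtpy_mem a b h1⟩, Subtype.ext ?_⟩
  have := bdry_taylorHtpy hab h3
  rwa [h2, taylorHtpy_zero, add_zero] at this

open CategoryTheory in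
theorem taylorSyz_hasProjectiveDimensionLT (hab : ∀ k, a k ≠ b k) (i n : ℕ)
    (h : HasProjectiveDimensionLT (ModuleCat.of (MvPolynomial σ K) (taylorSyz K a b i)) (n + 2)) :
    HasProjectiveDimensionLT (ModuleCat.of (MvPolynomial σ K) (taylorSyz K a b (i + 1))) (n + 1) := by
  have hle : taylorSyz K a b (i + 1) ≤ taylor K a b (i + 1) := fun φ h => h.1
  refine hasProjectiveDimensionLT_left (Submodule.inclusion hle) (taylorBdry hab i)
    (Submodule.inclusion_injective hle) (taylorBdry_surjective hab i) ?_ (n + 1) ?_ h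
  · intro φ
    constructor
    · intro h
      exact ⟨⟨φ.1, φ.2, congrArg Subtype.val h, taylor_mem_edgeIdeal hab φ.2⟩, rfl⟩
    · rintro ⟨ψ, rfl⟩
      exact Subtype.ext ψ.2.2.1
  · have := taylor_projective (K := K) (a := a) (b := b) (i + 1)
    exact hasProjectiveDimensionLT_of_projective (by omega)

open CategoryTheory in
theorem taylorSyz_zero_hasProjectiveDimensionLT (n : ℕ)
    (h : HasProjectiveDimensionLT (ModuleCat.of (MvPolynomial σ K) (MvPolynomial σ K ⧸ edgeIdeal K a b)) (n + 2)) :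
    HasProjectiveDimensionLT (ModuleCat.of (MvPolynomial σ K) (taylorSyz K a b 0)) (n + 1) := by
  have hI : HasProjectiveDimensionLT (ModuleCat.of (MvPolynomial σ K) (edgeIdeal K a b)) (n + 1) := by
    refine hasProjectiveDimensionLT_left (Submodule.subtype _) (Submodule.mkQ _)
      (Submodule.subtype_injective _) (Submodule.mkQ_surjective _) ?_ (n + 1) ?_ h
    · exact LinearMap.exact_subtype_mkQ _
    · exact hasProjectiveDimensionLT_of_projective (by omega)
  let f : taylorSyz K a b 0 →ₗ[MvPolynomial σ K] edgeIdeal K a b :=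
    ((LinearMap.proj ∅).comp (Submodule.subtype _)).codRestrict _ fun φ => φ.2.2.2 ∅
  refine hasProjectiveDimensionLT_of_linearEquiv (n + 1) (LinearEquiv.ofBijective f ?_).symm hI
  have hz : ∀ φ ∈ taylorSyz K a b 0, ∀ S ≠ ∅, φ S = 0 := by
    intro φ h S hS
    by_contra h0
    exact hS (Finset.card_eq_zero.1 ((h.1 S).2 h0))
  constructor
  · intro φ ψ h
    ext1; ext1 S
    by_cases hS : S = ∅
    · rw [hS]; exact congrArg Subtype.val h
    · rw [hz _ φ.2 S hS, hz _ ψ.2 S hS]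
  · rintro ⟨r, hr⟩
    classical
    refine ⟨⟨Pi.single ∅ r, ?_, ?_, ?_⟩, Subtype.ext (by
      change (Pi.single ∅ r : Finset ι → MvPolynomial σ K) ∅ = r; simp)⟩
    · intro S
      by_cases hS : S = ∅
      · subst hS
        rw [edgeMon_dvd_iff]
        simp
      · simp [hS]
    · ext1 S
      refine Finset.sum_eq_zero fun k _ => ?_
      unfold coneAt
      split_ifs
      · rfl
      · simp
    · intro S
      by_cases hS : S = ∅
      · subst hS; simpa using hr
      · simp [hS]

end Taylor

section TaylorLowerBound
open CategoryTheory
variable {K σ ι : Type} [Field K] [Fintype σ] [LinearOrder ι] [Fintype ι] {a b : ι → σ}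

theorem taylorSyz_hasProjectiveDimensionLT_one (hab : ∀ k, a k ≠ b k) (n : ℕ)
    (h : HasProjectiveDimensionLT
      (ModuleCat.of (MvPolynomial σ K) (MvPolynomial σ K ⧸ edgeIdeal K a b)) (n + 2)) :
    Module.Projective (MvPolynomial σ K) (taylorSyz K a b n) := by
  have : ∀ i j, i + j = n → HasProjectiveDimensionLT
      (ModuleCat.of (MvPolynomial σ K) (taylorSyz K a b i)) (j + 1) := by
    intro i
    induction i with
    | zero =>
      intro j hj
      obtain rfl : j = n := by omega
      exact taylorSyz_zero_hasProjectiveDimensionLT _ h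
    | succ i ih =>
      intro j hj
      exact taylorSyz_hasProjectiveDimensionLT hab i j (ih (j + 1) (by omega))
  exact hasProjectiveDimensionLT_one_iff.1 (this n 0 rfl)

variable (K) in
open Classical in
/-- The sum of the coefficients of the monomials that have exponent one at every vertex of `W`. -/
noncomputable def onesCoeff (W : σ → Prop) : MvPolynomial σ K →ₗ[K] K :=
  (basisMonomials σ K).constr K fun d => if ∀ w, W w → d w = 1 then 1 else 0

variable (K) in
open Classical in
/-- Evaluation at the indicator function of the complement of `W`. -/
noncomputable def evalOff (W : σ → Prop) : MvPolynomial σ K →+* K :=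
  eval fun v => if W v then 0 else 1

theorem onesCoeff_monomial (W : σ → Prop) (d : σ →₀ ℕ) (x : K) [Decidable (∀ w, W w → d w = 1)] :
    onesCoeff K W (monomial d x) = if ∀ w, W w → d w = 1 then x else 0 := by
  have h : monomial d x = x • basisMonomials σ K d := by simp [smul_monomial]
  rw [h, map_smul, onesCoeff, Module.Basis.constr_basis]
  split_ifs <;> simp

theorem evalOff_monomial (W : σ → Prop) (d : σ →₀ ℕ) (x : K) [Decidable (∀ w, W w → d w = 0)] :
    evalOff K W (monomial d x) = if ∀ w, W w → d w = 0 then x else 0 := by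
  classical
  rw [evalOff, eval_monomial]
  split_ifs with h
  · rw [Finsupp.prod, Finset.prod_eq_one, mul_one]
    intro v hv
    rw [if_neg fun hw => Finsupp.mem_support_iff.1 hv (h v hw), one_pow]
  · push Not at h
    obtain ⟨w, hw, hd⟩ := h
    rw [Finsupp.prod, Finset.prod_eq_zero (Finsupp.mem_support_iff.2 hd), mul_zero]
    rw [if_pos hw, zero_pow hd]

theorem onesCoeff_edgeMon_mul {W : σ → Prop} {S : Finset ι}
    (hS : Covers (EdgeInc a b) (fun _ => True) W S) (r : MvPolynomial σ K) :
    onesCoeff K W (edgeMon K a b S * r) = evalOff K W r := by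
  classical
  induction r using MvPolynomial.induction_on' with
  | monomial d x =>
    rw [edgeMon, monomial_mul, one_mul, onesCoeff_monomial, evalOff_monomial]
    refine if_congr (forall₂_congr fun w hw => ?_) rfl rfl
    obtain ⟨k, hk, hkw⟩ := hS.2 w hw
    simp only [edgeExp, Finsupp.add_apply, Finsupp.equivFunOnFinite_symm_apply_apply]
    rw [if_pos ⟨k, hk, hkw⟩]
    omega
  | add p q hp hq => rw [mul_add, map_add, map_add, hp, hq]

theorem onesCoeff_mul_of_dvd {W : σ → Prop} {S : Finset ι}
    (hS : Covers (EdgeInc a b) (fun _ => True) W S) {p : MvPolynomial σ K}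
    (hp : edgeMon K a b S ∣ p) (r : MvPolynomial σ K) :
    onesCoeff K W (r * p) = evalOff K W r * onesCoeff K W p := by
  obtain ⟨p, rfl⟩ := hp
  rw [mul_left_comm, onesCoeff_edgeMon_mul hS, onesCoeff_edgeMon_mul hS, map_mul]

variable (K a b) in
/-- The monomial quotient of the least common multiples of `S` and `S.erase k`. -/
noncomputable def edgeQuot (k : ι) (S : Finset ι) : MvPolynomial σ K :=
  monomial (edgeExp a b S - edgeExp a b (S.erase k)) 1

theorem edgeExp_erase_le (k : ι) (S : Finset ι) : edgeExp a b (S.erase k) ≤ edgeExp a b S :=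
  (edgeExp_le_iff a b).2 fun j hj =>
    (edgeExp_le_iff a b).1 le_rfl j (Finset.mem_of_mem_erase hj)

theorem edgeQuot_mul (k : ι) (S : Finset ι) :
    edgeQuot K a b k S * edgeMon K a b (S.erase k) = edgeMon K a b S := by
  rw [edgeQuot, edgeMon, edgeMon, monomial_mul, one_mul,
    tsub_add_cancel_of_le (edgeExp_erase_le k S)]

open Classical in
theorem evalOff_edgeQuot {W : σ → Prop} (k : ι) {S : Finset ι}
    (hS : Covers (EdgeInc a b) (fun _ => True) W S) :
    evalOff K W (edgeQuot K a b k S) =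
      if Covers (EdgeInc a b) (fun _ => True) W (S.erase k) then 1 else 0 := by
  rw [edgeQuot, evalOff_monomial]
  refine if_congr ?_ rfl rfl
  simp only [Covers, implies_true, true_and]
  refine forall₂_congr fun w hw => ?_
  obtain ⟨j, hj, hjw⟩ := hS.2 w hw
  simp only [edgeExp, Finsupp.coe_tsub, Pi.sub_apply, Finsupp.equivFunOnFinite_symm_apply_apply]
  rw [if_pos ⟨j, hj, hjw⟩]
  split_ifs with h <;> simpa using h

/-- A nonvanishing cochain class obstructs small projective dimension. -/
theorem not_hasProjectiveDimensionLT (hab : ∀ k, a k ≠ b k) {W : σ → Prop} (n : ℕ)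
    (hnv : NonVan K (EdgeInc a b) (fun _ => True) W (n + 2)) :
    ¬ HasProjectiveDimensionLT
      (ModuleCat.of (MvPolynomial σ K) (MvPolynomial σ K ⧸ edgeIdeal K a b)) (n + 2) := by
  classical
  intro h
  have hproj := taylorSyz_hasProjectiveDimensionLT_one hab n h
  obtain ⟨c, hc, hcard, hcc, hcb⟩ := hnv
  have hcc : cobd c = 0 := funext fun S => hcc S fun _ _ => trivial
  obtain ⟨s, hs⟩ := Module.projective_lifting_property (taylorBdry (K := K) hab n) LinearMap.id
    (taylorBdry_surjective hab n)
  -- the complement of the section, as a map to the next syzygies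
  let ρ : taylor K a b (n + 1) →ₗ[MvPolynomial σ K] Finset ι → MvPolynomial σ K :=
    (Submodule.subtype _).comp (LinearMap.id - s.comp (taylorBdry hab n))
  have hρ : ∀ φ, bdry (ρ φ) = 0 := by
    intro φ
    have : taylorBdry hab n (φ - s (taylorBdry hab n φ)) = 0 := by
      have h1 := LinearMap.congr_fun hs (taylorBdry hab n φ)
      simp only [LinearMap.comp_apply, LinearMap.id_apply] at h1
      rw [map_sub, h1, sub_self]
    exact congrArg Subtype.val this
  have hρT : ∀ φ, ρ φ ∈ taylor K a b (n + 1) := fun φ =>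
    (φ - s (taylorBdry hab n φ)).2
  have hρ0 : ∀ φ : taylor K a b (n + 1), bdry φ.1 = 0 → ρ φ = φ := by
    intro φ hφ
    have : taylorBdry hab n φ = 0 := Subtype.ext hφ
    simp [ρ, this]
  let Ψ : (Finset ι → MvPolynomial σ K) → K := fun φ => ∑ S, c S • onesCoeff K W (φ S)
  have hΨ : ∀ φ, Ψ (bdry φ) = 0 := by
    intro φ
    refine (sum_apply_bdry c (onesCoeff K W).toAddMonoidHom φ).trans ?_
    simp [hcc]
  have hΨadd : ∀ φ ψ, Ψ (φ + ψ) = Ψ φ + Ψ ψ := by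
    intro φ ψ
    simp [Ψ, mul_add, Finset.sum_add_distrib]
  have hΨsmul : ∀ (r : MvPolynomial σ K) φ, (∀ S, edgeMon K a b S ∣ φ S) →
      Ψ (r • φ) = evalOff K W r * Ψ φ := by
    intro r φ hφ
    simp only [Ψ, Finset.mul_sum]
    refine Finset.sum_congr rfl fun S _ => ?_
    by_cases hS : c S = 0
    · simp [hS]
    · rw [Pi.smul_apply, smul_eq_mul r, onesCoeff_mul_of_dvd (hc S hS) (hφ S), smul_eq_mul,
        smul_eq_mul, mul_left_comm]
  -- values of `Ψ` on preimages under the boundary are well defined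
  have hwd : ∀ φ ψ, (∀ S, φ S ∈ edgeIdeal K a b) → (∀ S, ψ S ∈ edgeIdeal K a b) →
      bdry φ = bdry ψ → Ψ φ = Ψ ψ := by
    intro φ ψ hφ hψ he
    rw [← bdry_taylorHtpy hab hφ, ← bdry_taylorHtpy hab hψ, hΨadd, hΨadd, hΨ, hΨ, he]
  let χ : taylor K a b (n + 1) → K := fun φ => Ψ (taylorHtpy K a b (ρ φ))
  have hχ : ∀ φ (ψ : Finset ι → MvPolynomial σ K), ψ ∈ taylor K a b (n + 2) →
      bdry ψ = ρ φ → χ φ = Ψ ψ := by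
    intro φ ψ hψ he
    refine hwd _ _ (taylor_mem_edgeIdeal hab (taylorHtpy_mem a b (hρT φ)))
      (taylor_mem_edgeIdeal hab hψ) ?_
    have := bdry_taylorHtpy hab (taylor_mem_edgeIdeal hab (hρT φ))
    rw [hρ, taylorHtpy_zero, add_zero] at this
    rw [this, he]
  have hpre : ∀ φ, bdry (taylorHtpy K a b (ρ φ)) = ρ φ := by
    intro φ
    have := bdry_taylorHtpy hab (taylor_mem_edgeIdeal hab (hρT φ))
    rwa [hρ, taylorHtpy_zero, add_zero] at this
  have hχsmul : ∀ (r : MvPolynomial σ K) φ, χ (r • φ) = evalOff K W r * χ φ := by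
    intro r φ
    have hm := taylorHtpy_mem a b (hρT φ)
    rw [hχ (r • φ) (r • taylorHtpy K a b (ρ φ)) (Submodule.smul_mem _ _ hm)
      (by rw [bdry_smul, hpre, map_smul])]
    exact hΨsmul r _ fun S => (hm S).1
  have hχadd : ∀ φ ψ, χ (φ + ψ) = χ φ + χ ψ := by
    intro φ ψ
    have hm := taylorHtpy_mem a b (hρT φ)
    have hm' := taylorHtpy_mem a b (hρT ψ)
    rw [hχ (φ + ψ) _ (add_mem hm hm') (by rw [bdry_add, hpre, hpre, map_add])]
    exact hΨadd _ _
  let χ' : taylor K a b (n + 1) →+ K := AddMonoidHom.mk' χ hχadd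
  -- the standard generators of the Taylor modules
  let u : Finset ι → Finset ι → MvPolynomial σ K := fun S => Pi.single S (edgeMon K a b S)
  have hu : ∀ S i, S.card = i → u S ∈ taylor K a b i := by
    intro S i hi T
    by_cases hT : T = S
    · subst hT; simp [u, hi]
    · simp [u, hT]
  let b' : Finset ι → K := fun S => if h : S.card = n + 1 then
    (if Covers (EdgeInc a b) (fun _ => True) W S then χ' ⟨u S, hu S _ h⟩ else 0) else 0
  refine hcb b' ?_ fun S _ => ?_
  · intro S hS
    simp only [b'] at hS
    split_ifs at hS with h1 h2
    · exact h2
    · exact absurd rfl hS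
    · exact absurd rfl hS
  by_cases hS : S.card = n + 2
  swap
  · rw [show c S = 0 by by_contra h0; exact hS (hcard S h0)]
    refine Finset.sum_eq_zero fun k hk => ?_
    have : (S.erase k).card ≠ n + 1 := by
      rw [Finset.card_erase_of_mem hk]; have := Finset.card_pos.2 ⟨k, hk⟩; omega
    simp [b', this]
  have hcardE : ∀ k ∈ S, (S.erase k).card = n + 1 := fun k hk => by
    rw [Finset.card_erase_of_mem hk, hS]; rfl
  by_cases hcov : Covers (EdgeInc a b) (fun _ => True) W S
  swap
  · rw [show c S = 0 by by_contra h0; exact hcov (hc S h0)]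
    refine Finset.sum_eq_zero fun k hk => ?_
    have : ¬ Covers (EdgeInc a b) (fun _ => True) W (S.erase k) := fun hh =>
      hcov ⟨fun _ _ => trivial, fun v hv => by
        obtain ⟨j, hj, hjv⟩ := hh.2 v hv
        exact ⟨j, Finset.mem_of_mem_erase hj, hjv⟩⟩
    simp [b', this]
  have hΨu : Ψ (u S) = c S := by
    simp only [Ψ]
    rw [Finset.sum_eq_single_of_mem S (Finset.mem_univ _)]
    · have := onesCoeff_edgeMon_mul (K := K) hcov 1
      rw [mul_one, map_one] at this
      simp [u, this]
    · intro T _ hT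
      simp [u, hT]
  have hbu : bdry (u S) = ((∑ k ∈ S.attach, ksgn k.1 S • edgeQuot K a b k.1 S •
      (⟨u (S.erase k.1), hu _ _ (hcardE k.1 k.2)⟩ : taylor K a b (n + 1)) :
        taylor K a b (n + 1)) : Finset ι → MvPolynomial σ K) := by
    ext1 T
    simp only [Submodule.coe_sum, Finset.sum_apply]
    refine Eq.trans ?_ (Finset.sum_attach S (fun k => ((ksgn k S • edgeQuot K a b k S •
      u (S.erase k) : Finset ι → MvPolynomial σ K) T))).symm
    rw [bdry, ← Finset.univ_inter S,
      ← Finset.sum_ite_mem]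
    refine Finset.sum_congr rfl fun k _ => ?_
    simp only [Finset.univ_inter, Pi.smul_apply, u, coneAt]
    by_cases hk : k ∈ S
    · by_cases hT : T = S.erase k
      · subst hT
        simp [hk, Finset.insert_erase hk, ksgn_erase_self, edgeQuot_mul]
      · have : k ∉ T → insert k T ≠ S := fun hkT e => hT (by rw [← e, Finset.erase_insert hkT])
        by_cases hkT : k ∈ T
        · simp [hT, hkT]
        · simp [hT, hkT, this hkT]
    · have : insert k T ≠ S := fun e => hk (e ▸ Finset.mem_insert_self k T)
      simp [hk, this]
  have h2 := hχ _ (u S) (hu S _ hS) (by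
    rw [hρ0 _ (by rw [← hbu, bdry_bdry]), ← hbu])
  rw [← hΨu, ← h2]
  change _ = χ' _
  rw [map_sum, cobd, ← Finset.sum_attach]
  refine Finset.sum_congr rfl fun k _ => ?_
  rw [map_zsmul]
  congr 1
  refine Eq.trans ?_ (hχsmul _ _).symm
  rw [evalOff_edgeQuot k.1 hcov]
  simp only [b', dif_pos (hcardE k.1 k.2)]
  split_ifs
  · rw [one_mul]; rfl
  · rw [zero_mul]

end TaylorLowerBound

section SuppIdeal
variable {K σ : Type} [Field K]

variable (K) in
/-- The ideal of polynomials all of whose monomials have an exponent satisfying `P`. -/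
def suppIdeal (P : (σ →₀ ℕ) → Prop) (hP : ∀ d e, P d → P (d + e)) :
    Ideal (MvPolynomial σ K) where
  carrier := {r | ∀ d ∈ r.support, P d}
  add_mem' := by
    classical
    intro r s hr hs d hd
    rcases Finset.mem_union.1 (support_add hd) with h | h
    · exact hr d h
    · exact hs d h
  zero_mem' := by simp
  smul_mem' := by
    classical
    intro r s hs d hd
    obtain ⟨e, -, e', he', rfl⟩ := Finset.mem_add.1 (support_mul r s hd)
    rw [add_comm]
    exact hP _ _ (hs e' he')

theorem mem_suppIdeal {P : (σ →₀ ℕ) → Prop} {hP : ∀ d e, P d → P (d + e)}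
    {r : MvPolynomial σ K} : r ∈ suppIdeal K P hP ↔ ∀ d ∈ r.support, P d := Iff.rfl

theorem suppIdeal_congr {P Q : (σ →₀ ℕ) → Prop} {hP : ∀ d e, P d → P (d + e)}
    {hQ : ∀ d e, Q d → Q (d + e)} (h : ∀ d, P d ↔ Q d) : suppIdeal K P hP = suppIdeal K Q hQ := by
  have : P = Q := funext fun d => propext (h d)
  subst this
  rfl

variable {P P₁ P₂ : (σ →₀ ℕ) → Prop} {hP : ∀ d e, P d → P (d + e)}
  {hP₁ : ∀ d e, P₁ d → P₁ (d + e)} {hP₂ : ∀ d e, P₂ d → P₂ (d + e)} {s : σ}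

theorem X_mul_mem_suppIdeal (h₁ : ∀ d, P₁ d ↔ P (d + Finsupp.single s 1))
    {r : MvPolynomial σ K} : X s * r ∈ suppIdeal K P hP ↔ r ∈ suppIdeal K P₁ hP₁ := by
  rw [mem_suppIdeal, mem_suppIdeal, mul_comm, support_mul_X]
  simp [h₁]

theorem exists_of_mem_suppIdeal (h₂ : ∀ d, P₂ d ↔ P d ∨ d s ≠ 0) {r : MvPolynomial σ K}
    (hr : r ∈ suppIdeal K P₂ hP₂) : ∃ r', r - X s * r' ∈ suppIdeal K P hP := by
  classical
  choose! g hg using fun (d : σ →₀ ℕ) (hd : d s ≠ 0) =>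
    exists_add_of_le (Finsupp.single_le_iff.2 (Nat.one_le_iff_ne_zero.2 hd) :
      Finsupp.single s 1 ≤ d)
  refine ⟨∑ d ∈ r.support, if d s ≠ 0 then monomial (g d) (coeff d r) else 0, ?_⟩
  conv => enter [2, 1]; rw [← support_sum_monomial_coeff r]
  rw [Finset.mul_sum, ← Finset.sum_sub_distrib]
  refine Ideal.sum_mem _ fun d hd => ?_
  split_ifs with h
  · rw [X, monomial_mul, one_mul, ← hg d h, sub_self]
    exact zero_mem _
  · rw [mul_zero, sub_zero]
    intro d' hd'
    rw [Finset.mem_singleton.1 (support_monomial_subset hd')]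
    exact ((h₂ d).1 (hr d hd)).resolve_right h

theorem suppIdeal_le (h₂ : ∀ d, P₂ d ↔ P d ∨ d s ≠ 0) :
    suppIdeal K P hP ≤ suppIdeal K P₂ hP₂ :=
  fun _ hr d hd => (h₂ d).2 (Or.inl (hr d hd))

open CategoryTheory

/-- Multiplication by a variable between monomial quotients. -/
noncomputable def mulXQuot (h₁ : ∀ d, P₁ d ↔ P (d + Finsupp.single s 1)) :
    (MvPolynomial σ K ⧸ suppIdeal K P₁ hP₁) →ₗ[MvPolynomial σ K]
      (MvPolynomial σ K ⧸ suppIdeal K P hP) :=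
  Submodule.mapQ (suppIdeal K P₁ hP₁) (suppIdeal K P hP) (LinearMap.mulLeft _ (X s))
    fun _ hr => (X_mul_mem_suppIdeal (hP := hP) h₁).2 hr

/-- The projection onto the quotient in which a further variable vanishes. -/
noncomputable def killXQuot (h₂ : ∀ d, P₂ d ↔ P d ∨ d s ≠ 0) :
    (MvPolynomial σ K ⧸ suppIdeal K P hP) →ₗ[MvPolynomial σ K]
      (MvPolynomial σ K ⧸ suppIdeal K P₂ hP₂) :=
  Submodule.mapQ (suppIdeal K P hP) (suppIdeal K P₂ hP₂) LinearMap.id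
    fun _ hr => suppIdeal_le (hP₂ := hP₂) h₂ hr

theorem mulXQuot_mk (h₁ : ∀ d, P₁ d ↔ P (d + Finsupp.single s 1)) (r : MvPolynomial σ K) :
    mulXQuot (hP := hP) (hP₁ := hP₁) h₁ (Submodule.Quotient.mk r) =
      Submodule.Quotient.mk (X s * r) := rfl

theorem killXQuot_mk (h₂ : ∀ d, P₂ d ↔ P d ∨ d s ≠ 0) (r : MvPolynomial σ K) :
    killXQuot (hP := hP) (hP₂ := hP₂) h₂ (Submodule.Quotient.mk r) =
      Submodule.Quotient.mk r := rfl

theorem mulXQuot_injective (h₁ : ∀ d, P₁ d ↔ P (d + Finsupp.single s 1)) :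
    Function.Injective (mulXQuot (K := K) (hP := hP) (hP₁ := hP₁) h₁) := by
  rw [← LinearMap.ker_eq_bot, LinearMap.ker_eq_bot']
  intro x hx
  obtain ⟨r, rfl⟩ := Submodule.Quotient.mk_surjective _ x
  rw [mulXQuot_mk, Submodule.Quotient.mk_eq_zero] at hx
  exact (Submodule.Quotient.mk_eq_zero _).2 ((X_mul_mem_suppIdeal h₁).1 hx)

theorem killXQuot_surjective (h₂ : ∀ d, P₂ d ↔ P d ∨ d s ≠ 0) :
    Function.Surjective (killXQuot (K := K) (hP := hP) (hP₂ := hP₂) h₂) := by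
  intro x
  obtain ⟨r, rfl⟩ := Submodule.Quotient.mk_surjective _ x
  exact ⟨Submodule.Quotient.mk r, rfl⟩

theorem exact_mulXQuot_killXQuot (h₁ : ∀ d, P₁ d ↔ P (d + Finsupp.single s 1))
    (h₂ : ∀ d, P₂ d ↔ P d ∨ d s ≠ 0) :
    Function.Exact (mulXQuot (K := K) (hP := hP) (hP₁ := hP₁) h₁)
      (killXQuot (K := K) (hP := hP) (hP₂ := hP₂) h₂) := by
  intro x
  obtain ⟨r, rfl⟩ := Submodule.Quotient.mk_surjective _ x
  rw [killXQuot_mk, Submodule.Quotient.mk_eq_zero]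
  constructor
  · intro h
    obtain ⟨r', hr'⟩ := exists_of_mem_suppIdeal (hP := hP) h₂ h
    refine ⟨Submodule.Quotient.mk r', ?_⟩
    rw [mulXQuot_mk]
    refine ((Submodule.Quotient.eq _).2 ?_).symm
    exact hr'
  · rintro ⟨y, hy⟩
    obtain ⟨r', rfl⟩ := Submodule.Quotient.mk_surjective _ y
    rw [mulXQuot_mk] at hy
    have := (Submodule.Quotient.eq _).1 hy.symm
    have h3 := add_mem (suppIdeal_le (hP₂ := hP₂) h₂ this)
      (show LinearMap.mulLeft (MvPolynomial σ K) (X s) r' ∈ suppIdeal K P₂ hP₂ by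
        intro d hd
        change d ∈ (X s * r').support at hd
        rw [mul_comm, support_mul_X] at hd
        obtain ⟨e, -, rfl⟩ := Finset.mem_map.1 hd
        exact (h₂ _).2 (Or.inr (by simp)))
    simpa using h3

theorem hasProjectiveDimensionLT_suppIdeal (h₁ : ∀ d, P₁ d ↔ P (d + Finsupp.single s 1))
    (h₂ : ∀ d, P₂ d ↔ P d ∨ d s ≠ 0) (n : ℕ)
    (hn₁ : HasProjectiveDimensionLT
      (ModuleCat.of (MvPolynomial σ K) (MvPolynomial σ K ⧸ suppIdeal K P₁ hP₁)) n)
    (hn₂ : HasProjectiveDimensionLT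
      (ModuleCat.of (MvPolynomial σ K) (MvPolynomial σ K ⧸ suppIdeal K P₂ hP₂)) n) :
    HasProjectiveDimensionLT
      (ModuleCat.of (MvPolynomial σ K) (MvPolynomial σ K ⧸ suppIdeal K P hP)) n :=
  hasProjectiveDimensionLT_middle _ _ (mulXQuot_injective h₁) (killXQuot_surjective h₂)
    (exact_mulXQuot_killXQuot h₁ h₂) n hn₁ hn₂

theorem hasProjectiveDimensionLT_suppIdeal_succ (h₁ : ∀ d, P d ↔ P (d + Finsupp.single s 1))
    (h₂ : ∀ d, P₂ d ↔ P d ∨ d s ≠ 0) (n : ℕ)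
    (hn : HasProjectiveDimensionLT
      (ModuleCat.of (MvPolynomial σ K) (MvPolynomial σ K ⧸ suppIdeal K P hP)) n) :
    HasProjectiveDimensionLT
      (ModuleCat.of (MvPolynomial σ K) (MvPolynomial σ K ⧸ suppIdeal K P₂ hP₂)) (n + 1) :=
  hasProjectiveDimensionLT_right _ _ (mulXQuot_injective h₁) (killXQuot_surjective h₂)
    (exact_mulXQuot_killXQuot h₁ h₂) n hn (hasProjectiveDimensionLT_of_ge _ n _ (by omega))

end SuppIdeal

section Branching

/-- The graph with edges `E` admits a branching certificate of cost at most `q`: one repeatedly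
branches at a vertex, paying either for its neighbours or for the vertex itself. -/
inductive Branching : (ℕ → ℕ → Prop) → ℕ → Prop
  | nil (E : ℕ → ℕ → Prop) (q : ℕ) (hE : ∀ u v, ¬ E u v) : Branching E q
  | branch (E E₁ E₂ : ℕ → ℕ → Prop) (q q₁ q₂ v w : ℕ) (N : Finset ℕ)
      (hN : ∀ u, (E v u ∨ E u v) ↔ u ∈ N) (hv : v ∉ N) (hw : w ∈ N)
      (hE₁ : ∀ x y, E₁ x y ↔ E x y ∧ x ∉ N ∧ y ∉ N)
      (hE₂ : ∀ x y, E₂ x y ↔ E x y ∧ x ≠ v ∧ y ≠ v)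
      (h₁ : Branching E₁ q₁) (h₂ : Branching E₂ q₂)
      (hq₁ : N.card + q₁ ≤ q) (hq₂ : 1 + q₂ ≤ q) : Branching E q

/-- Exponents divisible by a variable with label in `W` or by an edge of `E`. -/
def LabelPred {σ : Type} (φ : σ → ℕ) (W : Finset ℕ) (E : ℕ → ℕ → Prop) (d : σ →₀ ℕ) : Prop :=
  (∃ s, φ s ∈ W ∧ d s ≠ 0) ∨ ∃ s t, E (φ s) (φ t) ∧ d s ≠ 0 ∧ d t ≠ 0

theorem LabelPred.add {σ : Type} (φ : σ → ℕ) (W : Finset ℕ) (E : ℕ → ℕ → Prop)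
    (d e : σ →₀ ℕ) (h : LabelPred φ W E d) : LabelPred φ W E (d + e) := by
  have h0 : ∀ s, d s ≠ 0 → (d + e) s ≠ 0 := fun s hs => by
    rw [Finsupp.add_apply]; omega
  rcases h with ⟨s, hs, hd⟩ | ⟨s, t, h, hs, ht⟩
  · exact Or.inl ⟨s, hs, h0 s hd⟩
  · exact Or.inr ⟨s, t, h, h0 s hs, h0 t ht⟩

open CategoryTheory

variable {K σ : Type} [Field K] {φ : σ → ℕ}

theorem hasProjectiveDimensionLT_of_no_edges (hφ : Function.Injective φ) {E : ℕ → ℕ → Prop}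
    (hE : ∀ u v, ¬ E u v) (W : Finset ℕ) :
    HasProjectiveDimensionLT (ModuleCat.of (MvPolynomial σ K)
      (MvPolynomial σ K ⧸ suppIdeal K (LabelPred φ W E) (LabelPred.add φ W E))) (W.card + 1) := by
  induction W using Finset.induction_on with
  | empty =>
    have : suppIdeal K (LabelPred φ ∅ E) (LabelPred.add φ ∅ E) = ⊥ := by
      rw [eq_bot_iff]
      intro r hr
      rw [mem_suppIdeal] at hr
      rw [Ideal.mem_bot, ← support_eq_empty, Finset.eq_empty_iff_forall_notMem]
      intro d hd
      have := hr d hd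
      simp [LabelPred, hE] at this
    rw [this]
    have : Module.Projective (MvPolynomial σ K) (MvPolynomial σ K ⧸ (⊥ : Ideal (MvPolynomial σ K))) :=
      Module.Projective.of_equiv (Submodule.quotEquivOfEqBot _ rfl).symm
    exact hasProjectiveDimensionLT_of_projective le_rfl
  | insert w W hw ih =>
    rw [Finset.card_insert_of_notMem hw]
    by_cases h : ∃ s, φ s = w
    · obtain ⟨s, rfl⟩ := h
      refine hasProjectiveDimensionLT_suppIdeal_succ (s := s) (fun d => ?_) (fun d => ?_) _ ih
      · simp only [LabelPred, hE, false_and, exists_false, or_false, Finsupp.add_apply]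
        refine exists_congr fun t => and_congr_right fun ht => ?_
        rw [Finsupp.single_eq_of_ne (by rintro rfl; exact hw ht), add_zero]
      · simp only [LabelPred, hE, false_and, exists_false, or_false, Finset.mem_insert]
        constructor
        · rintro ⟨t, ht | ht, hd⟩
          · exact Or.inr (hφ ht ▸ hd)
          · exact Or.inl ⟨t, ht, hd⟩
        · rintro (⟨t, ht, hd⟩ | hd)
          · exact ⟨t, Or.inr ht, hd⟩
          · exact ⟨s, Or.inl rfl, hd⟩
    · have : suppIdeal K (LabelPred φ (insert w W) E) (LabelPred.add φ _ E) =
          suppIdeal K (LabelPred φ W E) (LabelPred.add φ _ E) := by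
        refine suppIdeal_congr fun d => ?_
        simp only [LabelPred, hE, false_and, exists_false, or_false, Finset.mem_insert]
        exact exists_congr fun t => by
          have : φ t ≠ w := fun e => h ⟨t, e⟩
          simp [this]
      rw [this]
      exact hasProjectiveDimensionLT_of_ge _ (W.card + 1) _ (by omega)

theorem Branching.hasProjectiveDimensionLT (hφ : Function.Injective φ) {E : ℕ → ℕ → Prop} {q : ℕ}
    (h : Branching E q) (W : Finset ℕ) :
    HasProjectiveDimensionLT (ModuleCat.of (MvPolynomial σ K)
      (MvPolynomial σ K ⧸ suppIdeal K (LabelPred φ W E) (LabelPred.add φ W E)))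
      (W.card + q + 1) := by
  induction h generalizing W with
  | nil E q hE =>
    have := hasProjectiveDimensionLT_of_no_edges (K := K) hφ hE W
    exact hasProjectiveDimensionLT_of_ge _ (W.card + 1) _ (by omega)
  | branch E E₁ E₂ q q₁ q₂ v w N hN hv hw hE₁ hE₂ h₁ h₂ hq₁ hq₂ ih₁ ih₂ =>
    by_cases hvW : v ∉ W ∧ ∃ s, φ s = v
    · obtain ⟨hvW, s, rfl⟩ := hvW
      have i₁ := ih₁ (W ∪ N)
      have i₂ := ih₂ (insert (φ s) W)
      have hc := Finset.card_union_le W N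
      have hc' := Finset.card_insert_le (φ s) W
      refine hasProjectiveDimensionLT_suppIdeal (s := s) (fun d : σ →₀ ℕ => ?_)
        (fun d : σ →₀ ℕ => ?_) _
        (@hasProjectiveDimensionLT_of_ge _ _ _ _ _ (W.card + q + 1) (by omega) i₁)
        (@hasProjectiveDimensionLT_of_ge _ _ _ _ _ (W.card + q + 1) (by omega) i₂)
      · have hd : ∀ t, (d + Finsupp.single s 1 : σ →₀ ℕ) t ≠ 0 ↔ d t ≠ 0 ∨ t = s := by
          intro t
          by_cases ht : t = s
          · subst ht; simp
          · simp [Finsupp.single_eq_of_ne ht, ht]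
        simp only [LabelPred, hd, Finset.mem_union, hE₁]
        constructor
        · rintro (⟨t, ht | ht, h0⟩ | ⟨t, t', h, h0, h0'⟩)
          · exact Or.inl ⟨t, ht, Or.inl h0⟩
          · rcases (hN _).2 ht with h | h
            · exact Or.inr ⟨s, t, h, Or.inr rfl, Or.inl h0⟩
            · exact Or.inr ⟨t, s, h, Or.inl h0, Or.inr rfl⟩
          · exact Or.inr ⟨t, t', h.1, Or.inl h0, Or.inl h0'⟩
        · rintro (⟨t, ht, h0 | rfl⟩ | ⟨t, t', h, h0, h0'⟩)
          · exact Or.inl ⟨t, Or.inl ht, h0⟩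
          · exact absurd ht hvW
          by_cases ht : φ t ∈ N
          · rcases h0 with h0 | rfl
            · exact Or.inl ⟨t, Or.inr ht, h0⟩
            · exact absurd ht hv
          by_cases ht' : φ t' ∈ N
          · rcases h0' with h0' | rfl
            · exact Or.inl ⟨t', Or.inr ht', h0'⟩
            · exact absurd ht' hv
          rcases h0 with h0 | rfl
          · rcases h0' with h0' | rfl
            · exact Or.inr ⟨t, t', ⟨h, ht, ht'⟩, h0, h0'⟩
            · exact absurd ((hN _).1 (Or.inr h)) ht
          · exact absurd ((hN _).1 (Or.inl h)) ht'
      · simp only [LabelPred, Finset.mem_insert, hE₂]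
        constructor
        · rintro (⟨t, ht | ht, h0⟩ | ⟨t, t', h, h0, h0'⟩)
          · exact Or.inr (hφ ht ▸ h0)
          · exact Or.inl (Or.inl ⟨t, ht, h0⟩)
          · exact Or.inl (Or.inr ⟨t, t', h.1, h0, h0'⟩)
        · rintro ((⟨t, ht, h0⟩ | ⟨t, t', h, h0, h0'⟩) | h0)
          · exact Or.inl ⟨t, Or.inr ht, h0⟩
          · by_cases ht : φ t = φ s
            · exact Or.inl ⟨t, Or.inl ht, h0⟩
            by_cases ht' : φ t' = φ s
            · exact Or.inl ⟨t', Or.inl ht', h0'⟩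
            exact Or.inr ⟨t, t', ⟨h, ht, ht'⟩, h0, h0'⟩
          · exact Or.inl ⟨s, Or.inl rfl, h0⟩
    · have := ih₂ W
      have he : suppIdeal K (LabelPred φ W E) (LabelPred.add φ _ _) =
          suppIdeal K (LabelPred φ W E₂) (LabelPred.add φ _ _) := by
        refine suppIdeal_congr fun d => ?_
        simp only [LabelPred, hE₂]
        constructor
        · rintro (h | ⟨t, t', h, h0, h0'⟩)
          · exact Or.inl h
          · by_cases ht : φ t = v
            · exact Or.inl ⟨t, by rw [ht]; by_contra hn; exact hvW ⟨hn, t, ht⟩, h0⟩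
            by_cases ht' : φ t' = v
            · exact Or.inl ⟨t', by rw [ht']; by_contra hn; exact hvW ⟨hn, t', ht'⟩, h0'⟩
            exact Or.inr ⟨t, t', ⟨h, ht, ht'⟩, h0, h0'⟩
        · rintro (h | ⟨t, t', h, h0, h0'⟩)
          · exact Or.inl h
          · exact Or.inr ⟨t, t', h.1, h0, h0'⟩
      rw [he]
      exact hasProjectiveDimensionLT_of_ge _ (W.card + q₂ + 1) _ (by omega)

end Branching

section Branching

set_option linter.unusedSimpArgs false

theorem Branching.mono {E : ℕ → ℕ → Prop} {q q' : ℕ} (h : Branching E q) (hq : q ≤ q') :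
    Branching E q' := by
  cases h with
  | nil _ _ hE => exact .nil _ _ hE
  | branch _ E₁ E₂ _ q₁ q₂ v w N hN hv hw hE₁ hE₂ h₁ h₂ hq₁ hq₂ =>
    exact .branch E E₁ E₂ q' q₁ q₂ v w N hN hv hw hE₁ hE₂ h₁ h₂ (by omega) (by omega)

theorem Branching.congr {E E' : ℕ → ℕ → Prop} {q q' : ℕ} (h : Branching E q)
    (hE : ∀ u v, E' u v ↔ E u v) (hq : q ≤ q') : Branching E' q' := by
  have : E' = E := funext fun u => funext fun v => propext (hE u v)
  rw [this]
  exact h.mono hq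

theorem Branching.or {E E' : ℕ → ℕ → Prop} {q q' : ℕ} (h : Branching E q) (h' : Branching E' q')
    (hd : ∀ u v u' v', E u v → E' u' v' → u ≠ u' ∧ u ≠ v' ∧ v ≠ u' ∧ v ≠ v') :
    Branching (fun u v => E u v ∨ E' u v) (q + q') := by
  induction h with
  | nil E q hE => exact h'.congr (fun u v => by simp [hE]) (by omega)
  | branch E E₁ E₂ q q₁ q₂ v w N hN hv hw hE₁ hE₂ h₁ h₂ hq₁ hq₂ ih₁ ih₂ =>
    have hv' : ∀ x y, E' x y → x ≠ v ∧ y ≠ v := fun x y hxy => by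
      rcases (hN w).2 hw with h | h
      · exact ⟨(hd _ _ _ _ h hxy).1.symm, (hd _ _ _ _ h hxy).2.1.symm⟩
      · exact ⟨(hd _ _ _ _ h hxy).2.2.1.symm, (hd _ _ _ _ h hxy).2.2.2.symm⟩
    have hN' : ∀ x y, E' x y → x ∉ N ∧ y ∉ N := fun x y hxy => by
      constructor
      · intro hx
        rcases (hN x).2 hx with h | h
        · exact (hd _ _ _ _ h hxy).2.2.1 rfl
        · exact (hd _ _ _ _ h hxy).1 rfl
      · intro hy
        rcases (hN y).2 hy with h | h
        · exact (hd _ _ _ _ h hxy).2.2.2 rfl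
        · exact (hd _ _ _ _ h hxy).2.1 rfl
    refine .branch _ _ _ _ (q₁ + q') (q₂ + q') v w N (fun u => ?_) hv hw (fun x y => ?_)
      (fun x y => ?_)
      (ih₁ fun u v u' v' h => hd _ _ _ _ ((hE₁ _ _).1 h).1)
      (ih₂ fun u v u' v' h => hd _ _ _ _ ((hE₂ _ _).1 h).1) (by omega) (by omega)
    · rw [← hN]
      constructor
      · rintro ((h | h) | (h | h))
        · exact Or.inl h
        · exact absurd rfl (hv' _ _ h).1
        · exact Or.inr h
        · exact absurd rfl (hv' _ _ h).2
      · rintro (h | h)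
        · exact Or.inl (Or.inl h)
        · exact Or.inr (Or.inl h)
    · rw [hE₁]
      constructor
      · rintro (h | h)
        · exact ⟨Or.inl h.1, h.2⟩
        · exact ⟨Or.inr h, hN' _ _ h⟩
      · rintro ⟨h | h, h'⟩
        · exact Or.inl ⟨h, h'⟩
        · exact Or.inr h
    · rw [hE₂]
      constructor
      · rintro (h | h)
        · exact ⟨Or.inl h.1, h.2⟩
        · exact ⟨Or.inr h, hv' _ _ h⟩
      · rintro ⟨h | h, h'⟩
        · exact Or.inl ⟨h, h'⟩
        · exact Or.inr h

/-- The path on the `j` vertices `lo, …, lo + j - 1`. -/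
def PathE (lo j u v : ℕ) : Prop := v = u + 1 ∧ lo ≤ u ∧ v < lo + j

/-- The cycle on the `n` vertices `lo, …, lo + n - 1`. -/
def CycleE (lo n u v : ℕ) : Prop := PathE lo n u v ∨ u = lo + n - 1 ∧ v = lo

/-- The cycle on `0, …, n - 1` with the path on the `k` vertices `lo, …, lo + k - 1` attached
at `0` by its last vertex. -/
def LolliE (n lo k u v : ℕ) : Prop :=
  CycleE 0 n u v ∨ PathE lo k u v ∨ 0 < k ∧ u = lo + k - 1 ∧ v = 0

/-- Two cycles sharing the vertex `0`. -/
def VertexJoinE (n m u v : ℕ) : Prop :=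
  CycleE 0 n u v ∨ u = 0 ∧ v = n ∨ PathE n (m - 1) u v ∨ u = n + m - 2 ∧ v = 0

/-- Two cycles joined by a path with `k` internal vertices from `n` to `0`. -/
def PathJoinE (n m k u v : ℕ) : Prop :=
  CycleE n m u v ∨ LolliE n (n + m) k u v ∨ 0 < k ∧ u = n ∧ v = n + m ∨ k = 0 ∧ u = n ∧ v = 0

theorem branching_path (lo j : ℕ) : Branching (PathE lo j) (2 * j / 3) := by
  induction j using Nat.strong_induction_on generalizing lo with
  | _ j ih =>
    by_cases h1 : j ≤ 1
    · exact .nil _ _ fun u v => by simp only [PathE]; omega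
    by_cases h2 : j = 2
    · refine .branch _ (PathE lo 0) (PathE lo 0) _ 0 0 lo (lo + 1) {lo + 1} ?_ (by simp) (by simp)
        ?_ ?_ (ih 0 (by omega) _) (ih 0 (by omega) _) (by simp [h2]) (by omega) <;> intros <;>
        simp only [PathE, Finset.mem_singleton] <;> omega
    · have hc := Finset.card_le_two (a := lo) (b := lo + 2)
      refine .branch _ (PathE (lo + 3) (j - 3)) (PathE (lo + 2) (j - 2)) _ _ _ (lo + 1) lo
        {lo, lo + 2} ?_ (by simp) (by simp) ?_ ?_
        (ih (j - 3) (by omega) _) (ih (j - 2) (by omega) _) (by omega) (by omega) <;> intros <;>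
        simp only [PathE, Finset.mem_insert, Finset.mem_singleton] <;> omega

theorem branching_lolli (n lo k q : ℕ) (hn : 3 ≤ n) (hlo : n ≤ lo)
    (h₁ : (if k = 0 then 2 else 3) + 2 * (n - 3) / 3 + 2 * (k - 1) / 3 ≤ q)
    (h₂ : 1 + 2 * (n - 1) / 3 + 2 * k / 3 ≤ q) : Branching (LolliE n lo k) q := by
  have b₁ := (branching_path 2 (n - 3)).or (branching_path lo (k - 1))
    (fun u v u' v' => by simp only [PathE]; omega)
  have b₂ := (branching_path 1 (n - 1)).or (branching_path lo k)
    (fun u v u' v' => by simp only [PathE]; omega)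
  by_cases hk : k = 0
  · have hc := Finset.card_le_two (a := 1) (b := n - 1)
    rw [if_pos hk] at h₁
    refine .branch _ _ _ _ _ _ 0 1 {1, n - 1} (fun u => ?_) (by simp; omega) (by simp)
      (fun x y => ?_) (fun x y => ?_) b₁ b₂ (by omega) (by omega) <;>
      clear h₁ h₂ hc <;>
      simp only [LolliE, CycleE, PathE, Finset.mem_insert, Finset.mem_singleton,
        true_and, and_true, false_and, and_false, true_or, or_true, false_or, or_false]
    · constructor <;> omega
    · constructor
      · rintro (h | h) <;> omega
      · rintro ⟨(h | h) | h | h, h'⟩ <;> omega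
    · constructor
      · rintro (h | h) <;> omega
      · rintro ⟨(h | h) | h | h, h'⟩ <;> omega
  · have hc := Finset.card_le_three (a := 1) (b := n - 1) (c := lo + k - 1)
    rw [if_neg hk] at h₁
    refine .branch _ _ _ _ _ _ 0 1 {1, n - 1, lo + k - 1} (fun u => ?_) (by simp; omega) (by simp)
      (fun x y => ?_) (fun x y => ?_) b₁ b₂ (by omega) (by omega) <;>
      clear h₁ h₂ hc <;>
      simp only [LolliE, CycleE, PathE, Finset.mem_insert, Finset.mem_singleton,
        true_and, and_true, false_and, and_false, true_or, or_true, false_or, or_false]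
    · constructor
      · rintro (((h | h) | h | h) | (h | h) | h | h) <;> omega
      · rintro (h | h | h) <;> omega
    · constructor
      · rintro (h | h) <;> omega
      · rintro ⟨(h | h) | h | h, h'⟩ <;> omega
    · constructor
      · rintro (h | h) <;> omega
      · rintro ⟨(h | h) | h | h, h'⟩ <;> omega

theorem branching_vertexJoin (n m q : ℕ) (hn : 3 ≤ n) (hm : 3 ≤ m)
    (h₁ : 4 + 2 * (n - 3) / 3 + 2 * (m - 3) / 3 ≤ q)
    (h₂ : 1 + 2 * (n - 1) / 3 + 2 * (m - 1) / 3 ≤ q) : Branching (VertexJoinE n m) q := by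
  have b₁ := (branching_path 2 (n - 3)).or (branching_path (n + 1) (m - 3))
    (fun u v u' v' => by simp only [PathE]; omega)
  have b₂ := (branching_path 1 (n - 1)).or (branching_path n (m - 1))
    (fun u v u' v' => by simp only [PathE]; omega)
  have hc := Finset.card_le_four (a := 1) (b := n - 1) (c := n) (d := n + m - 2)
  refine .branch _ _ _ _ _ _ 0 1 {1, n - 1, n, n + m - 2} (fun u => ?_) (by simp; omega) (by simp)
    (fun x y => ?_) (fun x y => ?_) b₁ b₂ (by omega) (by omega) <;>
    clear h₁ h₂ hc <;>
    simp only [VertexJoinE, CycleE, PathE, Finset.mem_insert, Finset.mem_singleton,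
        true_and, and_true, false_and, and_false, true_or, or_true, false_or, or_false]
  · constructor
    · rintro (((h | h) | h | h | h) | (h | h) | h | h | h) <;> omega
    · rintro (h | h | h | h) <;> omega
  · constructor
    · rintro (h | h) <;> omega
    · rintro ⟨(h | h) | h | h | h, h'⟩ <;> omega
  · constructor
    · rintro (h | h) <;> omega
    · rintro ⟨(h | h) | h | h | h, h'⟩ <;> omega

/-- The common value of the invariants of two cycles joined by a path. -/
def pathJoinRank (n m k : ℕ) : ℕ :=
  2 * (n - 1) / 3 + 2 * (m - 1) / 3 + 2 * (k / 3) +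
    if k % 3 = 0 then 2
    else if k % 3 = 1 then (if n % 3 = 1 ∧ m % 3 = 1 then 2 else 3)
    else (if n % 3 = 1 ∨ m % 3 = 1 then 3 else 4)

/-- The common value of the invariants of two cycles sharing a vertex. -/
def vertexJoinRank (n m : ℕ) : ℕ :=
  max (2 * n / 3 + 2 * m / 3) (1 + 2 * (n - 1) / 3 + 2 * (m - 1) / 3)

theorem branching_vertexJoinRank (n m : ℕ) (hn : 3 ≤ n) (hm : 3 ≤ m) :
    Branching (VertexJoinE n m) (vertexJoinRank n m) :=
  branching_vertexJoin n m _ hn hm (by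
      have : 2 * n / 3 = 2 + 2 * (n - 3) / 3 := by omega
      have : 2 * m / 3 = 2 + 2 * (m - 3) / 3 := by omega
      unfold vertexJoinRank
      omega) (le_max_right _ _)

set_option maxHeartbeats 400000 in
theorem branching_pathJoin (n m k q : ℕ) (hn : 3 ≤ n) (hm : 3 ≤ m)
    (q₁ q₂ : ℕ)
    (b₁ : Branching (fun u v => PathE (n + 2) (m - 3) u v ∨
      if k = 0 then PathE 1 (n - 1) u v else LolliE n (n + m + 1) (k - 1) u v) q₁)
    (b₂ : Branching (fun u v => PathE (n + 1) (m - 1) u v ∨ LolliE n (n + m) k u v) q₂)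
    (h₁ : 3 + q₁ ≤ q) (h₂ : 1 + q₂ ≤ q) : Branching (PathJoinE n m k) q := by
  by_cases hk : k = 0
  · have hc := Finset.card_le_three (a := n + 1) (b := n + m - 1) (c := 0)
    subst hk
    simp only [if_true] at b₁
    refine .branch _ _ _ _ _ _ n (n + 1) {n + 1, n + m - 1, 0} (fun u => ?_) (by simp; omega)
      (by simp) (fun x y => ?_) (fun x y => ?_) b₁ b₂ (by omega) (by omega) <;>
      clear b₁ b₂ h₁ h₂ hc <;>
      simp only [PathJoinE, LolliE, CycleE, PathE, Finset.mem_insert, Finset.mem_singleton]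
    · constructor
      · rintro (((h | h) | ((h | h) | h | h) | h | h) |
          (h | h) | ((h | h) | h | h) | h | h) <;> omega
      · rintro (h | h | h)
        · exact Or.inl (Or.inl (Or.inl (by omega)))
        · exact Or.inr (Or.inl (Or.inr (by simpa using h)))
        · exact Or.inl (Or.inr (Or.inr (Or.inr (by simpa using h))))
    · constructor
      · rintro (h | h) <;> omega
      · rintro ⟨(h | h) | ((h | h) | h | h) | h | h, h'⟩ <;> omega
    · constructor
      · rintro (h | (h | h) | h | h) <;> omega
      · rintro ⟨(h | h) | ((h | h) | h | h) | h | h, h'⟩ <;> omega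
  · have hc := Finset.card_le_three (a := n + 1) (b := n + m - 1) (c := n + m)
    simp only [if_neg hk] at b₁
    refine .branch _ _ _ _ _ _ n (n + 1) {n + 1, n + m - 1, n + m} (fun u => ?_) (by simp; omega)
      (by simp) (fun x y => ?_) (fun x y => ?_) b₁ b₂ (by omega) (by omega) <;>
      clear b₁ b₂ h₁ h₂ hc <;>
      simp only [PathJoinE, LolliE, CycleE, PathE, Finset.mem_insert, Finset.mem_singleton]
    · constructor
      · rintro (((h | h) | ((h | h) | h | h) | h | h) |
          (h | h) | ((h | h) | h | h) | h | h) <;> omega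
      · rintro (h | h | h)
        · exact Or.inl (Or.inl (Or.inl (by omega)))
        · exact Or.inr (Or.inl (Or.inr (by simpa using h)))
        · exact Or.inl (Or.inr (Or.inr (Or.inl (by simp; omega))))
    · constructor
      · rintro (h | (h | h) | h | h) <;> omega
      · rintro ⟨(h | h) | ((h | h) | h | h) | h | h, h'⟩ <;> omega
    · constructor
      · rintro (h | (h | h) | h | h) <;> omega
      · rintro ⟨(h | h) | ((h | h) | h | h) | h | h, h'⟩ <;> omega

theorem branching_pathJoinRank (n m k : ℕ) (hn : 3 ≤ n) (hm : 3 ≤ m) :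
    Branching (PathJoinE n m k) (pathJoinRank n m k) := by
  have b₂ := (branching_path (n + 1) (m - 1)).or
    (branching_lolli n (n + m) k _ hn (by omega) (le_max_left _ _) (le_max_right _ _))
    (fun u v u' v' => by simp only [LolliE, CycleE, PathE]; omega)
  by_cases hk : k = 0
  · have b₁ := (branching_path (n + 2) (m - 3)).or (branching_path 1 (n - 1))
      (fun u v u' v' => by simp only [PathE]; omega)
    refine branching_pathJoin n m k _ hn hm _ _ (b₁.congr (fun u v => ?_) le_rfl) b₂ ?_ ?_
    · rw [if_pos hk]
    all_goals
      unfold pathJoinRank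
      subst hk
      simp only [Nat.zero_mod, if_true]
      omega
  · have b₁ := (branching_path (n + 2) (m - 3)).or
      (branching_lolli n (n + m + 1) (k - 1) _ hn (by omega) (le_max_left _ _) (le_max_right _ _))
      (fun u v u' v' => by simp only [LolliE, CycleE, PathE]; omega)
    refine branching_pathJoin n m k _ hn hm _ _ (b₁.congr (fun u v => ?_) le_rfl) b₂ ?_ ?_
    · rw [if_neg hk]
    all_goals
      unfold pathJoinRank
      split_ifs <;> omega

end Branching

section LabelIdeal

variable (K : Type) [Field K] (N : ℕ)

/-- The edge ideal of the graph on the labels `0, …, N - 1` with edges `E`. -/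
noncomputable def labelIdeal (E : ℕ → ℕ → Prop) : Ideal (MvPolynomial (ZMod N) K) :=
  Ideal.span {p | ∃ u v : ℕ, E u v ∧ p = X (u : ZMod N) * X (v : ZMod N)}

/-- Incidence of edges, as pairs of labels, and labels. -/
def LabelInc (k : ℕ ×ₗ ℕ) (v : ℕ) : Prop := v = (ofLex k).1 ∨ v = (ofLex k).2

/-- The edges of `E` as pairs of labels. -/
def LabelEdge (E : ℕ → ℕ → Prop) (k : ℕ ×ₗ ℕ) : Prop := E (ofLex k).1 (ofLex k).2

variable {K N} {E : ℕ → ℕ → Prop}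

theorem labelIdeal_eq_edgeIdeal :
    labelIdeal K N E = edgeIdeal K (fun k : {k // LabelEdge E k} => ((ofLex k.1).1 : ZMod N))
      (fun k => ((ofLex k.1).2 : ZMod N)) := by
  unfold labelIdeal edgeIdeal
  congr 1
  ext p
  constructor
  · rintro ⟨u, v, h, rfl⟩
    exact ⟨⟨toLex (u, v), h⟩, rfl⟩
  · rintro ⟨⟨k, hk⟩, rfl⟩
    exact ⟨_, _, hk, rfl⟩

variable [NeZero N] (hE : ∀ u v, E u v → u < N ∧ v < N ∧ u ≠ v)
include hE

theorem natCast_ne_of_edge {u v : ℕ} (h : E u v) : (u : ZMod N) ≠ v := by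
  obtain ⟨h1, h2, h3⟩ := hE u v h
  intro he
  have := congrArg ZMod.val he
  rw [ZMod.val_natCast_of_lt h1, ZMod.val_natCast_of_lt h2] at this
  exact h3 this

theorem finite_labelEdge : Finite {k // LabelEdge E k} := by
  have : Function.Injective (fun k : {k // LabelEdge E k} =>
      ((⟨(ofLex k.1).1, (hE _ _ k.2).1⟩, ⟨(ofLex k.1).2, (hE _ _ k.2).2.1⟩) : Fin N × Fin N)) := by
    rintro ⟨k, hk⟩ ⟨l, hl⟩ h
    simp only [Prod.mk.injEq, Fin.mk.injEq] at h
    exact Subtype.ext (ofLex.injective (Prod.ext h.1 h.2))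
  exact Finite.of_injective _ this

theorem labelIdeal_eq_suppIdeal : labelIdeal K N E =
    suppIdeal K (LabelPred (ZMod.val (n := N)) ∅ E) (LabelPred.add _ _ _) := by
  have := finite_labelEdge hE
  have := Fintype.ofFinite {k // LabelEdge E k}
  rw [labelIdeal_eq_edgeIdeal]
  ext r
  rw [mem_edgeIdeal_iff fun k => natCast_ne_of_edge hE k.2, mem_suppIdeal]
  refine forall₂_congr fun d _ => ?_
  constructor
  · rintro ⟨⟨k, hk⟩, h⟩
    obtain ⟨h1, h2, -⟩ := hE _ _ hk
    refine Or.inr ⟨_, _, ?_, h⟩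
    rw [ZMod.val_natCast_of_lt h1, ZMod.val_natCast_of_lt h2]
    exact hk
  · rintro (⟨s, hs, -⟩ | ⟨s, t, h, h'⟩)
    · exact absurd hs (Finset.notMem_empty _)
    · refine ⟨⟨toLex (s.val, t.val), h⟩, ?_⟩
      simpa using h'

theorem nonVan_labelEdge {W : ℕ → Prop} {q : ℕ} (hW : ∀ v, W v → v < N)
    (h : NonVan K LabelInc (LabelEdge E) W q) :
    NonVan K (EdgeInc (fun k : {k // LabelEdge E k} => ((ofLex k.1).1 : ZMod N))
      (fun k => ((ofLex k.1).2 : ZMod N))) (fun _ => True) (fun v => W v.val) q := by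
  refine NonVan.transfer (OrderEmbedding.subtype _) (fun i => ?_) (fun S => ?_) h
  · exact ⟨fun h => ⟨⟨i, h⟩, rfl⟩, by rintro ⟨k, rfl⟩; exact k.2⟩
  · have key : ∀ (k : {k // LabelEdge E k}) (v : ℕ), v < N →
        (LabelInc k.1 v ↔ EdgeInc (fun k : {k // LabelEdge E k} => ((ofLex k.1).1 : ZMod N))
          (fun k => ((ofLex k.1).2 : ZMod N)) k (v : ZMod N)) := by
      intro k v hv
      have hcast : ∀ w < N, v = w ↔ (v : ZMod N) = w := fun w hw => by
        refine ⟨fun h => by rw [h], fun h => ?_⟩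
        have := congrArg ZMod.val h
        rwa [ZMod.val_natCast_of_lt hv, ZMod.val_natCast_of_lt hw] at this
      unfold LabelInc EdgeInc
      rw [← hcast _ (hE _ _ k.2).1, ← hcast _ (hE _ _ k.2).2.1]
    unfold Covers
    constructor
    · rintro ⟨-, h⟩
      refine ⟨fun k hk => ?_, fun w hw => ?_⟩
      · obtain ⟨k, -, rfl⟩ := Finset.mem_map.1 hk
        exact k.2
      · obtain ⟨k, hk, h⟩ := h (w : ZMod N) (by
          change W (w : ZMod N).val
          rwa [ZMod.val_natCast_of_lt (hW w hw)])
        exact ⟨k.1, Finset.mem_map_of_mem _ hk, (key k w (hW w hw)).2 h⟩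
    · rintro ⟨-, h⟩
      refine ⟨fun _ _ => trivial, fun w hw => ?_⟩
      obtain ⟨k, hk, h⟩ := h w.val hw
      obtain ⟨k, hkS, rfl⟩ := Finset.mem_map.1 hk
      refine ⟨k, hkS, ?_⟩
      have := (key k w.val (hW _ hw)).1 h
      rwa [ZMod.natCast_zmod_val] at this

theorem projDim_araRank_labelIdeal {q : ℕ} {W : ℕ → Prop} (hb : Branching E (q + 2))
    (hW : ∀ v, W v → v < N) (hnv : NonVan K LabelInc (LabelEdge E) W (q + 2))
    (hara : ∃ f : Fin (q + 2) → MvPolynomial (ZMod N) K,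
      (Ideal.span (Set.range f)).radical = (labelIdeal K N E).radical) :
    projDim (MvPolynomial (ZMod N) K) (MvPolynomial (ZMod N) K ⧸ labelIdeal K N E) =
        (q + 2 : ℕ) ∧ araRank (labelIdeal K N E) = q + 2 := by
  classical
  have := finite_labelEdge hE
  have := Fintype.ofFinite {k // LabelEdge E k}
  have hnv' := nonVan_labelEdge hE hW hnv
  constructor
  · refine projDim_eq _ _ ?_ ?_
    · have := hb.hasProjectiveDimensionLT (K := K) (ZMod.val_injective N) ∅
      rw [← labelIdeal_eq_suppIdeal hE] at this
      simpa using this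
    · rw [labelIdeal_eq_edgeIdeal]
      exact not_hasProjectiveDimensionLT (fun k => natCast_ne_of_edge hE k.2) q hnv'
  · refine le_antisymm (Nat.sInf_le hara) (le_csInf ⟨_, hara⟩ ?_)
    rintro s ⟨f, hf⟩
    have h0 : Ideal.span (Set.range fun j : {j // f j ≠ 0} => f j) = Ideal.span (Set.range f) := by
      refine le_antisymm (Ideal.span_mono ?_) (Ideal.span_le.2 ?_)
      · rintro _ ⟨j, rfl⟩
        exact ⟨j, rfl⟩
      · rintro _ ⟨j, rfl⟩
        by_cases h : f j = 0
        · rw [h]; exact zero_mem _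
        · exact Ideal.subset_span ⟨⟨j, h⟩, rfl⟩
    have := card_le_of_radical_eq _ _ (q := q + 1) hnv' (fun j : {j // f j ≠ 0} => f j)
      (fun j => j.2) (by rw [h0, hf, labelIdeal_eq_edgeIdeal]; rfl)
    refine this.trans ((Fintype.card_subtype_le _).trans ?_)
    rw [Fintype.card_fin]

end LabelIdeal

section LabelRules

/-- Nonvanishing for the graph on labels with edges `E`. -/
def LNonVan (K : Type) [Field K] (E : ℕ → ℕ → Prop) (W : ℕ → Prop) (q : ℕ) : Prop :=
  NonVan K LabelInc (LabelEdge E) W q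

/-- Exactness for the graph on labels with edges `E`. -/
def LAcyc (K : Type) [Field K] (E : ℕ → ℕ → Prop) (W : ℕ → Prop) : Prop :=
  Acyc K LabelInc (LabelEdge E) W

/-- Deletion of a vertex. -/
def delV (E : ℕ → ℕ → Prop) (w u v : ℕ) : Prop := E u v ∧ u ≠ w ∧ v ≠ w

/-- Removal of a label from a set of labels. -/
def remV (W : ℕ → Prop) (w v : ℕ) : Prop := W v ∧ v ≠ w

variable {K : Type} [Field K] {E E' : ℕ → ℕ → Prop} {W W' : ℕ → Prop} {q q' : ℕ}

theorem LNonVan.congr (h : LNonVan K E W q) (hE : ∀ u v, E' u v ↔ E u v) (hW : ∀ v, W' v ↔ W v)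
    (hq : q' = q) : LNonVan K E' W' q' := by
  have h1 : E' = E := funext fun u => funext fun v => propext (hE u v)
  have h2 : W' = W := funext fun v => propext (hW v)
  rwa [h1, h2, hq]

theorem LAcyc.congr (h : LAcyc K E W) (hE : ∀ u v, E' u v ↔ E u v) (hW : ∀ v, W' v ↔ W v) :
    LAcyc K E' W' := by
  have h1 : E' = E := funext fun u => funext fun v => propext (hE u v)
  have h2 : W' = W := funext fun v => propext (hW v)
  rwa [h1, h2]

theorem labelInc_toLex {x y v : ℕ} : LabelInc (toLex (x, y)) v ↔ v = x ∨ v = y := Iff.rfl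

theorem LNonVan.empty (hE : ∀ u v, ¬ E u v) (hW : ∀ v, ¬ W v) : LNonVan K E W 0 :=
  NonVan.empty K (fun _ => hE _ _) hW

theorem LAcyc.of_uncovered {w : ℕ} (hw : W w) (h : ∀ u v, E u v → w ≠ u ∧ w ≠ v) :
    LAcyc K E W :=
  Acyc.of_uncovered hw fun _ hk hi => hi.elim (h _ _ hk).1 (h _ _ hk).2

theorem eq_toLex_iff {k : ℕ ×ₗ ℕ} {x y : ℕ} :
    k = toLex (x, y) ↔ (ofLex k).1 = x ∧ (ofLex k).2 = y :=
  ⟨by rintro rfl; exact ⟨rfl, rfl⟩, fun h => ofLex.injective (Prod.ext h.1 h.2)⟩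

theorem LNonVan.pendant {x y w : ℕ} (he : E x y) (hw : W w)
    (h : ∀ u v, E u v → w = u ∨ w = v → u = x ∧ v = y)
    (hn : LNonVan K (fun u v => E u v ∧ ¬ (u = x ∧ v = y)) (fun v => W v ∧ v ≠ x ∧ v ≠ y) q) :
    LNonVan K E W (q + 1) := by
  refine NonVan.of_forced (k := toLex (x, y)) he hw (fun j hj hi => eq_toLex_iff.2 (h _ _ hj hi))
    (fun j => ?_) (fun v => ?_) hn
  · rw [Ne, eq_toLex_iff]
    rfl
  · rw [labelInc_toLex, not_or]

theorem LAcyc.pendant {x y w : ℕ} (he : E x y) (hw : W w)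
    (h : ∀ u v, E u v → w = u ∨ w = v → u = x ∧ v = y)
    (hn : LAcyc K (fun u v => E u v ∧ ¬ (u = x ∧ v = y)) (fun v => W v ∧ v ≠ x ∧ v ≠ y)) :
    LAcyc K E W := by
  refine Acyc.of_forced (k := toLex (x, y)) he hw (fun j hj hi => eq_toLex_iff.2 (h _ _ hj hi))
    (fun j => ?_) (fun v => ?_) hn
  · rw [Ne, eq_toLex_iff]
    rfl
  · rw [labelInc_toLex, not_or]

theorem dominated_finset {ι V : Type} [LinearOrder ι] {inc : ι → V → Prop} {A : ι → Prop}
    {W : V → Prop} {i : ι} (hi : A i) (F : Finset ι) (hiF : i ∉ F)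
    (h : ∀ j ∈ F, ∀ v, W v → inc i v → inc j v) :
    (∀ q, NonVan K inc (fun k => A k ∧ k ∉ F) W q → NonVan K inc A W q) ∧
      (Acyc K inc (fun k => A k ∧ k ∉ F) W → Acyc K inc A W) := by
  induction F using Finset.induction_on with
  | empty => simp
  | insert j F hj ih =>
    rw [Finset.mem_insert, not_or] at hiF
    obtain ⟨ih₁, ih₂⟩ := ih hiF.2 fun k hk => h k (Finset.mem_insert_of_mem hk)
    have hA : ∀ k, (A k ∧ k ∉ insert j F) ↔ (A k ∧ k ∉ F) ∧ k ≠ j := fun k => by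
      rw [Finset.mem_insert]; tauto
    exact ⟨fun q hq => ih₁ q (NonVan.of_dominated (A := fun k => A k ∧ k ∉ F) ⟨hi, hiF.2⟩ hiF.1
        (h j (Finset.mem_insert_self _ _)) hA hq),
      fun hq => ih₂ (Acyc.of_dominated (A := fun k => A k ∧ k ∉ F) ⟨hi, hiF.2⟩ hiF.1
        (h j (Finset.mem_insert_self _ _)) hA hq)⟩

theorem leaf_aux {w x N : ℕ} (hw : W w) (hx : ¬ W x) (he : E w x ∨ E x w)
    (hN : ∀ u v, E u v → u = w ∨ v = w → u < N ∧ v < N) :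
    (∀ q, LNonVan K (delV E w) (remV W w) q → LNonVan K E W (q + 1)) ∧
      (LAcyc K (delV E w) (remV W w) → LAcyc K E W) := by
  classical
  obtain ⟨k, hk, hkw, hkx⟩ : ∃ k : ℕ ×ₗ ℕ, LabelEdge E k ∧ LabelInc k w ∧
      ∀ v, LabelInc k v → v = w ∨ v = x := by
    rcases he with he | he
    · exact ⟨toLex (w, x), he, Or.inl rfl, fun v hv => hv⟩
    · exact ⟨toLex (x, w), he, Or.inr rfl, fun v hv => hv.symm⟩
  have hkW : ∀ v, W v → LabelInc k v → v = w := fun v hv hi =>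
    (hkx v hi).resolve_right fun h => hx (h ▸ hv)
  let F : Finset (ℕ ×ₗ ℕ) := ((Finset.range N ×ˢ Finset.range N).map toLex.toEmbedding).filter
    fun j => LabelInc j w ∧ j ≠ k
  have hF : ∀ j, LabelEdge E j → (j ∈ F ↔ LabelInc j w ∧ j ≠ k) := by
    intro j hj
    simp only [F, Finset.mem_filter, and_iff_right_iff_imp]
    rintro ⟨h, -⟩
    obtain ⟨h1, h2⟩ := hN _ _ hj (h.imp Eq.symm Eq.symm)
    exact Finset.mem_map.2 ⟨ofLex j, Finset.mem_product.2
      ⟨Finset.mem_range.2 h1, Finset.mem_range.2 h2⟩, rfl⟩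
  have hkF : k ∉ F := fun h => (Finset.mem_filter.1 h).2.2 rfl
  obtain ⟨d₁, d₂⟩ := dominated_finset (K := K) (inc := LabelInc) (A := LabelEdge E) (W := W) hk F
    hkF fun j hj v hv hi => hkW v hv hi ▸ (Finset.mem_filter.1 hj).2.1
  have forced : ∀ j, LabelEdge E j ∧ j ∉ F → LabelInc j w → j = k := fun j hj hi => by
    by_contra hne
    exact hj.2 ((hF j hj.1).2 ⟨hi, hne⟩)
  have hA : ∀ j, LabelEdge (delV E w) j ↔ (LabelEdge E j ∧ j ∉ F) ∧ j ≠ k := by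
    intro j
    have : LabelEdge (delV E w) j ↔ LabelEdge E j ∧ ¬ LabelInc j w := by
      unfold LabelEdge delV LabelInc
      rw [not_or, ne_comm, @ne_comm _ _ w]
    rw [this]
    constructor
    · rintro ⟨h, h'⟩
      exact ⟨⟨h, fun hj => h' ((hF j h).1 hj).1⟩, by rintro rfl; exact h' hkw⟩
    · rintro ⟨⟨h, h'⟩, hne⟩
      exact ⟨h, fun hi => h' ((hF j h).2 ⟨hi, hne⟩)⟩
  have hW : ∀ v, remV W w v ↔ W v ∧ ¬ LabelInc k v := fun v =>
    and_congr_right fun hv => not_congr ⟨fun h => h ▸ hkw, hkW v hv⟩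
  exact ⟨fun q h => d₁ _ (NonVan.of_forced (A := fun j => LabelEdge E j ∧ j ∉ F) ⟨hk, hkF⟩ hw
      forced hA hW h),
    fun h => d₂ (Acyc.of_forced (A := fun j => LabelEdge E j ∧ j ∉ F) ⟨hk, hkF⟩ hw forced hA hW h)⟩

theorem LNonVan.leaf (w x N : ℕ) (hw : W w) (hx : ¬ W x) (he : E w x ∨ E x w)
    (hN : ∀ u v, E u v → u = w ∨ v = w → u < N ∧ v < N)
    (h : LNonVan K (delV E w) (remV W w) q) : LNonVan K E W (q + 1) :=
  (leaf_aux hw hx he hN).1 q h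

theorem LAcyc.leaf (w x N : ℕ) (hw : W w) (hx : ¬ W x) (he : E w x ∨ E x w)
    (hN : ∀ u v, E u v → u = w ∨ v = w → u < N ∧ v < N)
    (h : LAcyc K (delV E w) (remV W w)) : LAcyc K E W :=
  (leaf_aux hw hx he hN).2 h

theorem LNonVan.vertex (w : ℕ) (hw : W w) (ha : LAcyc K E (remV W w))
    (h : LNonVan K (delV E w) (remV W w) q) : LNonVan K E W (q + 1) := by
  refine NonVan.of_acyc (w := w) hw (fun j => ?_) (fun v => Iff.rfl) ha h
  unfold LabelEdge delV LabelInc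
  rw [not_or, ne_comm, @ne_comm _ _ w]

/-- The set of vertices to be covered on a path. -/
def PathW (lo j v : ℕ) : Prop := lo ≤ v ∧ v < lo + j ∧ (j % 3 = 1 → v + 1 ≠ lo + j)

theorem LNonVan.path (lo j : ℕ) (h : LNonVan K E W q)
    (hE : ∀ u v, E u v → (u < lo ∨ lo + j ≤ u) ∧ (v < lo ∨ lo + j ≤ v))
    (hW : ∀ v, W v → v < lo ∨ lo + j ≤ v) :
    LNonVan K (fun u v => PathE lo j u v ∨ E u v) (fun v => PathW lo j v ∨ W v)
      (q + 2 * j / 3) := by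
  induction j using Nat.strong_induction_on generalizing lo with
  | _ j ih =>
    by_cases h1 : j ≤ 1
    · refine h.congr (fun u v => ?_) (fun v => ?_) (by omega)
      · exact or_iff_right (by simp only [PathE]; omega)
      · exact or_iff_right (by simp only [PathW]; omega)
    have fst : ∀ u v, PathE lo j u v ∨ E u v → lo = u ∨ lo = v → u = lo ∧ v = lo + 1 := by
      rintro u v (h | h) h'
      · simp only [PathE] at h; omega
      · have := hE u v h; omega
    by_cases h2 : j = 2
    · subst h2
      refine LNonVan.pendant (x := lo) (y := lo + 1) (w := lo) ?_ ?_ fst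
        (h.congr (fun u v => ?_) (fun v => ?_) rfl)
      · exact Or.inl ⟨rfl, by omega, by omega⟩
      · exact Or.inl (by simp only [PathW]; omega)
      · have := hE u v
        simp only [PathE]
        constructor
        · rintro ⟨h | h, h'⟩
          · omega
          · exact h
        · exact fun h => ⟨Or.inr h, by have := this h; omega⟩
      · have := hW v
        simp only [PathW]
        constructor
        · rintro ⟨h | h, h'⟩
          · omega
          · exact h
        · exact fun h => ⟨Or.inr h, by have := this h; omega⟩
    · have i := ih (j - 3) (by omega) (lo + 3) (fun u v h => by have := hE u v h; omega)
        (fun v h => by have := hW v h; omega)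
      have hq : q + 2 * j / 3 = q + 2 * (j - 3) / 3 + 1 + 1 := by omega
      rw [hq]
      refine LNonVan.pendant (x := lo) (y := lo + 1) (w := lo) ?_ ?_ fst
        (LNonVan.leaf (lo + 2) (lo + 1) (lo + 4) ?_ ?_ ?_ ?_
          (i.congr (fun u v => ?_) (fun v => ?_) rfl))
      · exact Or.inl ⟨rfl, by omega, by omega⟩
      · exact Or.inl (by simp only [PathW]; omega)
      · exact ⟨Or.inl (by simp only [PathW]; omega), by omega⟩
      · simp
      · exact Or.inr ⟨Or.inl ⟨rfl, by omega, by omega⟩, by omega⟩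
      · rintro u v ⟨h | h, h'⟩ h''
        · simp only [PathE] at h; omega
        · have := hE u v h; omega
      · have := hE u v
        simp only [PathE, delV]
        constructor
        · rintro ⟨⟨h | h, h'⟩, h''⟩
          · omega
          · exact Or.inr h
        · rintro (h | h)
          · omega
          · have := this h
            exact ⟨⟨Or.inr h, by omega⟩, by omega⟩
      · have := hW v
        simp only [PathW, remV]
        constructor
        · rintro ⟨⟨h | h, h'⟩, h''⟩
          · omega
          · exact Or.inr h
        · rintro (h | h)
          · omega
          · have := this h
            exact ⟨⟨Or.inr h, by omega⟩, by omega⟩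

theorem LAcyc.path (lo j : ℕ) (hj : j % 3 = 1)
    (hE : ∀ u v, (lo ≤ u ∧ u < lo + j) ∨ (lo ≤ v ∧ v < lo + j) → (E u v ↔ PathE lo j u v))
    (hW : ∀ v, lo ≤ v → v < lo + j → W v) : LAcyc K E W := by
  induction j using Nat.strong_induction_on generalizing lo E W with
  | _ j ih =>
    by_cases h1 : j = 1
    · refine LAcyc.of_uncovered (w := lo) (hW _ le_rfl (by omega)) fun u v h => ?_
      by_contra hc
      have := (hE u v (by omega)).1 h
      simp only [PathE] at this
      omega
    · refine LAcyc.pendant (x := lo) (y := lo + 1) (w := lo) ((hE _ _ (by omega)).2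
          ⟨rfl, by omega, by omega⟩) (hW _ le_rfl (by omega)) ?_
        (LAcyc.leaf (lo + 2) (lo + 1) (lo + 4) ⟨hW _ (by omega) (by omega), by omega⟩ (by simp)
          (Or.inr ⟨(hE _ _ (by omega)).2 ⟨rfl, by omega, by omega⟩, by omega⟩) ?_
          (ih (j - 3) (by omega) (lo + 3) (by omega) ?_ ?_))
      · intro u v h h'
        have := (hE u v (by omega)).1 h
        simp only [PathE] at this
        omega
      · rintro u v ⟨h, -⟩ h'
        have := (hE u v (by omega)).1 h
        simp only [PathE] at this
        omega
      · intro u v h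
        simp only [delV]
        rw [hE u v (by omega)]
        simp only [PathE]
        omega
      · exact fun v h h' => ⟨⟨hW v (by omega) (by omega), by omega⟩, by omega⟩

end LabelRules

section Ears

/-- A cycle through `x` and the consecutive vertices `lo, …, lo + j - 1`. -/
def EarE (x lo j u v : ℕ) : Prop :=
  PathE lo j u v ∨ u = x ∧ v = lo ∨ u = lo + j - 1 ∧ v = x

/-- The set of vertices to be covered on a cycle whose vertex outside `lo, …, lo + j - 1` is
not covered. -/
def EarW (lo j v : ℕ) : Prop := v = lo ∨ v = lo + j - 1 ∨ PathW (lo + 1) (j - 2) v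

/-- A path `lo, …, lo + k - 1` whose last vertex is joined to `x`. -/
def TailE (x lo k u v : ℕ) : Prop := PathE lo k u v ∨ 0 < k ∧ u = lo + k - 1 ∧ v = x

/-- The set of vertices to be covered on a path joined to an uncovered vertex. -/
def TailW (lo k v : ℕ) : Prop := 0 < k ∧ v = lo + k - 1 ∨ PathW lo (k - 1) v

variable {K : Type} [Field K] {E E' : ℕ → ℕ → Prop} {W W' : ℕ → Prop} {q q' : ℕ}

theorem LNonVan.addLeaf (w x N : ℕ) (h : LNonVan K E' W' q) (hw : ¬ W' w) (hx : ¬ W' x)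
    (hxw : x ≠ w) (he : E w x ∨ E x w) (hN : ∀ u v, E u v → u = w ∨ v = w → u < N ∧ v < N)
    (hE : ∀ u v, delV E w u v ↔ E' u v) : LNonVan K E (fun v => v = w ∨ W' v) (q + 1) := by
  refine LNonVan.leaf w x N (Or.inl rfl) (fun h => h.elim hxw hx) he hN
    (h.congr hE (fun v => ?_) rfl)
  exact ⟨fun h => h.1.resolve_left h.2, fun h => ⟨Or.inr h, fun e => hw (e ▸ h)⟩⟩

theorem LNonVan.addVertex (w : ℕ) (h : LNonVan K E' W' q) (hw : ¬ W' w) (ha : LAcyc K E W')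
    (hE : ∀ u v, delV E w u v ↔ E' u v) : LNonVan K E (fun v => v = w ∨ W' v) (q + 1) := by
  have hW : ∀ v, remV (fun v => v = w ∨ W' v) w v ↔ W' v := fun v =>
    ⟨fun h => h.1.resolve_left h.2, fun h => ⟨Or.inr h, fun e => hw (e ▸ h)⟩⟩
  exact LNonVan.vertex w (Or.inl rfl) (ha.congr (fun _ _ => Iff.rfl) hW) (h.congr hE hW rfl)

theorem LNonVan.tail (x lo k : ℕ) (hx : x < lo ∨ lo + k ≤ x) (h : LNonVan K E W q) (hWx : ¬ W x)
    (hE : ∀ u v, E u v → (u < lo ∨ lo + k ≤ u) ∧ (v < lo ∨ lo + k ≤ v))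
    (hW : ∀ v, W v → v < lo ∨ lo + k ≤ v) :
    LNonVan K (fun u v => TailE x lo k u v ∨ E u v) (fun v => TailW lo k v ∨ W v)
      (q + if k = 0 then 0 else 1 + 2 * (k - 1) / 3) := by
  rcases k with _ | k
  · refine h.congr (fun u v => ?_) (fun v => ?_) (by simp)
    · exact or_iff_right (by simp only [TailE, PathE]; omega)
    · exact or_iff_right (by simp only [TailW, PathW]; omega)
  refine LNonVan.congr (LNonVan.addLeaf (lo + k) x (x + lo + k + 2)
    (E := fun u v => TailE x lo (k + 1) u v ∨ E u v)
    (h.path lo k (fun u v h => ?_) fun v h => ?_) ?_ ?_ ?_ ?_ ?_ ?_) (fun _ _ => Iff.rfl)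
    (fun v => ?_) (by simp; omega)
  · have := hE u v h
    omega
  · have := hW v h
    omega
  · rintro (h | h)
    · simp only [PathW] at h; omega
    · have := hW _ h; omega
  · rintro (h | h)
    · simp only [PathW] at h; omega
    · exact hWx h
  · omega
  · exact Or.inl (Or.inl (Or.inr ⟨by omega, by omega, rfl⟩))
  · rintro u v (h | h) h'
    · simp only [TailE, PathE] at h; omega
    · have := hE _ _ h; omega
  · intro u v
    have := hE u v
    simp only [delV, TailE, PathE]
    constructor
    · rintro ⟨h | h, h'⟩
      · omega
      · exact Or.inr h
    · rintro (h | h)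
      · omega
      · have := this h
        exact ⟨Or.inr h, by omega⟩
  · rw [← or_assoc]
    refine or_congr_left ?_
    simp only [TailW, PathW]
    omega

theorem LNonVan.ear (x lo j : ℕ) (hj : 2 ≤ j) (hx : x < lo ∨ lo + j ≤ x) (h : LNonVan K E W q)
    (hWx : ¬ W x)
    (hE : ∀ u v, E u v → (u < lo ∨ lo + j ≤ u) ∧ (v < lo ∨ lo + j ≤ v))
    (hW : ∀ v, W v → v < lo ∨ lo + j ≤ v) :
    LNonVan K (fun u v => EarE x lo j u v ∨ E u v) (fun v => EarW lo j v ∨ W v)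
      (q + 2 * (j + 1) / 3) := by
  obtain ⟨i, rfl⟩ : ∃ i, j = i + 2 := ⟨j - 2, by omega⟩
  have hp := h.path (lo + 1) i (fun u v h => by have := hE u v h; omega)
    (fun v h => by have := hW v h; omega)
  have hl := LNonVan.addLeaf (E := fun u v => PathE (lo + 1) (i + 1) u v ∨ u = lo + i + 1 ∧ v = x
    ∨ E u v) (lo + i + 1) x (x + lo + i + 2) hp ?_ ?_ (by omega) ?_ ?_ ?_
  · refine LNonVan.congr (LNonVan.addLeaf lo x (x + lo + i + 2)
      (E := fun u v => EarE x lo (i + 2) u v ∨ E u v) hl ?_ ?_ (by omega) ?_ ?_ ?_)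
      (fun _ _ => Iff.rfl) (fun v => ?_) (by omega)
    · rintro (h | h | h)
      · omega
      · simp only [PathW] at h; omega
      · have := hW _ h; omega
    · rintro (h | h | h)
      · omega
      · simp only [PathW] at h; omega
      · exact hWx h
    · exact Or.inr (Or.inl (Or.inr (Or.inl ⟨rfl, rfl⟩)))
    · rintro u v (h | h) h'
      · simp only [EarE, PathE] at h; omega
      · have := hE _ _ h; omega
    · intro u v
      have := hE u v
      simp only [delV, EarE, PathE]
      constructor
      · rintro ⟨h | h, h'⟩
        · omega
        · exact Or.inr (Or.inr h)
      · rintro (h | h | h)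
        · exact ⟨Or.inl (Or.inl (by omega)), by omega⟩
        · exact ⟨Or.inl (Or.inr (Or.inr (by omega))), by omega⟩
        · have := this h
          exact ⟨Or.inr h, by omega⟩
    · rw [← or_assoc, ← or_assoc]
      refine or_congr_left ?_
      simp only [EarW, PathW]
      omega
  · rintro (h | h)
    · simp only [PathW] at h; omega
    · have := hW _ h; omega
  · rintro (h | h)
    · simp only [PathW] at h; omega
    · exact hWx h
  · exact Or.inl (Or.inr (Or.inl ⟨rfl, rfl⟩))
  · rintro u v (h | h | h) h'
    · simp only [PathE] at h; omega
    · omega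
    · have := hE _ _ h; omega
  · intro u v
    have := hE u v
    simp only [delV, PathE]
    constructor
    · rintro ⟨h | h | h, h'⟩
      · exact Or.inl (by omega)
      · omega
      · exact Or.inr h
    · rintro (h | h)
      · exact ⟨Or.inl (by omega), by omega⟩
      · have := this h
        exact ⟨Or.inr (Or.inr h), by omega⟩

theorem LAcyc.ear (x lo j : ℕ) (hj : j % 3 = 0) (h0 : 0 < j) (hx : x < lo ∨ lo + j ≤ x)
    (hWx : ¬ W x)
    (hE : ∀ u v, (lo ≤ u ∧ u < lo + j) ∨ (lo ≤ v ∧ v < lo + j) → (E u v ↔ EarE x lo j u v))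
    (hW : ∀ v, lo ≤ v → v < lo + j → W v) : LAcyc K E W := by
  refine LAcyc.leaf lo x (x + lo + j + 1) (hW _ le_rfl (by omega)) hWx
    (Or.inr ((hE _ _ (by omega)).2 (Or.inr (Or.inl ⟨rfl, rfl⟩)))) ?_
    (LAcyc.leaf (lo + j - 1) x (x + lo + j + 1) ⟨hW _ (by omega) (by omega), by omega⟩
      (fun h => hWx h.1) (Or.inl ⟨(hE _ _ (by omega)).2 (Or.inr (Or.inr ⟨rfl, rfl⟩)), by omega⟩) ?_
      (LAcyc.path (lo + 1) (j - 2) (by omega) ?_ ?_))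
  · intro u v h h'
    have := (hE u v (by omega)).1 h
    simp only [EarE, PathE] at this
    omega
  · rintro u v ⟨h, -⟩ h'
    have := (hE u v (by omega)).1 h
    simp only [EarE, PathE] at this
    omega
  · intro u v h
    simp only [delV]
    rw [hE u v (by omega)]
    simp only [EarE, PathE]
    omega
  · exact fun v h h' => ⟨⟨hW v (by omega) (by omega), by omega⟩, by omega⟩

end Ears

section BicyclicNonVan

variable (K : Type) [Field K]

theorem vertexJoinRank_eq {n m : ℕ} (hn : 3 ≤ n) (hm : 3 ≤ m) : vertexJoinRank n m =
    if n % 3 = 1 ∧ m % 3 = 1 then 1 + 2 * (n - 1) / 3 + 2 * (m - 1) / 3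
      else 2 * n / 3 + 2 * m / 3 := by
  unfold vertexJoinRank
  split_ifs
  · exact max_eq_right (by omega)
  · exact max_eq_left (by omega)

theorem LNonVan.none : LNonVan K (fun _ _ => False) (fun _ => False) 0 :=
  LNonVan.empty (fun _ _ h => h) fun _ h => h

theorem nonVan_vertexJoinE (n m : ℕ) (hn : 3 ≤ n) (hm : 3 ≤ m) :
    ∃ W : ℕ → Prop, (∀ v, W v → v < n + m - 1) ∧
      LNonVan K (VertexJoinE n m) W (vertexJoinRank n m) := by
  rw [vertexJoinRank_eq hn hm]
  split_ifs with h
  · have hp := ((LNonVan.none K).path n (m - 1) (by simp) (by simp)).path 1 (n - 1)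
      (by rintro u v (h | h); · simp only [PathE] at h; omega
          · exact h.elim)
      (by rintro v (h | h); · simp only [PathW] at h; omega
          · exact h.elim)
    refine ⟨_, ?_, LNonVan.congr (hp.addVertex (E := VertexJoinE n m) 0 ?_
      (LAcyc.ear 0 1 (n - 1) (by omega) (by omega) (by omega) ?_ ?_ ?_) ?_)
      (fun _ _ => Iff.rfl) (fun _ => Iff.rfl) (by omega)⟩
    · simp only [PathW, or_false]; omega
    · simp only [PathW, or_false]; omega
    · simp only [PathW, or_false]; omega
    · intro u v h
      simp only [VertexJoinE, CycleE, EarE, PathE]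
      omega
    · simp only [PathW, or_false]; omega
    · intro u v
      simp only [delV, VertexJoinE, CycleE, PathE, or_false]
      omega
  · have hp := ((LNonVan.none K).ear 0 n (m - 1) (by omega) (by omega) (by simp) (by simp)
      (by simp)).ear 0 1 (n - 1) (by omega) (by omega)
      (by simp only [EarW, PathW, or_false]; omega)
      (by rintro u v (h | h); · simp only [EarE, PathE] at h; omega
          · exact h.elim)
      (by rintro v (h | h); · simp only [EarW, PathW] at h; omega
          · exact h.elim)
    refine ⟨_, ?_, LNonVan.congr hp (fun u v => ?_) (fun _ => Iff.rfl) ?_⟩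
    · simp only [EarW, PathW, or_false]; omega
    · simp only [VertexJoinE, CycleE, EarE, PathE, or_false]
      omega
    · rw [Nat.sub_add_cancel (by omega), Nat.sub_add_cancel (by omega)]
      omega

theorem nonVan_lolliE (n lo k : ℕ) (hn : 3 ≤ n) (hlo : n ≤ lo) :
    ∃ W : ℕ → Prop, (∀ v, W v → v < n ∨ lo ≤ v ∧ v < lo + k) ∧
      LNonVan K (LolliE n lo k) W (if n % 3 = 1 then 1 + 2 * (n - 1) / 3 + 2 * k / 3
        else 2 * n / 3 + if k = 0 then 0 else 1 + 2 * (k - 1) / 3) := by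
  split_ifs with h hk
  · have hp := ((LNonVan.none K).path lo k (by simp) (by simp)).path 1 (n - 1)
      (by rintro u v (h | h); · simp only [PathE] at h; omega
          · exact h.elim)
      (by rintro v (h | h); · simp only [PathW] at h; omega
          · exact h.elim)
    refine ⟨_, ?_, LNonVan.congr (hp.addVertex (E := LolliE n lo k) 0 ?_
      (LAcyc.ear 0 1 (n - 1) (by omega) (by omega) (by omega) ?_ ?_ ?_) ?_)
      (fun _ _ => Iff.rfl) (fun _ => Iff.rfl) (by omega)⟩
    · simp only [PathW, or_false]; omega
    · simp only [PathW, or_false]; omega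
    · simp only [PathW, or_false]; omega
    · intro u v h
      simp only [LolliE, CycleE, EarE, PathE]
      omega
    · simp only [PathW, or_false]; omega
    · intro u v
      simp only [delV, LolliE, CycleE, PathE, or_false]
      omega
  all_goals
    have hp := ((LNonVan.none K).tail 0 lo k (by omega) (by simp) (by simp)
      (by simp)).ear 0 1 (n - 1) (by omega) (by omega)
      (by simp only [TailW, PathW, or_false]; omega)
      (by rintro u v (h | h); · simp only [TailE, PathE] at h; omega
          · exact h.elim)
      (by rintro v (h | h); · simp only [TailW, PathW] at h; omega
          · exact h.elim)
    refine ⟨_, ?_, LNonVan.congr hp (fun u v => ?_) (fun _ => Iff.rfl) ?_⟩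
    · simp only [EarW, TailW, PathW, or_false]; omega
    · simp only [LolliE, CycleE, TailE, EarE, PathE, or_false]
      omega
    · rw [Nat.sub_add_cancel (by omega)]
      simp [hk]
      try omega

theorem nonVan_pathJoinE_of_right (n m k : ℕ) (hn : 3 ≤ n) (hm : 3 ≤ m) (h : m % 3 = 1) :
    ∃ W : ℕ → Prop, (∀ v, W v → v < n + m + k) ∧
      LNonVan K (PathJoinE n m k) W (pathJoinRank n m k) := by
  obtain ⟨W, hW, hp⟩ := nonVan_lolliE K n (n + m) k hn (by omega)
  have hp' := hp.path (n + 1) (m - 1)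
    (fun u v h => by simp only [LolliE, CycleE, PathE] at h; omega)
    (fun v h => by have := hW v h; omega)
  refine ⟨_, ?_, LNonVan.congr (hp'.addVertex (E := PathJoinE n m k) n ?_
    (LAcyc.ear n (n + 1) (m - 1) (by omega) (by omega) (by omega) ?_ ?_ ?_) ?_)
    (fun _ _ => Iff.rfl) (fun _ => Iff.rfl) ?_⟩
  · rintro v (h | h | h)
    · omega
    · simp only [PathW] at h; omega
    · have := hW v h; omega
  · rintro (h | h)
    · simp only [PathW] at h; omega
    · have := hW _ h; omega
  · rintro (h | h)
    · simp only [PathW] at h; omega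
    · have := hW _ h; omega
  · intro u v h
    simp only [PathJoinE, LolliE, CycleE, EarE, PathE]
    omega
  · exact fun v h1 h2 => Or.inl (by simp only [PathW]; omega)
  · intro u v
    have hl : LolliE n (n + m) k u v → u ≠ n ∧ v ≠ n := by
      simp only [LolliE, CycleE, PathE]; omega
    constructor
    · rintro ⟨h | h | h | h, h'⟩
      · exact Or.inl (by simp only [CycleE, PathE] at h ⊢; omega)
      · exact Or.inr h
      · omega
      · omega
    · rintro (h | h)
      · exact ⟨Or.inl (Or.inl (by simp only [PathE] at h ⊢; omega)),
          by simp only [PathE] at h; omega⟩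
      · exact ⟨Or.inr (Or.inl h), hl h⟩
  · unfold pathJoinRank
    clear * - hn hm h
    by_cases h' : n % 3 = 1
    · simp only [h, h', and_self, or_self, if_true]
      split_ifs <;> omega
    · simp only [h, h', false_and, or_true, if_true, if_false]
      split_ifs <;> omega

theorem nonVan_pathJoinE_of_left (n m k : ℕ) (hn : 3 ≤ n) (hm : 3 ≤ m) (h : n % 3 = 1)
    (h' : m % 3 ≠ 1) : ∃ W : ℕ → Prop, (∀ v, W v → v < n + m + k) ∧
      LNonVan K (PathJoinE n m k) W (pathJoinRank n m k) := by
  obtain ⟨W, hW, hp⟩ : ∃ W : ℕ → Prop, (∀ v, W v → n < v ∧ v < n + m + k) ∧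
      LNonVan K (fun u v => CycleE n m u v ∨ PathE (n + m) k u v ∨ 0 < k ∧ u = n ∧ v = n + m) W
        (2 * m / 3 + if k = 0 then 0 else 1 + 2 * (k - 1) / 3) := by
    obtain ⟨W, hW, hp⟩ : ∃ W : ℕ → Prop, (∀ v, W v → n + m ≤ v ∧ v < n + m + k) ∧
        LNonVan K (fun u v => PathE (n + m) k u v ∨ 0 < k ∧ u = n ∧ v = n + m) W
          (if k = 0 then 0 else 1 + 2 * (k - 1) / 3) := by
      rcases Nat.eq_zero_or_pos k with rfl | hk
      · exact ⟨_, by simp, (LNonVan.none K).congr (fun u v => by simp only [PathE, iff_false]; omega)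
          (fun v => Iff.rfl) (by simp)⟩
      · have hp := (LNonVan.none K).path (n + m + 1) (k - 1) (by simp) (by simp)
        refine ⟨_, ?_, LNonVan.congr (hp.addLeaf (n + m) n (n + m + k + 1) ?_ ?_ (by omega)
          (Or.inr (Or.inr ⟨hk, rfl, rfl⟩)) ?_ ?_) (fun _ _ => Iff.rfl) (fun _ => Iff.rfl) ?_⟩
        · simp only [PathW, or_false]; omega
        · simp only [PathW, or_false]; omega
        · simp only [PathW, or_false]; omega
        · simp only [PathE]; omega
        · simp only [delV, PathE, or_false]; omega
        · rw [if_neg (by omega)]; omega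
    have hp' := hp.ear n (n + 1) (m - 1) (by omega) (by omega)
      (fun h => by have := hW _ h; omega)
      (fun u v h => by simp only [PathE] at h; omega) (fun v h => by have := hW _ h; omega)
    refine ⟨_, ?_, LNonVan.congr hp' (fun u v => ?_) (fun _ => Iff.rfl) ?_⟩
    · rintro v (h | h)
      · simp only [EarW, PathW] at h; omega
      · have := hW _ h; omega
    · rw [← or_assoc (a := EarE _ _ _ _ _), ← or_assoc]
      simp only [CycleE, EarE, PathE]
      omega
    · rw [Nat.sub_add_cancel (by omega)]; omega
  have hp' := hp.path 1 (n - 1)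
    (fun u v h => by simp only [CycleE, PathE] at h; omega)
    (fun v h => by have := hW v h; omega)
  refine ⟨_, ?_, LNonVan.congr (hp'.addVertex (E := PathJoinE n m k) 0 ?_
    (LAcyc.ear 0 1 (n - 1) (by omega) (by omega) (by omega) ?_ ?_ ?_) ?_)
    (fun _ _ => Iff.rfl) (fun _ => Iff.rfl) ?_⟩
  · rintro v (h | h | h)
    · omega
    · simp only [PathW] at h; omega
    · have := hW v h; omega
  · rintro (h | h)
    · simp only [PathW] at h; omega
    · have := hW _ h; omega
  · rintro (h | h)
    · simp only [PathW] at h; omega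
    · have := hW _ h; omega
  · intro u v h
    simp only [PathJoinE, LolliE, CycleE, EarE, PathE]
    omega
  · exact fun v h1 h2 => Or.inl (by simp only [PathW]; omega)
  · intro u v
    have hc : CycleE n m u v → u ≠ 0 ∧ v ≠ 0 := by
      simp only [CycleE, PathE]; omega
    constructor
    · rintro ⟨h | (h | h | h) | h | h, h'⟩
      · exact Or.inr (Or.inl h)
      · exact Or.inl (by simp only [CycleE, PathE] at h ⊢; omega)
      · exact Or.inr (Or.inr (Or.inl h))
      · omega
      · exact Or.inr (Or.inr (Or.inr h))
      · omega
    · rintro (h | h | h | h)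
      · exact ⟨Or.inr (Or.inl (Or.inl (Or.inl (by simp only [PathE] at h ⊢; omega)))),
          by simp only [PathE] at h; omega⟩
      · exact ⟨Or.inl h, hc h⟩
      · exact ⟨Or.inr (Or.inl (Or.inr (Or.inl h))), by simp only [PathE] at h; omega⟩
      · exact ⟨Or.inr (Or.inr (Or.inl h)), by omega⟩
  · unfold pathJoinRank
    clear * - hn hm h h'
    simp only [h, h', and_false, true_or, if_true, if_false]
    split_ifs <;> omega

theorem nonVan_pathJoinE_of_neither (n m k : ℕ) (hn : 3 ≤ n) (hm : 3 ≤ m) (h : n % 3 ≠ 1)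
    (h' : m % 3 ≠ 1) : ∃ W : ℕ → Prop, (∀ v, W v → v < n + m + k) ∧
      LNonVan K (PathJoinE n m k) W (pathJoinRank n m k) := by
  rcases Nat.eq_zero_or_pos k with rfl | hk
  · have hl := ((LNonVan.none K).path (n + 1) (m - 1) (by simp) (by simp)).addLeaf
      (E := fun u v => CycleE n m u v ∨ u = n ∧ v = 0) n 0 (n + m) ?_ ?_ (by omega)
      (Or.inl (Or.inr ⟨rfl, rfl⟩)) ?_ ?_
    · have hp := hl.ear 0 1 (n - 1) (by omega) (by omega) ?_ ?_ ?_
      · refine ⟨_, ?_, LNonVan.congr hp (fun u v => ?_) (fun _ => Iff.rfl) ?_⟩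
        · simp only [EarW, PathW, or_false]; omega
        · have h1 : CycleE 0 n u v ↔ EarE 0 1 (n - 1) u v := by
            simp only [CycleE, EarE, PathE]; omega
          have h2 : ¬ PathE (n + m) 0 u v := by simp only [PathE]; omega
          simp only [PathJoinE, LolliE, h1, h2, lt_irrefl, true_and, false_and, or_false, false_or]
          tauto
        · rw [Nat.sub_add_cancel (by omega), pathJoinRank]
          clear * - hn hm h h'
          simp only [Nat.zero_mod, Nat.zero_div, if_true]
          omega
      · simp only [PathW, or_false]; omega
      · simp only [CycleE, PathE]; omega
      · simp only [PathW, or_false]; omega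
    · simp only [PathW, or_false]; omega
    · simp only [PathW, or_false]; omega
    · simp only [CycleE, PathE]; omega
    · simp only [delV, CycleE, PathE, or_false]; omega
  · obtain ⟨W, hW, hp⟩ : ∃ W : ℕ → Prop, (∀ v, W v → n + m ≤ v ∧ v < n + m + k) ∧
        LNonVan K (fun u v => TailE 0 (n + m) k u v ∨ u = n ∧ v = n + m) W
          (1 + if k = 1 then 0 else 1 + 2 * (k - 2) / 3) := by
      have hp := (LNonVan.none K).tail 0 (n + m + 1) (k - 1) (by omega) (by simp) (by simp) (by simp)
      refine ⟨_, ?_, LNonVan.congr (hp.addLeaf (n + m) n (n + m + k + 1) ?_ ?_ (by omega)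
        (Or.inr (Or.inr ⟨rfl, rfl⟩)) ?_ ?_) (fun _ _ => Iff.rfl) (fun _ => Iff.rfl) ?_⟩
      · simp only [TailW, PathW, or_false]; omega
      · simp only [TailW, PathW, or_false]; omega
      · simp only [TailW, PathW, or_false]; omega
      · simp only [TailE, PathE]; omega
      · simp only [delV, TailE, PathE, or_false]; omega
      · split_ifs <;> omega
    have hp' := (hp.ear n (n + 1) (m - 1) (by omega) (by omega)
      (fun h => by have := hW _ h; omega)
      (fun u v h => by simp only [TailE, PathE] at h; omega)
      (fun v h => by have := hW _ h; omega)).ear 0 1 (n - 1) (by omega) (by omega) ?_ ?_ ?_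
    · refine ⟨_, ?_, LNonVan.congr hp' (fun u v => ?_) (fun _ => Iff.rfl) ?_⟩
      · rintro v (h | h | h)
        · simp only [EarW, PathW] at h; omega
        · simp only [EarW, PathW] at h; omega
        · have := hW _ h; omega
      · have h1 : CycleE 0 n u v ↔ EarE 0 1 (n - 1) u v := by
          simp only [CycleE, EarE, PathE]; omega
        have h2 : CycleE n m u v ↔ EarE n (n + 1) (m - 1) u v := by
          simp only [CycleE, EarE, PathE]; omega
        simp only [PathJoinE, LolliE, TailE, h1, h2, hk, hk.ne', true_and, false_and, or_false]
        tauto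
      · rw [Nat.sub_add_cancel (by omega), Nat.sub_add_cancel (by omega), pathJoinRank]
        clear * - hn hm h h' hk
        simp only [h, h', and_self, or_self, if_false]
        split_ifs <;> omega
    · rintro (h | h)
      · simp only [EarW, PathW] at h; omega
      · have := hW _ h; omega
    · rintro u v (h | h)
      · simp only [EarE, PathE] at h; omega
      · simp only [TailE, PathE] at h; omega
    · rintro v (h | h)
      · simp only [EarW, PathW] at h; omega
      · have := hW _ h; omega

theorem nonVan_pathJoinE (n m k : ℕ) (hn : 3 ≤ n) (hm : 3 ≤ m) :
    ∃ W : ℕ → Prop, (∀ v, W v → v < n + m + k) ∧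
      LNonVan K (PathJoinE n m k) W (pathJoinRank n m k) := by
  by_cases h' : m % 3 = 1
  · exact nonVan_pathJoinE_of_right K n m k hn hm h'
  · by_cases h : n % 3 = 1
    · exact nonVan_pathJoinE_of_left K n m k hn hm h h'
    · exact nonVan_pathJoinE_of_neither K n m k hn hm h h'

end BicyclicNonVan

section Kills

variable {R : Type} [CommRing R] {I : Ideal R} {T T' A A' B : Ideal R → Prop} {s t : ℕ}

/-- There are `s` elements of `I` such that `A` holds for every prime ideal that contains them and
satisfies `T`. -/
def Kills (I : Ideal R) (T A : Ideal R → Prop) (s : ℕ) : Prop :=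
  ∃ F : List R, F.length = s ∧ (∀ x ∈ F, x ∈ I) ∧
    ∀ P : Ideal R, P.IsPrime → T P → (∀ x ∈ F, x ∈ P) → A P

theorem Kills.mono (h : Kills I T A s) (hT : ∀ P, T' P → T P)
    (hA : ∀ P, P.IsPrime → T' P → A P → A' P) : Kills I T' A' s := by
  obtain ⟨F, hF, hI, hP⟩ := h
  exact ⟨F, hF, hI, fun P hp h1 h2 => hA P hp h1 (hP P hp (hT P h1) h2)⟩

theorem Kills.trans (h : Kills I T A s) (h' : Kills I (fun P => T P ∧ A P) B t) :
    Kills I T (fun P => A P ∧ B P) (s + t) := by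
  obtain ⟨F, hF, hI, hP⟩ := h
  obtain ⟨F', hF', hI', hP'⟩ := h'
  refine ⟨F ++ F', by simp [hF, hF'], fun x hx => ?_, fun P hp h1 h2 => ?_⟩
  · exact (List.mem_append.1 hx).elim (hI x) (hI' x)
  · have hA := hP P hp h1 fun x hx => h2 x (List.mem_append_left _ hx)
    exact ⟨hA, hP' P hp ⟨h1, hA⟩ fun x hx => h2 x (List.mem_append_right _ hx)⟩

theorem Kills.and (h : Kills I T A s) (h' : Kills I T B t) :
    Kills I T (fun P => A P ∧ B P) (s + t) :=
  h.trans (h'.mono (fun _ h => h.1) fun _ _ _ h => h)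

theorem Kills.nil (h : ∀ P, P.IsPrime → T P → A P) : Kills I T A 0 :=
  ⟨[], rfl, by simp, fun P hp hT _ => h P hp hT⟩

theorem Kills.single {x : R} (hx : x ∈ I) : Kills I T (fun P => x ∈ P) 1 :=
  ⟨[x], rfl, by simpa using hx, fun P _ _ h => h x (by simp)⟩

theorem mem_and_mem_of_add_mem {P : Ideal R} (hP : P.IsPrime) {e a b : R} (he : e ∈ P)
    (h : e ∣ a * b) (hab : a + b ∈ P) : a ∈ P ∧ b ∈ P := by
  rcases hP.mem_or_mem (P.mem_of_dvd h he) with ha | hb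
  · exact ⟨ha, (P.add_mem_iff_right ha).1 hab⟩
  · exact ⟨(P.add_mem_iff_left hb).1 hab, hb⟩

theorem Kills.pair {e a b : R} (ha : a ∈ I) (hb : b ∈ I) (h : e ∣ a * b) (hT : ∀ P, T P → e ∈ P) :
    Kills I T (fun P => a ∈ P ∧ b ∈ P) 1 :=
  ⟨[a + b], rfl, by simpa using I.add_mem ha hb, fun P hp h1 h2 =>
    mem_and_mem_of_add_mem hp (hT P h1) h (h2 _ (by simp))⟩

theorem Kills.triples (v : ℕ → R) (b : ℕ) (h : ∀ i < 3 * b, v i * v (i + 1) ∈ I) :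
    Kills I T (fun P => ∀ i < 3 * b, v i * v (i + 1) ∈ P) (2 * b) := by
  induction b with
  | zero => exact Kills.nil (by simp)
  | succ b ih =>
    refine (((ih fun i hi => h i (by omega)).and
      (Kills.single (h (3 * b + 1) (by omega)))).trans (Kills.pair (e := v (3 * b + 1) * v (3 * b + 2))
        (h (3 * b) (by omega)) (h (3 * b + 2) (by omega)) ?_ fun P h => h.2.2)).mono
      (fun _ h => h) fun P _ _ hP i hi => ?_
    · exact ⟨v (3 * b) * v (3 * b + 3), by ring⟩
    · obtain ⟨⟨h1, h2⟩, h3, h4⟩ := hP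
      rcases lt_or_ge i (3 * b) with h | h
      · exact h1 i h
      · obtain rfl | rfl | rfl : i = 3 * b ∨ i = 3 * b + 1 ∨ i = 3 * b + 2 := by omega
        exacts [h3, h2, h4]

theorem Kills.chain (v : ℕ → R) (b : ℕ) (h : ∀ i ≤ 3 * b, v i * v (i + 1) ∈ I) :
    Kills I (fun P => v 0 * v 1 ∈ P ∨ v (3 * b) * v (3 * b + 1) ∈ P)
      (fun P => ∀ i ≤ 3 * b, v i * v (i + 1) ∈ P) (2 * b) := by
  obtain ⟨F, hF, hI, hP⟩ : ∃ F : List R, F.length = 2 * b ∧ (∀ x ∈ F, x ∈ I) ∧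
      ∀ P : Ideal R, (∀ x ∈ F, x ∈ P) → ∀ i < b,
        v (3 * i) * v (3 * i + 1) + v (3 * i + 2) * v (3 * i + 3) ∈ P ∧
        v (3 * i + 1) * v (3 * i + 2) + v (3 * i + 3) * v (3 * i + 4) ∈ P := by
    induction b with
    | zero => exact ⟨[], rfl, by simp, by simp⟩
    | succ b ih =>
      obtain ⟨F, hF, hI, hP⟩ := ih fun i hi => h i (by omega)
      refine ⟨(v (3 * b) * v (3 * b + 1) + v (3 * b + 2) * v (3 * b + 3)) ::
        (v (3 * b + 1) * v (3 * b + 2) + v (3 * b + 3) * v (3 * b + 4)) :: F,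
        by simp [hF]; omega, fun x hx => ?_, fun P hx i hi => ?_⟩
      · rcases List.mem_cons.1 hx with rfl | hx
        · exact I.add_mem (h _ (by omega)) (h _ (by omega))
        rcases List.mem_cons.1 hx with rfl | hx
        · exact I.add_mem (h _ (by omega)) (h _ (by omega))
        · exact hI x hx
      · rcases Nat.lt_succ_iff_lt_or_eq.1 hi with hi | rfl
        · exact hP P (fun x hx' => hx x (by simp [hx'])) i hi
        · exact ⟨hx _ (by simp), hx _ (by simp)⟩
  refine ⟨F, hF, hI, fun P hp hT hx => ?_⟩
  have hP := hP P hx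
  have fwd : ∀ i < b, v (3 * i) * v (3 * i + 1) ∈ P → v (3 * i + 2) * v (3 * i + 3) ∈ P ∧
      v (3 * i + 1) * v (3 * i + 2) ∈ P ∧ v (3 * i + 3) * v (3 * i + 4) ∈ P := fun i hi h0 => by
    have h2 := (P.add_mem_iff_right h0).1 (hP i hi).1
    exact ⟨h2, mem_and_mem_of_add_mem hp h2
      ⟨v (3 * i + 1) * v (3 * i + 4), by ring⟩ (hP i hi).2⟩
  have bwd : ∀ i < b, v (3 * i + 3) * v (3 * i + 4) ∈ P → v (3 * i) * v (3 * i + 1) ∈ P :=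
    fun i hi h3 => by
    have h1 := (P.add_mem_iff_left h3).1 (hP i hi).2
    exact (mem_and_mem_of_add_mem hp h1 ⟨v (3 * i) * v (3 * i + 3), by ring⟩ (hP i hi).1).1
  have h0 : v 0 * v 1 ∈ P := by
    refine hT.elim id fun hb => ?_
    refine Nat.decreasingInduction' (n := b) (m := 0)
      (P := fun i => v (3 * i) * v (3 * i + 1) ∈ P) (fun i hi _ h => bwd i hi h) (Nat.zero_le _) hb
  have all : ∀ i ≤ b, v (3 * i) * v (3 * i + 1) ∈ P := by
    intro i
    induction i with
    | zero => exact fun _ => h0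
    | succ i ih => exact fun hi => (fwd i (by omega) (ih (by omega))).2.2
  intro i hi
  obtain ⟨j, rfl | rfl | rfl⟩ : ∃ j, i = 3 * j ∨ i = 3 * j + 1 ∨ i = 3 * j + 2 :=
    ⟨i / 3, by omega⟩
  · exact all j (by omega)
  · exact (fwd j (by omega) (all j (by omega))).2.1
  · exact (fwd j (by omega) (all j (by omega))).1

theorem Kills.cycle (v : ℕ → R) (n : ℕ) (hn : 3 ≤ n) (hv : v n = v 0)
    (h : ∀ i < n, v i * v (i + 1) ∈ I) :
    Kills I (fun P => v 0 * v 1 ∈ P) (fun P => ∀ i < n, v i * v (i + 1) ∈ P)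
      (2 * (n - 1) / 3) := by
  obtain ⟨a, rfl | rfl | rfl⟩ : ∃ a, n = 3 * a + 3 ∨ n = 3 * a + 1 ∨ n = 3 * a + 2 :=
    ⟨(n - 1) / 3, by omega⟩
  · rw [show 2 * (3 * a + 3 - 1) / 3 = 1 + 2 * a by omega]
    refine ((Kills.pair (e := v 0 * v 1) (a := v 1 * v 2) (b := v (3 * a + 2) * v 0)
      (h 1 (by omega)) (hv ▸ h (3 * a + 2) (by omega)) ⟨v 2 * v (3 * a + 2), by ring⟩
      fun P h => h).and (Kills.triples (fun i => v (i + 2)) a fun i hi => h (i + 2) (by omega))).mono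
      (fun _ h => h) fun P _ h0 hP i hi => ?_
    obtain ⟨⟨h1, h2⟩, h3⟩ := hP
    obtain rfl | rfl | rfl | hi : i = 0 ∨ i = 1 ∨ i = 3 * a + 2 ∨ 2 ≤ i ∧ i - 2 < 3 * a := by omega
    · exact h0
    · exact h1
    · exact hv.symm ▸ h2
    · obtain ⟨j, rfl⟩ := Nat.exists_eq_add_of_le' hi.1
      exact h3 j (by omega)
  · rw [show 2 * (3 * a + 1 - 1) / 3 = 2 * a by omega]
    exact (Kills.chain v a fun i hi => h i (by omega)).mono (fun P h => Or.inl h)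
      fun P _ _ hP i hi => hP i (by omega)
  · rw [show 2 * (3 * a + 2 - 1) / 3 = 2 * a by omega]
    obtain ⟨F, hF, hI, hP⟩ := Kills.chain (fun i => v (i + 1)) a fun i hi => h (i + 1) (by omega)
    refine ⟨F, hF, hI, fun P hp h0 hx i hi => ?_⟩
    have := hP P hp (hp.mem_or_mem (P.mem_of_dvd ⟨v 2 * v (3 * a + 1), ?_⟩ h0)) hx
    · rcases i with _ | i
      · exact h0
      · exact this i (by omega)
    · have hv' : v (3 * a + 1 + 1) = v 0 := hv
      simp only [hv']
      ring

theorem Kills.leader (v : ℕ → R) (n : ℕ) (hn : 3 ≤ n) (h1 : n % 3 = 1) (hv : v n = v 0)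
    (h : ∀ i < n, v i * v (i + 1) ∈ I) {y : R} (hy : y ∈ I) (hvy : v 0 ∣ y) :
    Kills I T (fun P => (∀ i < n, v i * v (i + 1) ∈ P) ∧ y ∈ P) (1 + 2 * (n - 1) / 3) := by
  obtain ⟨a, rfl⟩ : ∃ a, n = 3 * a + 4 := ⟨(n - 4) / 3, by omega⟩
  rw [show 1 + 2 * (3 * a + 4 - 1) / 3 = 1 + 1 + 1 + 2 * a by omega]
  refine ((((Kills.single (h 0 (by omega))).trans (Kills.pair (e := v 0 * v 1) (a := v 1 * v 2)
      (b := v (3 * a + 3) * v 0) (h 1 (by omega)) (hv ▸ h (3 * a + 3) (by omega))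
      ⟨v 2 * v (3 * a + 3), by ring⟩ fun P h => h.2)).trans (Kills.pair (e := v (3 * a + 3) * v 0)
      (a := v (3 * a + 2) * v (3 * a + 3)) (b := y) (h (3 * a + 2) (by omega)) hy ?_
      fun P h => h.2.2.2)).and
      (Kills.triples (fun i => v (i + 2)) a fun i hi => h (i + 2) (by omega))).mono
      (fun _ h => h) fun P _ _ hP => ⟨fun i hi => ?_, hP.1.2.2⟩
  · obtain ⟨c, rfl⟩ := hvy
    exact ⟨v (3 * a + 2) * c, by ring⟩
  · obtain ⟨⟨⟨h0, h1, h2⟩, h3, -⟩, h4⟩ := hP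
    obtain rfl | rfl | rfl | rfl | hi : i = 0 ∨ i = 1 ∨ i = 3 * a + 3 ∨ i = 3 * a + 2 ∨
      2 ≤ i ∧ i - 2 < 3 * a := by omega
    · exact h0
    · exact h1
    · exact hv.symm ▸ h2
    · exact h3
    · obtain ⟨j, rfl⟩ := Nat.exists_eq_add_of_le' hi.1
      exact h4 j (by omega)

theorem Kills.exists_radical_eq (h : Kills I (fun _ => True) (fun P => I ≤ P) s) :
    ∃ f : Fin s → R, (Ideal.span (Set.range f)).radical = I.radical := by
  obtain ⟨F, rfl, hI, hP⟩ := h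
  refine ⟨F.get, le_antisymm (Ideal.radical_mono (Ideal.span_le.2 ?_)) ?_⟩
  · rintro _ ⟨i, rfl⟩
    exact hI _ (F.get_mem i)
  · refine Ideal.radical_le_radical_iff.2 ?_
    rw [Ideal.radical_eq_sInf]
    refine le_sInf fun P hp => hP P hp.2 trivial fun x hx => ?_
    obtain ⟨i, rfl⟩ := List.mem_iff_get.1 hx
    exact hp.1 (Ideal.subset_span ⟨i, rfl⟩)

theorem Kills.vertexJoin (x y : ℕ → R) (n m : ℕ) (hn : 3 ≤ n) (hm : 3 ≤ m) (hx : x n = x 0)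
    (hy : y m = y 0) (hxy : x 0 = y 0) (hxI : ∀ i < n, x i * x (i + 1) ∈ I)
    (hyI : ∀ i < m, y i * y (i + 1) ∈ I) :
    Kills I T (fun P => (∀ i < n, x i * x (i + 1) ∈ P) ∧ ∀ i < m, y i * y (i + 1) ∈ P)
      (vertexJoinRank n m) := by
  have hr := vertexJoinRank_eq hn hm
  have cx := Kills.cycle x n hn hx hxI
  have cy := Kills.cycle y m hm hy hyI
  by_cases h : n % 3 = 1
  · have := (Kills.leader (T := T) x n hn h hx hxI (hyI 0 (by omega)) ⟨y 1, by rw [hxy]⟩).trans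
      (cy.mono (fun P h => h.2.2) fun _ _ _ h => h)
    rw [show vertexJoinRank n m = 1 + 2 * (n - 1) / 3 + 2 * (m - 1) / 3 by
      rw [hr]; split_ifs <;> omega]
    exact this.mono (fun _ h => h) fun _ _ _ h => ⟨h.1.1, h.2⟩
  by_cases h' : m % 3 = 1
  · have := (Kills.leader (T := T) y m hm h' hy hyI (hxI 0 (by omega)) ⟨x 1, by rw [hxy]⟩).trans
      (cx.mono (fun P h => h.2.2) fun _ _ _ h => h)
    rw [show vertexJoinRank n m = 1 + 2 * (m - 1) / 3 + 2 * (n - 1) / 3 by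
      rw [hr]; split_ifs <;> omega]
    exact this.mono (fun _ h => h) fun _ _ _ h => ⟨h.2, h.1.1⟩
  · have := ((Kills.single (T := T) (hxI 0 (by omega))).trans
      (cx.mono (fun P h => h.2) fun _ _ _ h => h)).and ((Kills.single (hyI 0 (by omega))).trans
      (cy.mono (fun P h => h.2) fun _ _ _ h => h))
    rw [show vertexJoinRank n m = 1 + 2 * (n - 1) / 3 + (1 + 2 * (m - 1) / 3) by
      rw [hr]; split_ifs <;> omega]
    exact this.mono (fun _ h => h) fun _ _ _ h => ⟨h.1.2, h.2.2⟩

end Kills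

section KillsPathJoin

variable {R : Type} [CommRing R] {I : Ideal R} {T : Ideal R → Prop}

theorem Kills.pathJoin (x y v : ℕ → R) (n m k : ℕ) (hn : 3 ≤ n) (hm : 3 ≤ m) (hx : x n = x 0)
    (hy : y m = y 0) (h0 : v 0 = y 1) (h1 : v 1 = y 0) (h2 : v (k + 2) = x 0)
    (h3 : v (k + 3) = x 1) (hxI : ∀ i < n, x i * x (i + 1) ∈ I)
    (hyI : ∀ i < m, y i * y (i + 1) ∈ I) (hvI : ∀ i ≤ k, v (i + 1) * v (i + 2) ∈ I) :
    Kills I T (fun P => (∀ i < n, x i * x (i + 1) ∈ P) ∧ (∀ i < m, y i * y (i + 1) ∈ P) ∧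
      ∀ i ≤ k, v (i + 1) * v (i + 2) ∈ P) (pathJoinRank n m k) := by
  have ey : v 0 * v 1 = y 0 * y 1 := by rw [h0, h1, mul_comm]
  have ex : v (k + 2) * v (k + 3) = x 0 * x 1 := by rw [h2, h3]
  have hI : ∀ i ≤ k + 2, v i * v (i + 1) ∈ I := by
    intro i hi
    rcases i with _ | i
    · exact ey ▸ hyI 0 (by omega)
    · rcases Nat.lt_or_ge i (k + 1) with h | h
      · exact hvI i (by omega)
      · obtain rfl : i = k + 1 := by omega
        exact ex ▸ hxI 0 (by omega)
  have cx := Kills.cycle x n hn hx hxI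
  have cy := Kills.cycle y m hm hy hyI
  have lx := fun h => Kills.leader (T := T) x n hn h hx hxI (hI (k + 1) (by omega))
    ⟨v (k + 1), by rw [mul_comm, h2]⟩
  have ly := fun h => Kills.leader (T := T) y m hm h hy hyI (hI 1 (by omega)) ⟨v 2, by rw [h1]⟩
  have tr := fun s b (h : 3 * b + s ≤ k + 3) => Kills.triples (T := T) (fun i => v (i + s)) b
    fun i hi => Nat.add_right_comm i 1 s ▸ hI (i + s) (by omega)
  have trP : ∀ {P : Ideal R} {s b}, (∀ i < 3 * b, v (i + s) * v (i + 1 + s) ∈ P) → ∀ i, s ≤ i →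
      i < 3 * b + s → v i * v (i + 1) ∈ P := by
    intro P s b h i h1 h2
    obtain ⟨j, rfl⟩ := Nat.exists_eq_add_of_le' h1
    exact Nat.add_right_comm j 1 s ▸ h j (by omega)
  have fin : ∀ {P : Ideal R}, (∀ i < n, x i * x (i + 1) ∈ P) → (∀ i < m, y i * y (i + 1) ∈ P) →
      (∀ i, 1 ≤ i → i < k + 2 → v i * v (i + 1) ∈ P) → (∀ i < n, x i * x (i + 1) ∈ P) ∧
      (∀ i < m, y i * y (i + 1) ∈ P) ∧ ∀ i ≤ k, v (i + 1) * v (i + 2) ∈ P :=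
    fun h h' h'' => ⟨h, h', fun i hi => h'' (i + 1) (by omega) (by omega)⟩
  have sx := Kills.single (T := T) (hxI 0 (by omega))
  have sy := Kills.single (T := T) (hyI 0 (by omega))
  have both : ∀ {A : Ideal R → Prop} {s : ℕ}, Kills I T A s →
      (∀ P, A P → v 0 * v 1 ∈ P ∧ v (k + 2) * v (k + 3) ∈ P ∧
        ∀ i, 1 ≤ i → i < k + 2 → v i * v (i + 1) ∈ P) →
      pathJoinRank n m k = s + (2 * (n - 1) / 3 + 2 * (m - 1) / 3) →
      Kills I T (fun P => (∀ i < n, x i * x (i + 1) ∈ P) ∧ (∀ i < m, y i * y (i + 1) ∈ P) ∧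
        ∀ i ≤ k, v (i + 1) * v (i + 2) ∈ P) (pathJoinRank n m k) := by
    intro A s h hA hs
    rw [hs]
    exact (h.trans ((cx.mono (fun P hP => ex ▸ (hA P hP.2).2.1) fun _ _ _ h => h).and
      (cy.mono (fun P hP => ey ▸ (hA P hP.2).1) fun _ _ _ h => h))).mono (fun _ h => h)
      fun P _ _ h => fin h.2.1 h.2.2 (hA P h.1).2.2
  have hr : pathJoinRank n m k = _ := pathJoinRank.eq_1 n m k
  obtain ⟨t, rfl | rfl | rfl⟩ : ∃ t, k = 3 * t ∨ k = 3 * t + 1 ∨ k = 3 * t + 2 :=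
    ⟨k / 3, by omega⟩
  · refine both (tr 0 (t + 1) (by omega)) (fun P hP => ?_) ?_
    · have := trP hP
      exact ⟨this 0 (by omega) (by omega), this _ (by omega) (by omega),
        fun i _ _ => this i (by omega) (by omega)⟩
    · rw [hr, if_pos (by omega)]
      omega
  · by_cases h : n % 3 = 1 ∧ m % 3 = 1
    · have hs : pathJoinRank n m (3 * t + 1) =
          1 + 2 * (n - 1) / 3 + (1 + 2 * (m - 1) / 3) + 2 * t := by
        rw [hr, if_neg (by omega), if_pos (by omega), if_pos h]
        omega
      rw [hs]
      refine (((lx h.1).and (ly h.2)).and (tr 2 t (by omega))).mono (fun _ h => h)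
        fun P _ _ hP => fin hP.1.1.1 hP.1.2.1 fun i h1 h2 => ?_
      obtain rfl | rfl | h : i = 1 ∨ i = 3 * t + 1 + 1 ∨ 2 ≤ i ∧ i < 3 * t + 2 := by omega
      · exact hP.1.2.2
      · exact hP.1.1.2
      · exact trP hP.2 i h.1 h.2
    · refine both (sy.and (tr 1 (t + 1) (by omega))) (fun P hP => ?_) ?_
      · have := trP hP.2
        exact ⟨ey ▸ hP.1, this _ (by omega) (by omega), fun i _ _ => this i (by omega) (by omega)⟩
      · rw [hr, if_neg (by omega), if_pos (by omega), if_neg h]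
        omega
  · by_cases h' : m % 3 = 1
    · have hs : pathJoinRank n m (3 * t + 2) =
          1 + 2 * (m - 1) / 3 + 2 * (t + 1) + 2 * (n - 1) / 3 := by
        rw [hr, if_neg (by omega), if_neg (by omega), if_pos (Or.inr h')]
        omega
      rw [hs]
      refine (((ly h').and (tr 2 (t + 1) (by omega))).trans (cx.mono (fun P hP => ex ▸
        trP hP.2.2 _ (by omega) (by omega)) fun _ _ _ h => h)).mono (fun _ h => h)
        fun P _ _ hP => fin hP.2 hP.1.1.1 fun i h1 h2 => ?_
      obtain rfl | h : i = 1 ∨ 2 ≤ i ∧ i < 3 * (t + 1) + 2 := by omega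
      · exact hP.1.1.2
      · exact trP hP.1.2 i h.1 h.2
    by_cases h : n % 3 = 1
    · have hs : pathJoinRank n m (3 * t + 2) =
          1 + 2 * (n - 1) / 3 + 2 * (t + 1) + 2 * (m - 1) / 3 := by
        rw [hr, if_neg (by omega), if_neg (by omega), if_pos (Or.inl h)]
        omega
      rw [hs]
      refine (((lx h).and (tr 0 (t + 1) (by omega))).trans (cy.mono (fun P hP => ey ▸
        trP hP.2.2 0 (by omega) (by omega)) fun _ _ _ h => h)).mono (fun _ h => h)
        fun P _ _ hP => fin hP.1.1.1 hP.2 fun i h1 h2 => ?_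
      obtain rfl | h : i = 3 * t + 2 + 1 ∨ i < 3 * (t + 1) + 0 := by omega
      · exact hP.1.1.2
      · exact trP hP.1.2 i (by omega) h
    · refine both ((sx.and sy).and (tr 1 (t + 1) (by omega))) (fun P hP => ?_) ?_
      · have := trP hP.2
        exact ⟨ey ▸ hP.1.2, ex ▸ hP.1.1, fun i _ _ => this i (by omega) (by omega)⟩
      · rw [hr, if_neg (by omega), if_neg (by omega), if_neg (by omega)]
        omega

end KillsPathJoin

section Bicyclic

variable (K : Type) [Field K]

theorem mul_mem_labelIdeal {N : ℕ} {E : ℕ → ℕ → Prop} {u v : ℕ} (h : E u v ∨ E v u) :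
    (X (u : ZMod N) * X (v : ZMod N) : MvPolynomial (ZMod N) K) ∈ labelIdeal K N E := by
  rcases h with h | h
  · exact Ideal.subset_span ⟨u, v, h, rfl⟩
  · exact Ideal.subset_span ⟨v, u, h, mul_comm _ _⟩

theorem labelIdeal_le {N : ℕ} {E : ℕ → ℕ → Prop} {P : Ideal (MvPolynomial (ZMod N) K)} :
    labelIdeal K N E ≤ P ↔ ∀ u v : ℕ, E u v → X (u : ZMod N) * X (v : ZMod N) ∈ P :=
  Ideal.span_le.trans ⟨fun h u v huv => h ⟨u, v, huv, rfl⟩, by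
    rintro h _ ⟨u, v, huv, rfl⟩; exact h u v huv⟩

theorem vertexJoinIdeal_eq (n m : ℕ) (hn : 3 ≤ n) (hm : 3 ≤ m) :
    vertexJoinIdeal K n m = labelIdeal K (n + m - 1) (VertexJoinE n m) := by
  refine le_antisymm (Ideal.span_le.2 ?_) ((labelIdeal_le K).2 ?_)
  · have mem := fun u v h => mul_mem_labelIdeal K (N := n + m - 1) (E := VertexJoinE n m)
      (u := u) (v := v) h
    have mem0 := fun u => mem u 0
    have mem0' := mem 0
    rw [Nat.cast_zero] at mem0'
    simp only [Nat.cast_zero] at mem0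
    rintro _ ((((⟨j, hj, rfl⟩ | rfl) | rfl) | ⟨j, hj, rfl⟩) | rfl)
    · refine mem _ _ (Or.inl (Or.inl (Or.inl ⟨rfl, ?_⟩)))
      have := Set.mem_Iio.1 hj
      omega
    · exact mem0 _ (Or.inl (Or.inl (Or.inr ⟨by omega, rfl⟩)))
    · exact mem0' _ (Or.inl (Or.inr (Or.inl ⟨rfl, rfl⟩)))
    · refine mem _ _ (Or.inl (Or.inr (Or.inr (Or.inl ⟨rfl, ?_⟩))))
      have := Set.mem_Ico.1 hj
      omega
    · exact mem0 _ (Or.inl (Or.inr (Or.inr (Or.inr ⟨rfl, rfl⟩))))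
  · rintro u v ((⟨rfl, h⟩ | ⟨rfl, rfl⟩) | ⟨rfl, rfl⟩ | ⟨rfl, h⟩ | ⟨rfl, rfl⟩) <;>
      refine Ideal.subset_span ?_
    · exact Or.inl (Or.inl (Or.inl (Or.inl ⟨u, Set.mem_Iio.2 (by omega), rfl⟩)))
    · exact Or.inl (Or.inl (Or.inl (Or.inr (by simp))))
    · exact Or.inl (Or.inl (Or.inr (by simp)))
    · exact Or.inl (Or.inr ⟨u, Set.mem_Ico.2 (by omega), rfl⟩)
    · exact Or.inr (by simp)

theorem pathJoinVertex_zero (n m k : ℕ) : pathJoinVertex n m k 0 = (n : ℕ) := if_pos rfl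

theorem pathJoinVertex_last (n m k : ℕ) : pathJoinVertex n m k (k + 1) = (0 : ℕ) := by
  simp [pathJoinVertex]

theorem pathJoinVertex_succ {n m k j : ℕ} (hj : j < k) :
    pathJoinVertex n m k (j + 1) = (n + m + j : ℕ) := by
  rw [pathJoinVertex, if_neg (by omega), if_neg (by omega)]
  rfl

theorem pathJoinIdeal_eq (n m k : ℕ) (hn : 3 ≤ n) (hm : 3 ≤ m) :
    pathJoinIdeal K n m k = labelIdeal K (n + m + k) (PathJoinE n m k) := by
  refine le_antisymm (Ideal.span_le.2 ?_) ((labelIdeal_le K).2 ?_)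
  · have mem := fun u v h => mul_mem_labelIdeal K (N := n + m + k) (E := PathJoinE n m k)
      (u := u) (v := v) h
    have mem0 := fun u => mem u 0
    simp only [Nat.cast_zero] at mem0
    rintro _ ((((⟨j, hj, rfl⟩ | rfl) | ⟨j, hj, rfl⟩) | rfl) | ⟨j, hj, rfl⟩)
    · refine mem _ _ (Or.inl (Or.inr (Or.inl (Or.inl (Or.inl ⟨rfl, ?_⟩)))))
      have := Set.mem_Iio.1 hj
      omega
    · exact mem0 _ (Or.inl (Or.inr (Or.inl (Or.inl (Or.inr ⟨by omega, rfl⟩)))))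
    · refine mem _ _ (Or.inl (Or.inl (Or.inl ⟨rfl, ?_⟩)))
      have := Set.mem_Ico.1 hj
      omega
    · exact mem _ _ (Or.inl (Or.inl (Or.inr ⟨rfl, rfl⟩)))
    · have hj : j < k + 1 := hj
      show X (pathJoinVertex n m k j) * X (pathJoinVertex n m k (j + 1)) ∈ labelIdeal K _ _
      rcases j with _ | j
      · rw [pathJoinVertex_zero]
        rcases Nat.eq_zero_or_pos k with rfl | hk
        · rw [pathJoinVertex_last]
          exact mem _ _ (Or.inl (Or.inr (Or.inr (Or.inr ⟨rfl, rfl, rfl⟩))))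
        · rw [pathJoinVertex_succ hk]
          exact mem _ _ (Or.inl (Or.inr (Or.inr (Or.inl ⟨hk, rfl, rfl⟩))))
      · rw [pathJoinVertex_succ (by omega)]
        rcases Nat.lt_or_ge (j + 1) k with h | h
        · rw [pathJoinVertex_succ h]
          exact mem _ _ (Or.inl (Or.inr (Or.inl (Or.inr (Or.inl ⟨rfl, by omega, by omega⟩)))))
        · obtain rfl : k = j + 1 := by omega
          rw [pathJoinVertex_last]
          exact mem _ _ (Or.inl (Or.inr (Or.inl (Or.inr (Or.inr ⟨Nat.succ_pos j, rfl, rfl⟩)))))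
  · rintro u v ((⟨rfl, h⟩ | ⟨rfl, rfl⟩) | ((⟨rfl, h⟩ | ⟨rfl, rfl⟩) | ⟨rfl, h⟩ | ⟨hk, rfl, rfl⟩) |
        ⟨hk, rfl, rfl⟩ | ⟨rfl, rfl, rfl⟩) <;>
      refine Ideal.subset_span ?_
    · exact Or.inl (Or.inl (Or.inr ⟨u, Set.mem_Ico.2 (by omega), rfl⟩))
    · exact Or.inl (Or.inr rfl)
    · exact Or.inl (Or.inl (Or.inl (Or.inl ⟨u, Set.mem_Iio.2 (by omega), rfl⟩)))
    · exact Or.inl (Or.inl (Or.inl (Or.inr (by simp))))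
    · obtain ⟨j, rfl⟩ := Nat.exists_eq_add_of_le h.1
      refine Or.inr ⟨j + 1, Set.mem_Iio.2 (by omega), ?_⟩
      beta_reduce
      rw [pathJoinVertex_succ (show j < k by omega), pathJoinVertex_succ (show j + 1 < k by omega)]
      rfl
    · refine Or.inr ⟨k, Set.mem_Iio.2 (by omega), ?_⟩
      obtain ⟨j, rfl⟩ := Nat.exists_eq_add_of_le' hk
      simp only [pathJoinVertex_succ (Nat.lt_succ_self j), pathJoinVertex_last]
      rfl
    · refine Or.inr ⟨0, Set.mem_Iio.2 (by omega), ?_⟩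
      simp only [pathJoinVertex_zero, pathJoinVertex_succ hk]
      rfl
    · refine Or.inr ⟨0, Set.mem_Iio.2 (by omega), ?_⟩
      simp only [pathJoinVertex_zero, pathJoinVertex_last]

theorem exists_radical_eq_vertexJoin (n m : ℕ) (hn : 3 ≤ n) (hm : 3 ≤ m) :
    ∃ f : Fin (vertexJoinRank n m) → MvPolynomial (ZMod (n + m - 1)) K,
      (Ideal.span (Set.range f)).radical =
        (labelIdeal K (n + m - 1) (VertexJoinE n m)).radical := by
  let L : ℕ → MvPolynomial (ZMod (n + m - 1)) K := fun u => X (u : ZMod (n + m - 1))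
  let a : ℕ → ℕ := fun i => if i < n then i else 0
  let b : ℕ → ℕ := fun i => if i = 0 ∨ m ≤ i then 0 else n + i - 1
  have b0 : b 0 = 0 := if_pos (Or.inl rfl)
  have bi : ∀ i, 0 < i → i < m → b i = n + i - 1 := fun i h h' => if_neg (by omega)
  have bm : ∀ i, m ≤ i → b i = 0 := fun i h => if_pos (Or.inr h)
  refine Kills.exists_radical_eq ((Kills.vertexJoin (fun i => L (a i)) (fun i => L (b i)) n m hn hm
    ?_ ?_ ?_ (fun i hi => mul_mem_labelIdeal K ?_) fun i hi => mul_mem_labelIdeal K ?_).mono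
    (fun _ h => h) fun P _ _ h => (labelIdeal_le K).2 fun u v huv => ?_)
  · simp [a]
  · simp [b]
  · simp [a, b]
  · simp only [a, VertexJoinE, CycleE, PathE]
    split_ifs <;> omega
  · rcases Nat.eq_zero_or_pos i with rfl | h0
    · rw [b0, bi _ Nat.one_pos (by omega)]
      exact Or.inl (Or.inr (Or.inl ⟨rfl, by omega⟩))
    · rw [bi i h0 hi]
      rcases Nat.lt_or_ge (i + 1) m with h | h
      · rw [bi _ (by omega) h]
        exact Or.inl (Or.inr (Or.inr (Or.inl ⟨by omega, by omega, by omega⟩)))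
      · rw [bm _ h]
        exact Or.inl (Or.inr (Or.inr (Or.inr ⟨by omega, rfl⟩)))
  · suffices hi : (∃ i < n, a i = u ∧ a (i + 1) = v) ∨ ∃ i < m, b i = u ∧ b (i + 1) = v by
      rcases hi with ⟨i, hi, rfl, rfl⟩ | ⟨i, hi, rfl, rfl⟩
      exacts [h.1 i hi, h.2 i hi]
    rcases huv with (⟨rfl, h⟩ | ⟨rfl, rfl⟩) | ⟨rfl, rfl⟩ | ⟨rfl, h⟩ | ⟨rfl, rfl⟩
    · exact Or.inl ⟨u, by omega, if_pos (by omega), if_pos (by omega)⟩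
    · exact Or.inl ⟨n - 1, by omega, (if_pos (by omega)).trans (by omega), if_neg (by omega)⟩
    · exact Or.inr ⟨0, by omega, b0, (bi _ (by omega) (by omega)).trans (by omega)⟩
    · exact Or.inr ⟨u - n + 1, by omega, (bi _ (by omega) (by omega)).trans (by omega),
          (bi _ (by omega) (by omega)).trans (by omega)⟩
    · exact Or.inr ⟨m - 1, by omega, (bi _ (by omega) (by omega)).trans (by omega),
          bm _ (by omega)⟩

theorem exists_radical_eq_pathJoin (n m k : ℕ) (hn : 3 ≤ n) (hm : 3 ≤ m) :
    ∃ f : Fin (pathJoinRank n m k) → MvPolynomial (ZMod (n + m + k)) K,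
      (Ideal.span (Set.range f)).radical =
        (labelIdeal K (n + m + k) (PathJoinE n m k)).radical := by
  let L : ℕ → MvPolynomial (ZMod (n + m + k)) K := fun u => X (u : ZMod (n + m + k))
  let a : ℕ → ℕ := fun i => if i < n then i else 0
  let b : ℕ → ℕ := fun i => if i < m then n + i else n
  let c : ℕ → ℕ := fun i => if i = 0 then n + 1 else if i = 1 then n else
    if i < k + 2 then n + m + (i - 2) else if i = k + 2 then 0 else 1
  have ai : ∀ i, i < n → a i = i := fun i h => if_pos h
  have an : ∀ i, n ≤ i → a i = 0 := fun i h => if_neg (by omega)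
  have bi : ∀ i, i < m → b i = n + i := fun i h => if_pos h
  have bm : ∀ i, m ≤ i → b i = n := fun i h => if_neg (by omega)
  have c0 : c 0 = n + 1 := rfl
  have c1 : c 1 = n := rfl
  have ci : ∀ i, i < k → c (i + 2) = n + m + i := fun i h => by
    simp only [c]
    rw [if_neg (by omega), if_neg (by omega), if_pos (by omega)]
    omega
  have ck : c (k + 2) = 0 := by simp [c]
  have ck' : c (k + 3) = 1 := by simp [c]
  refine Kills.exists_radical_eq ((Kills.pathJoin (fun i => L (a i)) (fun i => L (b i))
    (fun i => L (c i)) n m k hn hm ?_ ?_ ?_ ?_ ?_ ?_ (fun i hi => mul_mem_labelIdeal K (Or.inl ?_))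
    (fun i hi => mul_mem_labelIdeal K (Or.inl ?_))
    fun i hi => mul_mem_labelIdeal K (Or.inl ?_)).mono
    (fun _ h => h) fun P _ _ h => (labelIdeal_le K).2 fun u v huv => ?_)
  · simp [a]
  · simp [b]
  · exact congrArg L (c0.trans (bi _ (by omega)).symm)
  · exact congrArg L (c1.trans (bi 0 (by omega)).symm)
  · exact congrArg L (ck.trans (ai _ (by omega)).symm)
  · exact congrArg L (ck'.trans (ai _ (by omega)).symm)
  · rw [ai _ hi]
    rcases Nat.lt_or_ge (i + 1) n with h | h
    · rw [ai _ h]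
      exact Or.inr (Or.inl (Or.inl (Or.inl ⟨rfl, by omega, by omega⟩)))
    · rw [an _ h]
      exact Or.inr (Or.inl (Or.inl (Or.inr ⟨by omega, rfl⟩)))
  · rw [bi _ hi]
    rcases Nat.lt_or_ge (i + 1) m with h | h
    · rw [bi _ h]
      exact Or.inl (Or.inl ⟨rfl, by omega, by omega⟩)
    · rw [bm _ h]
      exact Or.inl (Or.inr ⟨by omega, rfl⟩)
  · rcases i with _ | i
    · rw [c1]
      rcases Nat.eq_zero_or_pos k with rfl | hk
      · rw [ck]
        exact Or.inr (Or.inr (Or.inr ⟨rfl, rfl, rfl⟩))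
      · rw [ci 0 hk]
        exact Or.inr (Or.inr (Or.inl ⟨hk, rfl, rfl⟩))
    · rw [ci i (by omega)]
      rcases Nat.lt_or_ge (i + 1) k with h | h
      · rw [ci _ h]
        exact Or.inr (Or.inl (Or.inr (Or.inl ⟨rfl, by omega, by omega⟩)))
      · obtain rfl : k = i + 1 := by omega
        rw [ck]
        exact Or.inr (Or.inl (Or.inr (Or.inr ⟨Nat.succ_pos i, rfl, rfl⟩)))
  · suffices hi : (∃ i < n, a i = u ∧ a (i + 1) = v) ∨ (∃ i < m, b i = u ∧ b (i + 1) = v) ∨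
        ∃ i ≤ k, c (i + 1) = u ∧ c (i + 2) = v by
      rcases hi with ⟨i, hi, rfl, rfl⟩ | ⟨i, hi, rfl, rfl⟩ | ⟨i, hi, rfl, rfl⟩
      exacts [h.1 i hi, h.2.1 i hi, h.2.2 i hi]
    rcases huv with (⟨rfl, h⟩ | ⟨rfl, rfl⟩) |
        ((⟨rfl, h⟩ | ⟨rfl, rfl⟩) | ⟨rfl, h⟩ | ⟨hk, rfl, rfl⟩) | ⟨hk, rfl, rfl⟩ | ⟨rfl, rfl, rfl⟩
    · exact Or.inr (Or.inl ⟨u - n, by omega, (bi _ (by omega)).trans (by omega),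
          (bi _ (by omega)).trans (by omega)⟩)
    · exact Or.inr (Or.inl ⟨m - 1, by omega, (bi _ (by omega)).trans (by omega),
          bm _ (by omega)⟩)
    · exact Or.inl ⟨u, by omega, ai _ (by omega), ai _ (by omega)⟩
    · exact Or.inl ⟨n - 1, by omega, (ai _ (by omega)).trans (by omega), an _ (by omega)⟩
    · exact Or.inr (Or.inr ⟨u - (n + m) + 1, by omega, (ci _ (by omega)).trans (by omega),
          (ci _ (by omega)).trans (by omega)⟩)
    · obtain ⟨j, rfl⟩ := Nat.exists_eq_add_of_le' hk
      exact Or.inr (Or.inr ⟨j + 1, le_rfl, ci j (Nat.lt_succ_self j), ck⟩)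
    · exact Or.inr (Or.inr ⟨0, by omega, c1, ci 0 hk⟩)
    · exact Or.inr (Or.inr ⟨0, le_rfl, c1, ck⟩)

theorem two_le_vertexJoinRank {n m : ℕ} (hn : 3 ≤ n) : 2 ≤ vertexJoinRank n m :=
  le_max_of_le_left (by omega)

theorem two_le_pathJoinRank {n m k : ℕ} (hn : 3 ≤ n) (hm : 3 ≤ m) : 2 ≤ pathJoinRank n m k := by
  unfold pathJoinRank
  omega

theorem vertexJoin_rank (n m : ℕ) (hn : 3 ≤ n) (hm : 3 ≤ m) :
    projDim (MvPolynomial (ZMod (n + m - 1)) K)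
        (MvPolynomial (ZMod (n + m - 1)) K ⧸ vertexJoinIdeal K n m) = vertexJoinRank n m ∧
      araRank (vertexJoinIdeal K n m) = vertexJoinRank n m := by
  have : NeZero (n + m - 1) := ⟨by omega⟩
  have hE : ∀ u v, VertexJoinE n m u v → u < n + m - 1 ∧ v < n + m - 1 ∧ u ≠ v := by
    intro u v
    simp only [VertexJoinE, CycleE, PathE]
    omega
  have hb := branching_vertexJoinRank n m hn hm
  obtain ⟨W, hW, hnv⟩ := nonVan_vertexJoinE K n m hn hm
  have hara := exists_radical_eq_vertexJoin K n m hn hm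
  rw [vertexJoinIdeal_eq K n m hn hm]
  obtain ⟨q, hq⟩ := Nat.exists_eq_add_of_le' (two_le_vertexJoinRank (m := m) hn)
  rw [hq] at hb hnv hara ⊢
  exact projDim_araRank_labelIdeal hE hb hW hnv hara

theorem pathJoin_rank (n m k : ℕ) (hn : 3 ≤ n) (hm : 3 ≤ m) :
    projDim (MvPolynomial (ZMod (n + m + k)) K)
        (MvPolynomial (ZMod (n + m + k)) K ⧸ pathJoinIdeal K n m k) = pathJoinRank n m k ∧
      araRank (pathJoinIdeal K n m k) = pathJoinRank n m k := by
  have : NeZero (n + m + k) := ⟨by omega⟩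
  have hE : ∀ u v, PathJoinE n m k u v → u < n + m + k ∧ v < n + m + k ∧ u ≠ v := by
    intro u v
    simp only [PathJoinE, LolliE, CycleE, PathE]
    omega
  have hb := branching_pathJoinRank n m k hn hm
  obtain ⟨W, hW, hnv⟩ := nonVan_pathJoinE K n m k hn hm
  have hara := exists_radical_eq_pathJoin K n m k hn hm
  rw [pathJoinIdeal_eq K n m k hn hm]
  obtain ⟨q, hq⟩ := Nat.exists_eq_add_of_le' (two_le_pathJoinRank (k := k) hn hm)
  rw [hq] at hb hnv hara ⊢
  exact projDim_araRank_labelIdeal hE hb hW hnv hara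

end Bicyclic

/-- For any bicyclic graph `G` — two cycles `Cₙ`, `C_m` (`n, m ≥ 3`) either sharing
exactly one vertex, or connected by a path (with `k ≥ 0` internal vertices) — the
arithmetical rank of the edge ideal `I(G)` equals the projective dimension of
`R/I(G)`; in particular the projective dimension does not depend on the field. -/
theorem bicyclic_ara_eq_pd (K K' : Type) [Field K] [Field K'] (n m k : ℕ)
    (hn : 3 ≤ n) (hm : 3 ≤ m) :
    (((araRank (vertexJoinIdeal K n m) : ℕ) : ℕ∞) =
        projDim (MvPolynomial (ZMod (n + m - 1)) K)
          (MvPolynomial (ZMod (n + m - 1)) K ⧸ vertexJoinIdeal K n m)) ∧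
      (projDim (MvPolynomial (ZMod (n + m - 1)) K)
          (MvPolynomial (ZMod (n + m - 1)) K ⧸ vertexJoinIdeal K n m) =
        projDim (MvPolynomial (ZMod (n + m - 1)) K')
          (MvPolynomial (ZMod (n + m - 1)) K' ⧸ vertexJoinIdeal K' n m)) ∧
      (((araRank (pathJoinIdeal K n m k) : ℕ) : ℕ∞) =
        projDim (MvPolynomial (ZMod (n + m + k)) K)
          (MvPolynomial (ZMod (n + m + k)) K ⧸ pathJoinIdeal K n m k)) ∧
      (projDim (MvPolynomial (ZMod (n + m + k)) K)
          (MvPolynomial (ZMod (n + m + k)) K ⧸ pathJoinIdeal K n m k) =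
        projDim (MvPolynomial (ZMod (n + m + k)) K')
          (MvPolynomial (ZMod (n + m + k)) K' ⧸ pathJoinIdeal K' n m k)) := by
  obtain ⟨hv, av⟩ := vertexJoin_rank K n m hn hm
  obtain ⟨hp, ap⟩ := pathJoin_rank K n m k hn hm
  rw [av, ap, hv, hp, (vertexJoin_rank K' n m hn hm).1, (pathJoin_rank K' n m k hn hm).1]
  exact ⟨rfl, rfl, rfl, rfl⟩
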